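/- Under the null hypothesis (i.e. when the sample is i.i.d. uniform on [0,1]), for any fixed x > 0, the probability P(M_n < x / (2 log n · log log n)) converges to 1 - e^{-2x} as n → ∞. -/

import Mathlib

open MeasureTheory Filter Set

noncomputable section

/-- Density of the Beta(a,b) distribution on [0,1]. -/
def betaPDF (a b x : ℝ) : ℝ :=
  x ^ (a - 1) * (1 - x) ^ (b - 1) / (Real.Gamma a * Real.Gamma b / Real.Gamma (a + b))

/-- Regularized incomplete beta function `I_x(a,b) = P(Beta(a,b) < x)`. -/
def regIncBeta (a b x : ℝ) : ℝ := ∫ t in Set.Ioc (0:ℝ) x, betaPDF a b t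

/-- The `i`-th order statistic (0-based) of the sample `u`. -/
def orderStat {n : ℕ} (u : Fin n → ℝ) (i : Fin n) : ℝ := u (Tuple.sort u i)

/-- `p_{(i)} = P(Beta(i, n-i+1) < u_{(i)})` (with 1-based index `i = (i : Fin n) + 1`). -/
def pOrd {n : ℕ} (u : Fin n → ℝ) (i : Fin n) : ℝ :=
  regIncBeta ((i : ℕ) + 1 : ℝ) ((n : ℝ) - (i : ℕ)) (orderStat u i)

/-- One-sided exact Berk-Jones statistic `M_n^+`. -/
def MnPlus {n : ℕ} (u : Fin n → ℝ) : ℝ := ⨅ i, pOrd u i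

/-- One-sided exact Berk-Jones statistic `M_n^-`. -/
def MnMinus {n : ℕ} (u : Fin n → ℝ) : ℝ := ⨅ i, (1 - pOrd u i)

/-- Two-sided exact Berk-Jones statistic `M_n`. -/
def Mn {n : ℕ} (u : Fin n → ℝ) : ℝ := min (MnPlus u) (MnMinus u)

/-- Joint law of `n` i.i.d. `U[0,1]` random variables (the null hypothesis). -/
def nullMeasure (n : ℕ) : Measure (Fin n → ℝ) :=
  Measure.pi fun _ => MeasureTheory.volume.restrict (Set.Icc (0:ℝ) 1)

end


/-- Binomial probability mass function. -/
noncomputable def bpm (n : ℕ) (p : ℝ) (k : ℕ) : ℝ := n.choose k * p ^ k * (1 - p) ^ (n - k)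

/-- Upper tail of the binomial law. -/
noncomputable def upT (n : ℕ) (p : ℝ) (k : ℕ) : ℝ := ∑ l ∈ Finset.Icc k n, bpm n p l

/-- Lower tail of the binomial law. -/
noncomputable def loT (n : ℕ) (p : ℝ) (k : ℕ) : ℝ := ∑ l ∈ Finset.range (k + 1), bpm n p l

lemma bpm_nonneg {n : ℕ} {p : ℝ} (h0 : 0 ≤ p) (h1 : p ≤ 1) (k : ℕ) : 0 ≤ bpm n p k := by
  have : 0 ≤ 1 - p := by linarith
  unfold bpm; positivity

lemma bpm_pos {n : ℕ} {p : ℝ} (h0 : 0 < p) (h1 : p < 1) {k : ℕ} (hk : k ≤ n) : 0 < bpm n p k := by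
  have h : 0 < 1 - p := by linarith
  have := Nat.choose_pos hk
  unfold bpm; positivity

lemma bpm_eq_zero {n : ℕ} {p : ℝ} {k : ℕ} (hk : n < k) : bpm n p k = 0 := by
  simp [bpm, Nat.choose_eq_zero_of_lt hk]

lemma bpm_sum (n : ℕ) (p : ℝ) : ∑ l ∈ Finset.range (n + 1), bpm n p l = 1 := by
  have := add_pow p (1 - p) n
  simp only [add_sub_cancel, one_pow] at this
  rw [this]
  refine Finset.sum_congr rfl fun l _ => ?_
  unfold bpm; ring

lemma upT_add_loT {n : ℕ} (p : ℝ) {k : ℕ} (hk : k ≤ n) : upT n p (k + 1) + loT n p k = 1 := by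
  rw [← bpm_sum n p, upT, loT, add_comm]
  rw [← Finset.sum_range_add_sum_Ico _ (show k + 1 ≤ n + 1 by omega)]
  rfl

lemma upT_zero (n : ℕ) (p : ℝ) : upT n p 0 = 1 := by
  rw [← bpm_sum n p, upT]
  refine Finset.sum_congr ?_ fun _ _ => rfl
  ext l; simp

lemma upT_gt {n : ℕ} (p : ℝ) {k : ℕ} (hk : n < k) : upT n p k = 0 := by
  rw [upT, Finset.Icc_eq_empty (by omega), Finset.sum_empty]

lemma bpm_refl {n : ℕ} (p : ℝ) {k : ℕ} (hk : k ≤ n) : bpm n (1 - p) (n - k) = bpm n p k := by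
  unfold bpm
  rw [Nat.choose_symm hk, Nat.sub_sub_self hk]
  ring

lemma upT_refl {n : ℕ} (p : ℝ) {k : ℕ} (hk : k ≤ n) : upT n (1 - p) (n - k) = loT n p k := by
  unfold upT loT
  refine Finset.sum_bij' (fun l _ => n - l) (fun l _ => n - l) ?_ ?_ ?_ ?_ ?_
  · intro l hl; simp at hl ⊢; omega
  · intro l hl; simp at hl ⊢; omega
  · intro l hl; simp at hl ⊢; omega
  · intro l hl; simp at hl ⊢; omega
  · intro l hl
    simp at hl
    rw [← bpm_refl p (show n - l ≤ n by omega), Nat.sub_sub_self (by omega)]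

lemma upT_succ {n : ℕ} (p : ℝ) {k : ℕ} (hk : k ≤ n) : upT n p k = bpm n p k + upT n p (k + 1) := by
  unfold upT
  rw [← Finset.add_sum_Ioc_eq_sum_Icc hk]
  congr 2
  ext; simp

lemma upT_anti {n : ℕ} {p : ℝ} (h0 : 0 ≤ p) (h1 : p ≤ 1) {k l : ℕ} (h : k ≤ l) :
    upT n p l ≤ upT n p k := by
  unfold upT
  exact Finset.sum_le_sum_of_subset_of_nonneg (Finset.Icc_subset_Icc h le_rfl)
    fun i _ _ => bpm_nonneg h0 h1 i

lemma upT_nonneg {n : ℕ} {p : ℝ} (h0 : 0 ≤ p) (h1 : p ≤ 1) (k : ℕ) : 0 ≤ upT n p k :=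
  Finset.sum_nonneg fun i _ => bpm_nonneg h0 h1 i

lemma loT_nonneg {n : ℕ} {p : ℝ} (h0 : 0 ≤ p) (h1 : p ≤ 1) (k : ℕ) : 0 ≤ loT n p k :=
  Finset.sum_nonneg fun i _ => bpm_nonneg h0 h1 i

lemma loT_mono {n : ℕ} {p : ℝ} (h0 : 0 ≤ p) (h1 : p ≤ 1) {k l : ℕ} (h : k ≤ l) :
    loT n p k ≤ loT n p l := by
  unfold loT
  exact Finset.sum_le_sum_of_subset_of_nonneg (Finset.range_mono (by omega))
    fun i _ _ => bpm_nonneg h0 h1 i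

lemma bpm_continuous (n k : ℕ) : Continuous fun p => bpm n p k := by
  unfold bpm; fun_prop

lemma bpm_deriv (n l : ℕ) (p : ℝ) :
    HasDerivAt (fun p => bpm (n + 1) p (l + 1)) ((n + 1) * (bpm n p l - bpm n p (l + 1))) p := by
  have h := (bernsteinPolynomial ℝ (n + 1) (l + 1)).hasDerivAt p
  rw [bernsteinPolynomial.derivative_succ] at h
  have e : ∀ (m i : ℕ) (q : ℝ), (bernsteinPolynomial ℝ m i).eval q = bpm m q i := by
    intro m i q; simp [bernsteinPolynomial, bpm]
  simp only [Polynomial.eval_mul, Polynomial.eval_sub, e, Polynomial.eval_natCast] at h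
  simpa using h

lemma upT_deriv (n k : ℕ) (hk : k ≤ n) (p : ℝ) :
    HasDerivAt (fun p => upT (n + 1) p (k + 1)) ((n + 1) * bpm n p k) p := by
  induction hk using Nat.decreasingInduction with
  | self =>
    have h := bpm_deriv n n p
    rw [bpm_eq_zero (show n < n + 1 by omega), sub_zero] at h
    convert h using 2
    simp [upT]
  | of_succ k hk ih =>
    have h := (bpm_deriv n k p).add ih
    refine (h.congr_deriv (by ring)).congr_of_eventuallyEq ?_
    refine Eventually.of_forall fun q => ?_
    simp only [Pi.add_apply]
    exact upT_succ q (by omega)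

lemma upT_integral (n k : ℕ) (hk : k ≤ n) (x : ℝ) :
    ∫ p in (0:ℝ)..x, (n + 1) * bpm n p k = upT (n + 1) x (k + 1) := by
  rw [intervalIntegral.integral_eq_sub_of_hasDerivAt (fun p _ => upT_deriv n k hk p)]
  · have : upT (n + 1) 0 (k + 1) = 0 := by
      refine Finset.sum_eq_zero fun l hl => ?_
      simp at hl
      simp [bpm, show l ≠ 0 by omega]
    rw [this, sub_zero]
  · exact ((bpm_continuous n k).const_mul _).intervalIntegrable _ _

lemma upT_one (n k : ℕ) (hk : k ≤ n) : upT n 1 k = 1 := by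
  rw [upT, Finset.sum_eq_single n]
  · simp [bpm]
  · intro b hb hbn
    simp at hb
    simp [bpm, show n - b ≠ 0 by omega]
  · simp; omega

lemma bpm_integral (n k : ℕ) (hk : k ≤ n) : ∫ p in (0:ℝ)..1, bpm n p k = 1 / (n + 1) := by
  have h := upT_integral n k hk 1
  rw [intervalIntegral.integral_const_mul, upT_one _ _ (by omega)] at h
  rw [eq_div_iff (by positivity), mul_comm]; exact h

lemma upT_mono_p {n : ℕ} {k : ℕ} {p q : ℝ} (h0 : 0 ≤ p) (hpq : p ≤ q) (h1 : q ≤ 1) :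
    upT n p k ≤ upT n q k := by
  rcases k with _ | k
  · simp [upT_zero]
  rcases n with _ | n
  · simp [upT_gt]
  rcases Nat.lt_or_ge n k with h | h
  · rw [upT_gt _ (by omega), upT_gt _ (by omega)]
  rw [← upT_integral n k h, ← upT_integral n k h]
  refine intervalIntegral.integral_mono_interval le_rfl h0 hpq ?_ ?_
  · filter_upwards [ae_restrict_mem measurableSet_Ioc] with r hr
    have := bpm_nonneg (n := n) hr.1.le (hr.2.trans h1) k
    simp only [Pi.zero_apply]; positivity
  · exact ((bpm_continuous n k).const_mul _).intervalIntegrable _ _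

lemma loT_eq {n : ℕ} (p : ℝ) {k : ℕ} (hk : k ≤ n) : loT n p k = 1 - upT n p (k + 1) := by
  linarith [upT_add_loT p hk]

lemma loT_anti_p {n : ℕ} {k : ℕ} (hk : k ≤ n) {p q : ℝ} (h0 : 0 ≤ p) (hpq : p ≤ q) (h1 : q ≤ 1) :
    loT n q k ≤ loT n p k := by
  rw [loT_eq _ hk, loT_eq _ hk]
  linarith [upT_mono_p (n := n) (k := k + 1) h0 hpq h1]

lemma upT_continuous (n k : ℕ) : Continuous fun p => upT n p k := by
  unfold upT
  exact continuous_finsetSum _ fun l _ => bpm_continuous n l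

lemma bpm_mul_p (n k : ℕ) (hk : k ≤ n) (p : ℝ) :
    p * bpm n p k = (k + 1) / (n + 1) * bpm (n + 1) p (k + 1) := by
  unfold bpm
  have h : ((n + 1).choose (k + 1) : ℝ) * (k + 1) = (n + 1) * n.choose k := by
    exact_mod_cast (Nat.add_one_mul_choose_eq n k).symm
  rw [show n + 1 - (k + 1) = n - k by omega]
  field_simp
  linear_combination (-(p ^ (k+1) * (1 - p) ^ (n - k))) * h

lemma bpm_integral_p (n k : ℕ) (hk : k ≤ n) :
    ∫ p in (0:ℝ)..1, p * bpm n p k = (k + 1) / ((n + 1) * (n + 2)) := by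
  simp_rw [bpm_mul_p n k hk]
  rw [intervalIntegral.integral_const_mul, bpm_integral _ _ (by omega)]
  push_cast
  field_simp; ring

lemma bpm_integral_p2 (n k : ℕ) (hk : k ≤ n) :
    ∫ p in (0:ℝ)..1, p ^ 2 * bpm n p k = (k + 1) * (k + 2) / ((n + 1) * (n + 2) * (n + 3)) := by
  have : ∀ p : ℝ, p ^ 2 * bpm n p k = (k + 1) / (n + 1) * (p * bpm (n + 1) p (k + 1)) := by
    intro p
    rw [pow_two, mul_assoc, bpm_mul_p n k hk]; ring
  simp_rw [this]
  rw [intervalIntegral.integral_const_mul, bpm_integral_p _ _ (by omega)]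
  push_cast
  field_simp; ring


/-- Standard deviation of the binomial law. -/
noncomputable def sg (n : ℕ) (t : ℝ) : ℝ := √(n * t * (1 - t))

/-- Likelihood ratio of the binomial law with shifted parameter. -/
noncomputable def LR (n : ℕ) (t z : ℝ) (k : ℕ) : ℝ :=
  (1 + z * (1 - t) / sg n t) ^ k * (1 - z * t / sg n t) ^ (n - k)

/-- Normalized count. -/
noncomputable def yy (n : ℕ) (t : ℝ) (k : ℕ) : ℝ := (k - n * t) / sg n t

lemma sg_sq {n : ℕ} {t : ℝ} (h0 : 0 < t) (h1 : t < 1) : sg n t ^ 2 = n * t * (1 - t) := by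
  have : 0 < 1 - t := by linarith
  unfold sg; rw [Real.sq_sqrt]; positivity

lemma sg_refl (n : ℕ) (t : ℝ) : sg n (1 - t) = sg n t := by
  unfold sg; congr 1; ring

lemma n_pos_of_sg {n : ℕ} {t : ℝ} (h : 0 < sg n t) : 0 < n := by
  rcases Nat.eq_zero_or_pos n with rfl | h'
  · simp [sg] at h
  · exact h'

lemma yy_refl {n : ℕ} (t : ℝ) {k : ℕ} (hk : k ≤ n) : yy n (1 - t) (n - k) = - yy n t k := by
  unfold yy; rw [sg_refl, Nat.cast_sub hk]; ring

lemma LR_refl {n : ℕ} (t z : ℝ) {k : ℕ} (hk : k ≤ n) : LR n (1 - t) z (n - k) = LR n t (-z) k := by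
  unfold LR; rw [sg_refl, Nat.sub_sub_self hk]; ring_nf

lemma k_eq_yy {n : ℕ} {t : ℝ} (h : 0 < sg n t) (k : ℕ) : (k : ℝ) = n * t + yy n t k * sg n t := by
  unfold yy; field_simp; ring

lemma bpm_mul_LR {n : ℕ} {t : ℝ} (h0 : 0 < t) (h1 : t < 1) (h : 0 < sg n t) (z : ℝ) (k : ℕ) :
    bpm n t k * LR n t z k = bpm n (t + z * sg n t / n) k := by
  have hn := n_pos_of_sg h
  have hs := sg_sq (n := n) h0 h1
  have e1 : t + z * sg n t / n = t * (1 + z * (1 - t) / sg n t) := by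
    field_simp; linear_combination z * hs
  have e2 : 1 - (t + z * sg n t / n) = (1 - t) * (1 - z * t / sg n t) := by
    field_simp; linear_combination (-z) * hs
  unfold bpm LR
  rw [e2, e1, mul_pow, mul_pow]; ring

lemma LR_sum {n : ℕ} {t : ℝ} (h0 : 0 < t) (h1 : t < 1) (h : 0 < sg n t) (z : ℝ) :
    ∑ k ∈ Finset.range (n + 1), bpm n t k * LR n t z k = 1 := by
  simp_rw [bpm_mul_LR h0 h1 h]
  exact bpm_sum _ _

lemma LR_mono {n : ℕ} {t z : ℝ} (h0 : 0 < t) (h1 : t < 1) (h : 0 < sg n t) (hz : 0 ≤ z)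
    (hzs : z ≤ sg n t) {k l : ℕ} (hkl : k ≤ l) (hl : l ≤ n) : LR n t z k ≤ LR n t z l := by
  have h2 : 0 < 1 - t := by linarith
  have a1 : 1 ≤ 1 + z * (1 - t) / sg n t := by
    have : 0 ≤ z * (1 - t) / sg n t := by positivity
    linarith
  have a2 : 0 ≤ z * t / sg n t := by positivity
  have a3 : z * t / sg n t ≤ 1 := by
    rw [div_le_one h]; nlinarith
  unfold LR
  refine mul_le_mul (pow_le_pow_right₀ a1 hkl)
    (pow_le_pow_of_le_one (by linarith) (by linarith) (by omega)) (pow_nonneg (by linarith) _)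
    (pow_nonneg (by linarith) _)

lemma LR_nonneg {n : ℕ} {t z : ℝ} (h0 : 0 < t) (h1 : t < 1) (h : 0 < sg n t)
    (hzs : |z| ≤ sg n t) (k : ℕ) : 0 ≤ LR n t z k := by
  have h2 : 0 < 1 - t := by linarith
  obtain ⟨b1, b2⟩ := abs_le.1 hzs
  have a3 : z * t / sg n t ≤ 1 := by
    rw [div_le_one h]; nlinarith
  have a4 : -1 ≤ z * (1 - t) / sg n t := by
    rw [le_div_iff₀ h]; nlinarith
  unfold LR
  exact mul_nonneg (pow_nonneg (by linarith) _) (pow_nonneg (by linarith) _)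

lemma chernoff {n : ℕ} {t z : ℝ} (h0 : 0 < t) (h1 : t < 1) (h : 0 < sg n t) (hz : 0 ≤ z)
    (hzs : z ≤ sg n t) (k : ℕ) : upT n t k * LR n t z k ≤ 1 := by
  have hz' : |z| ≤ sg n t := by rwa [abs_of_nonneg hz]
  rw [← LR_sum h0 h1 h z, upT, Finset.sum_mul]
  calc ∑ l ∈ Finset.Icc k n, bpm n t l * LR n t z k
      ≤ ∑ l ∈ Finset.Icc k n, bpm n t l * LR n t z l := by
        refine Finset.sum_le_sum fun l hl => ?_
        simp at hl
        exact mul_le_mul_of_nonneg_left (LR_mono h0 h1 h hz hzs hl.1 hl.2)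
          (bpm_nonneg h0.le h1.le l)
    _ ≤ _ := by
        refine Finset.sum_le_sum_of_subset_of_nonneg ?_ fun l _ _ =>
          mul_nonneg (bpm_nonneg h0.le h1.le l) (LR_nonneg h0 h1 h hz' l)
        intro l hl; simp at hl ⊢; omega

lemma log_taylor {a : ℝ} (ha : |a| ≤ 1 / 2) : |Real.log (1 - a) + a + a ^ 2 / 2| ≤ 2 * |a| ^ 3 := by
  have h := Real.abs_log_sub_add_sum_range_le (show |a| < 1 by linarith) 2
  have e : ∑ i ∈ Finset.range 2, a ^ (i + 1) / ((i : ℝ) + 1) + Real.log (1 - a)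
      = Real.log (1 - a) + a + a ^ 2 / 2 := by
    simp [Finset.sum_range_succ]; ring
  rw [e] at h
  refine h.trans ?_
  rw [div_le_iff₀ (by linarith)]
  have := pow_nonneg (abs_nonneg a) 3
  norm_num
  nlinarith

lemma cubic_aux {t s y R : ℝ} (h0 : 0 < t) (h1 : t < 1) (h : 0 < s) (hy1 : -R ≤ y) (hy2 : y ≤ R)
    (hRs : 2 * R ≤ s) :
    ((1 - t) ^ 2 + t ^ 2) / s + y * ((1 - t) ^ 3 - t ^ 3) / s ^ 2 ≤ 3 / 2 / s := by
  have h2 : 0 < 1 - t := by linarith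
  have hR0 : 0 ≤ R := by linarith
  have hy : |y| ≤ R := abs_le.2 ⟨hy1, hy2⟩
  have c1 : ((1 - t) ^ 2 + t ^ 2) / s ≤ 1 / s := by
    gcongr; nlinarith [mul_pos h0 h2]
  have c2 : y * ((1 - t) ^ 3 - t ^ 3) ≤ R := by
    have : |y * ((1 - t) ^ 3 - t ^ 3)| ≤ R * 1 := by
      rw [abs_mul]
      refine mul_le_mul hy ?_ (abs_nonneg _) hR0
      have d1 : t ^ 3 ≤ 1 := pow_le_one₀ h0.le h1.le
      have d2 : (1 - t) ^ 3 ≤ 1 := pow_le_one₀ h2.le (by linarith)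
      have d3 : 0 ≤ t ^ 3 := by positivity
      have d4 : 0 ≤ (1 - t) ^ 3 := by positivity
      rw [abs_le]; constructor <;> linarith
    linarith [le_abs_self (y * ((1 - t) ^ 3 - t ^ 3))]
  have c3 : y * ((1 - t) ^ 3 - t ^ 3) / s ^ 2 ≤ (s / 2) / s ^ 2 := by
    gcongr; linarith
  have c4 : (s / 2) / s ^ 2 = 1 / 2 / s := by field_simp
  have c5 : 1 / s + 1 / 2 / s = 3 / 2 / s := by ring
  linarith

lemma LR_log {n : ℕ} {t z R : ℝ} (h0 : 0 < t) (h1 : t < 1) (h : 0 < sg n t) {k : ℕ} (hk : k ≤ n)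
    (hR : 1 ≤ R) (hz : |z| ≤ R) (hy : |yy n t k| ≤ R) (hRs : 2 * R ≤ sg n t) :
    0 < LR n t z k ∧
      |Real.log (LR n t z k) - (z * yy n t k - z ^ 2 / 2)| ≤ 4 * R ^ 3 / sg n t := by
  have h2 : 0 < 1 - t := by linarith
  have hs := sg_sq (n := n) h0 h1
  have hkk := k_eq_yy h k
  set s := sg n t with hsdef
  set y := yy n t k with hydef
  set a := z * (1 - t) / s with ha
  set b := z * t / s with hb
  have hzs : |z| / s ≤ 1 / 2 := by rw [div_le_iff₀ h]; linarith
  have haa : |a| = |z| / s * (1 - t) := by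
    rw [ha, abs_div, abs_mul, abs_of_pos h2, abs_of_pos h]; ring
  have hbb : |b| = |z| / s * t := by
    rw [hb, abs_div, abs_mul, abs_of_pos h0, abs_of_pos h]; ring
  have hz0 : 0 ≤ |z| / s := by positivity
  have ha2 : |a| ≤ 1 / 2 := by rw [haa]; nlinarith
  have hb2 : |b| ≤ 1 / 2 := by rw [hbb]; nlinarith
  have pa : 0 < 1 + a := by linarith [(abs_le.1 ha2).1]
  have pb : 0 < 1 - b := by linarith [(abs_le.1 hb2).2]
  have hLR : LR n t z k = (1 + a) ^ k * (1 - b) ^ (n - k) := rfl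
  have hpos : 0 < LR n t z k := by rw [hLR]; positivity
  refine ⟨hpos, ?_⟩
  have hlog : Real.log (LR n t z k) = k * Real.log (1 + a) + (n - k) * Real.log (1 - b) := by
    rw [hLR, Real.log_mul (by positivity) (by positivity), Real.log_pow, Real.log_pow,
      Nat.cast_sub hk]
  have t1 := log_taylor (a := -a) (by rwa [abs_neg])
  have t2 := log_taylor hb2
  rw [abs_neg, sub_neg_eq_add] at t1
  have hnk : (n : ℝ) - k = n * (1 - t) - y * s := by rw [hkk]; ring
  have hk0 : (0:ℝ) ≤ k := by positivity
  have hnk0 : (0:ℝ) ≤ (n:ℝ) - k := by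
    have : (k:ℝ) ≤ n := by exact_mod_cast hk
    linarith
  have e1 : k * a - (n - k) * b = z * y := by
    rw [hnk, hkk, ha, hb]; field_simp; linear_combination (0:ℝ) * hs
  have e2 : k * a ^ 2 + (n - k) * b ^ 2 = z ^ 2 + z ^ 2 * y * (1 - 2 * t) / s := by
    rw [hnk, hkk, ha, hb]; field_simp; linear_combination (-z ^ 2) * hs
  have e3 : k * |a| ^ 3 + (n - k) * |b| ^ 3 =
      |z| ^ 3 * (((1 - t) ^ 2 + t ^ 2) / s + y * ((1 - t) ^ 3 - t ^ 3) / s ^ 2) := by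
    rw [hnk, hkk, haa, hbb]; field_simp
    linear_combination (-(|z| ^ 3 * (1 - 2 * t + 2 * t ^ 2))) * hs
  have key : Real.log (LR n t z k) - (z * y - z ^ 2 / 2) =
      k * (Real.log (1 + a) + -a + (-a) ^ 2 / 2) + (n - k) * (Real.log (1 - b) + b + b ^ 2 / 2)
        - z ^ 2 * y * (1 - 2 * t) / s / 2 := by
    rw [hlog]; linear_combination e1 - (1/2 : ℝ) * e2
  have b1 : |k * (Real.log (1 + a) + -a + (-a) ^ 2 / 2)| ≤ k * (2 * |a| ^ 3) := by
    rw [abs_mul, abs_of_nonneg hk0]; exact mul_le_mul_of_nonneg_left t1 hk0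
  have b2 : |((n:ℝ) - k) * (Real.log (1 - b) + b + b ^ 2 / 2)| ≤ (n - k) * (2 * |b| ^ 3) := by
    rw [abs_mul, abs_of_nonneg hnk0]; exact mul_le_mul_of_nonneg_left t2 hnk0
  have hz3 : |z| ^ 3 ≤ R ^ 3 := pow_le_pow_left₀ (abs_nonneg _) hz 3
  have b3 : |z ^ 2 * y * (1 - 2 * t) / s / 2| ≤ R ^ 3 / s / 2 := by
    rw [abs_div, abs_div, abs_mul, abs_mul, abs_of_pos h, abs_pow]
    rw [abs_of_pos (show (0:ℝ) < 2 by norm_num)]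
    gcongr
    have : |1 - 2 * t| ≤ 1 := by rw [abs_le]; constructor <;> linarith
    calc |z| ^ 2 * |y| * |1 - 2 * t| ≤ R ^ 2 * R * 1 := by gcongr
      _ = R ^ 3 := by ring
  have b4 := cubic_aux h0 h1 h (abs_le.1 hy).1 (abs_le.1 hy).2 hRs
  have b5 : k * |a| ^ 3 + (n - k) * |b| ^ 3 ≤ R ^ 3 * (3 / 2 / s) := by
    rw [e3]
    have : 0 ≤ 3 / 2 / s := by positivity
    calc _ ≤ |z| ^ 3 * (3 / 2 / s) := by gcongr
      _ ≤ _ := by gcongr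
  rw [key]
  have := abs_sub (k * (Real.log (1 + a) + -a + (-a) ^ 2 / 2) + (n - k) * (Real.log (1 - b) + b + b ^ 2 / 2)) (z ^ 2 * y * (1 - 2 * t) / s / 2)
  have h3 := abs_add_le (k * (Real.log (1 + a) + -a + (-a) ^ 2 / 2)) ((n - k) * (Real.log (1 - b) + b + b ^ 2 / 2))
  have : 4 * R ^ 3 / s = R ^ 3 / s / 2 + 2 * (R ^ 3 * (3 / 2 / s)) + R ^ 3 / s / 2 := by ring
  have : 0 ≤ R ^ 3 / s := by positivity
  linarith

lemma bpm_ratio {n : ℕ} (t : ℝ) (l : ℕ) :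
    ((l : ℝ) + 1) * (1 - t) * bpm n t (l + 1) = (n - l) * t * bpm n t l := by
  rcases Nat.lt_or_ge n (l + 1) with h | h
  · rw [bpm_eq_zero h]
    rcases Nat.lt_or_ge n l with h' | h'
    · rw [bpm_eq_zero h']; ring
    · have : n = l := by omega
      subst this; ring
  · unfold bpm
    have hc : (n.choose (l + 1) : ℝ) * (l + 1) = n.choose l * (n - l) := by
      have := Nat.choose_succ_right_eq n l
      have h2 : (n.choose (l + 1) : ℝ) * ((l + 1 : ℕ) : ℝ) = n.choose l * ((n - l : ℕ) : ℝ) := by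
        exact_mod_cast this
      rw [Nat.cast_sub (by omega)] at h2
      push_cast at h2; exact h2
    have e : n - l = (n - (l + 1)) + 1 := by omega
    rw [e, pow_succ, pow_succ]
    linear_combination ((1 - t) * (t ^ l * t) * (1 - t) ^ (n - (l + 1))) * hc

lemma deMoivre {n : ℕ} (t : ℝ) {k : ℕ} (hk : k ≤ n + 1) :
    ∑ l ∈ Finset.Icc k n, ((l : ℝ) - n * t) * bpm n t l = k * (1 - t) * bpm n t k := by
  induction hk using Nat.decreasingInduction with
  | self =>
    rw [Finset.Icc_eq_empty (by omega), bpm_eq_zero (by omega)]; simp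
  | of_succ k hk ih =>
    rw [← Finset.add_sum_Ioc_eq_sum_Icc (by omega : k ≤ n)]
    have : Finset.Ioc k n = Finset.Icc (k + 1) n := by ext; simp
    rw [this, ih]
    have := bpm_ratio (n := n) t k
    push_cast
    linear_combination this

lemma deMoivre2 {n : ℕ} (t : ℝ) {k : ℕ} (hk : k ≤ n + 1) :
    ∑ l ∈ Finset.Icc k n, ((l : ℝ) - n * t) ^ 2 * bpm n t l
      = (k - n * t) * (k * (1 - t) * bpm n t k) + n * t * (1 - t) * upT n t (k + 1)
        + (1 - t) * ((k + 1) * (1 - t) * bpm n t (k + 1)) := by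
  induction hk using Nat.decreasingInduction with
  | self =>
    rw [Finset.Icc_eq_empty (by omega), bpm_eq_zero (by omega), bpm_eq_zero (by omega),
      upT_gt _ (by omega)]; simp
  | of_succ k hk ih =>
    rw [← Finset.add_sum_Ioc_eq_sum_Icc (by omega : k ≤ n)]
    have : Finset.Ioc k n = Finset.Icc (k + 1) n := by ext; simp
    rw [this, ih]
    have h1 := bpm_ratio (n := n) t k
    have h2 := bpm_ratio (n := n) t (k + 1)
    have h3 : upT n t (k + 1) = bpm n t (k + 1) + upT n t (k + 1 + 1) := by
      rcases Nat.lt_or_ge n (k + 1) with h | h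
      · rw [upT_gt _ h, upT_gt _ (by omega), bpm_eq_zero h]; simp
      · exact upT_succ t h
    rw [h3]
    push_cast at h1 h2 ⊢
    linear_combination (k - n * t) * h1 + (1 - t) * h2

lemma tail_bounds {n : ℕ} {t : ℝ} (h0 : 0 < t) (h1 : t < 1) (h : 0 < sg n t) {k : ℕ} (hk : k ≤ n)
    (hy : 0 < yy n t k) :
    upT n t k * (yy n t k * sg n t) ≤ k * (1 - t) * bpm n t k ∧
    k * (1 - t) * bpm n t k ≤ upT n t k * (yy n t k * sg n t + sg n t / yy n t k + 1) := by
  have h2 : 0 < 1 - t := by linarith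
  have hs := sg_sq (n := n) h0 h1
  have hkk := k_eq_yy h k
  have d1 := deMoivre (n := n) t (show k ≤ n + 1 by omega)
  have d2 := deMoivre2 (n := n) t (show k ≤ n + 1 by omega)
  have hr := bpm_ratio (n := n) t k
  have hb := bpm_pos h0 h1 hk
  have hup : upT n t (k + 1) ≤ upT n t k := upT_anti h0.le h1.le (by omega)
  set s := sg n t
  set y := yy n t k
  set H := k * (1 - t) * bpm n t k with hH
  set F := upT n t k with hF
  have hys : 0 < y * s := by positivity
  have A : F * (y * s) ≤ H := by
    rw [← d1, hF, upT, Finset.sum_mul]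
    refine Finset.sum_le_sum fun l hl => ?_
    simp at hl
    have : (k : ℝ) ≤ l := by exact_mod_cast hl.1
    have := bpm_nonneg (n := n) h0.le h1.le l
    nlinarith
  refine ⟨A, ?_⟩
  set D := y * s + s / y + 1 with hD
  have hDp : 0 < D := by positivity
  have hFsy : F ≤ H / (y * s) := by rw [le_div_iff₀ hys]; exact A
  have B1 : (k + 1) * (1 - t) * bpm n t (k + 1) ≤ H := by
    rw [hr, hH]
    refine mul_le_mul_of_nonneg_right ?_ hb.le
    have : n * t ≤ k := by rw [hkk]; linarith
    nlinarith
  have B0 : 0 ≤ H := by positivity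
  have B : ∑ l ∈ Finset.Icc k n, ((l : ℝ) - n * t) ^ 2 * bpm n t l ≤ H * D := by
    rw [d2, ← hs, show (k : ℝ) - n * t = y * s by rw [hkk]; ring]
    have c1 : s ^ 2 * upT n t (k + 1) ≤ s ^ 2 * (H / (y * s)) := by
      gcongr; exact hup.trans hFsy
    have c2 : s ^ 2 * (H / (y * s)) = H * (s / y) := by field_simp
    have c3 : (1 - t) * ((k + 1) * (1 - t) * bpm n t (k + 1)) ≤ 1 * H := by
      refine mul_le_mul (by linarith) B1 ?_ (by norm_num)
      have := bpm_nonneg (n := n) h0.le h1.le (k + 1)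
      positivity
    rw [hD]; linarith
  have Cc : 0 ≤ ∑ l ∈ Finset.Icc k n, ((l : ℝ) - n * t - D) ^ 2 * bpm n t l :=
    Finset.sum_nonneg fun l _ => mul_nonneg (sq_nonneg _) (bpm_nonneg h0.le h1.le l)
  have E : ∑ l ∈ Finset.Icc k n, ((l : ℝ) - n * t - D) ^ 2 * bpm n t l
      = ∑ l ∈ Finset.Icc k n, ((l : ℝ) - n * t) ^ 2 * bpm n t l
        - 2 * D * ∑ l ∈ Finset.Icc k n, ((l : ℝ) - n * t) * bpm n t l + D ^ 2 * F := by
    rw [hF, upT, Finset.mul_sum, Finset.mul_sum, ← Finset.sum_sub_distrib, ← Finset.sum_add_distrib]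
    refine Finset.sum_congr rfl fun l _ => ?_
    ring
  rw [E, d1] at Cc
  have : 0 ≤ D * (F * D - H) := by nlinarith
  have := nonneg_of_mul_nonneg_right this hDp
  linarith


/-- Length of the mixing interval. -/
noncomputable def Lw (w : ℝ) : ℝ := Real.log (4 * √w) - Real.log (1 / w)

/-- Mixture of likelihood ratios, upper side. -/
noncomputable def Ip (n : ℕ) (w t : ℝ) (k : ℕ) : ℝ :=
  ∫ v in Real.log (1 / w)..Real.log (4 * √w), LR n t (Real.exp v) k

/-- Mixture of likelihood ratios, lower side. -/
noncomputable def Im (n : ℕ) (w t : ℝ) (k : ℕ) : ℝ :=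
  ∫ v in Real.log (1 / w)..Real.log (4 * √w), LR n t (-Real.exp v) k

lemma LR_continuous (n : ℕ) (t : ℝ) (k : ℕ) : Continuous fun z => LR n t z k := by
  unfold LR; fun_prop

lemma LR_exp_continuous (n : ℕ) (t : ℝ) (k : ℕ) : Continuous fun v => LR n t (Real.exp v) k :=
  (LR_continuous n t k).comp Real.continuous_exp

lemma LR_nexp_continuous (n : ℕ) (t : ℝ) (k : ℕ) : Continuous fun v => LR n t (-Real.exp v) k :=
  (LR_continuous n t k).comp (Real.continuous_exp.neg)

lemma Im_eq {n : ℕ} (w t : ℝ) {k : ℕ} (hk : k ≤ n) : Im n w t k = Ip n w (1 - t) (n - k) := by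
  unfold Im Ip
  refine intervalIntegral.integral_congr fun v _ => ?_
  simp only [LR_refl t _ hk]

lemma subst_bpm (n k : ℕ) (t s a b : ℝ) :
    ∫ v in a..b, bpm n (t + Real.exp v * s / n) k * (Real.exp v * s / n)
      = ∫ p in (t + Real.exp a * s / n)..(t + Real.exp b * s / n), bpm n p k := by
  have := intervalIntegral.integral_comp_mul_deriv (a := a) (b := b)
    (f := fun v => t + Real.exp v * s / n) (f' := fun v => Real.exp v * s / n)
    (g := fun p => bpm n p k)
    (fun v _ => by
      have := (((Real.hasDerivAt_exp v).mul_const s).div_const (n : ℝ)).const_add t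
      exact this)
    (by fun_prop) (bpm_continuous n k)
  rw [← this]; rfl

lemma beta_var (n k : ℕ) (hk : k ≤ n) :
    ∫ p in (0:ℝ)..1, (n * p - k) ^ 2 * bpm n p k ≤
      ((k : ℝ) * (n - k) / n + 2) / (n + 1) := by
  have c := bpm_continuous n k
  have e : ∀ p : ℝ, (n * p - k) ^ 2 * bpm n p k =
      n ^ 2 * (p ^ 2 * bpm n p k) - 2 * n * k * (p * bpm n p k) + k ^ 2 * bpm n p k := by
    intro p; ring
  simp_rw [e]
  rw [intervalIntegral.integral_add, intervalIntegral.integral_sub,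
    intervalIntegral.integral_const_mul, intervalIntegral.integral_const_mul,
    intervalIntegral.integral_const_mul, bpm_integral _ _ hk, bpm_integral_p _ _ hk,
    bpm_integral_p2 _ _ hk]
  · rcases Nat.eq_zero_or_pos n with rfl | hn
    · have : k = 0 := by omega
      subst this; norm_num
    have hn' : (0:ℝ) < n := by exact_mod_cast hn
    have hk' : (k:ℝ) ≤ n := by exact_mod_cast hk
    have hk0 : (0:ℝ) ≤ k := by positivity
    have e2 : (n:ℝ) ^ 2 * ((k + 1) * (k + 2) / ((n + 1) * (n + 2) * (n + 3))) -
        2 * n * k * ((k + 1) / ((n + 1) * (n + 2))) + k ^ 2 * (1 / (n + 1)) =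
        ((k + 1) * (n - k + 1) * n ^ 2 / ((n + 2) ^ 2 * (n + 3)) + (n - 2 * k) ^ 2 / (n + 2) ^ 2)
          / (n + 1) := by
      field_simp; ring
    rw [e2]
    refine div_le_div_of_nonneg_right ?_ (by positivity)
    have h1 : ((k:ℝ) + 1) * (n - k + 1) * n ^ 2 / ((n + 2) ^ 2 * (n + 3)) ≤ k * (n - k) / n + 1 := by
      have : ((k:ℝ) + 1) * (n - k + 1) * n ^ 2 / ((n + 2) ^ 2 * (n + 3)) ≤
          (k * (n - k) + (n + 1)) / (n + 3) := by
        rw [div_le_div_iff₀ (by positivity) (by positivity)]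
        have q : 0 ≤ (k:ℝ) * (n - k) + (n + 1) := by
          have : 0 ≤ (n:ℝ) - k := by linarith
          positivity
        have : ((k:ℝ) + 1) * (n - k + 1) = k * (n - k) + (n + 1) := by ring
        rw [this]
        have : (n:ℝ)^2 * (n+3) ≤ (n+2)^2 * (n+3) := by gcongr; linarith
        calc _ = ((k:ℝ) * (n - k) + (n + 1)) * (n ^ 2 * (n + 3)) := by ring
          _ ≤ _ := by gcongr
      refine this.trans ?_
      rw [add_div]
      have q : 0 ≤ (k:ℝ) * (n - k) := mul_nonneg hk0 (by linarith)
      have h2 : (k:ℝ) * (n - k) / (n + 3) ≤ k * (n - k) / n := by gcongr; linarith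
      have h3 : ((n:ℝ) + 1) / (n + 3) ≤ 1 := by rw [div_le_one (by positivity)]; linarith
      linarith
    have h2 : ((n:ℝ) - 2 * k) ^ 2 / (n + 2) ^ 2 ≤ 1 := by
      rw [div_le_one (by positivity)]
      exact sq_le_sq' (by linarith) (by linarith)
    linarith
  all_goals exact Continuous.intervalIntegrable (by fun_prop) _ _

lemma beta_cheb (n k : ℕ) (hk : k ≤ n) {A pa pb : ℝ} (hA : 0 < A) (h0 : 0 ≤ pa) (hab : pa ≤ pb)
    (h1 : pb ≤ 1) (hpa : n * pa = k - A) (hpb : n * pb = k + A) :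
    (1 - ((k : ℝ) * (n - k) / n + 2) / A ^ 2) / (n + 1) ≤ ∫ p in pa..pb, bpm n p k := by
  have c := bpm_continuous n k
  have cf : Continuous fun p : ℝ => (1 - (n * p - k) ^ 2 / A ^ 2) * bpm n p k := by fun_prop
  have ii : ∀ a b : ℝ, IntervalIntegrable (fun p : ℝ => (1 - (n * p - k) ^ 2 / A ^ 2) * bpm n p k)
      volume a b := fun a b => cf.intervalIntegrable a b
  have hv := beta_var n k hk
  have tot : ∫ p in (0:ℝ)..1, (1 - (n * p - k) ^ 2 / A ^ 2) * bpm n p k =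
      1 / (n + 1) - (∫ p in (0:ℝ)..1, (n * p - k) ^ 2 * bpm n p k) / A ^ 2 := by
    rw [← bpm_integral n k hk, ← intervalIntegral.integral_div, ← intervalIntegral.integral_sub]
    · refine intervalIntegral.integral_congr fun p _ => ?_
      ring
    all_goals exact Continuous.intervalIntegrable (by fun_prop) _ _
  have sp : ∫ p in (0:ℝ)..1, (1 - (n * p - k) ^ 2 / A ^ 2) * bpm n p k =
      (∫ p in (0:ℝ)..pa, (1 - (n * p - k) ^ 2 / A ^ 2) * bpm n p k) +
      (∫ p in pa..pb, (1 - (n * p - k) ^ 2 / A ^ 2) * bpm n p k) +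
      (∫ p in pb..1, (1 - (n * p - k) ^ 2 / A ^ 2) * bpm n p k) := by
    rw [intervalIntegral.integral_add_adjacent_intervals (ii _ _) (ii _ _),
      intervalIntegral.integral_add_adjacent_intervals (ii _ _) (ii _ _)]
  have hn0 : (0:ℝ) ≤ n := by positivity
  have o1 : (∫ p in (0:ℝ)..pa, (1 - (n * p - k) ^ 2 / A ^ 2) * bpm n p k) ≤ 0 := by
    have : (∫ p in (0:ℝ)..pa, (1 - (n * p - k) ^ 2 / A ^ 2) * bpm n p k) ≤ ∫ p in (0:ℝ)..pa, (0:ℝ) := by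
      refine intervalIntegral.integral_mono_on h0 (ii _ _) (by simp) fun p hp => ?_
      refine mul_nonpos_of_nonpos_of_nonneg ?_ (bpm_nonneg hp.1 (by linarith [hp.2]) k)
      rw [sub_nonpos, le_div_iff₀ (by positivity), one_mul]
      have : n * p ≤ n * pa := by gcongr; exact hp.2
      nlinarith
    simpa using this
  have o3 : (∫ p in pb..1, (1 - (n * p - k) ^ 2 / A ^ 2) * bpm n p k) ≤ 0 := by
    have : (∫ p in pb..1, (1 - (n * p - k) ^ 2 / A ^ 2) * bpm n p k) ≤ ∫ p in pb..1, (0:ℝ) := by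
      refine intervalIntegral.integral_mono_on h1 (ii _ _) (by simp) fun p hp => ?_
      refine mul_nonpos_of_nonpos_of_nonneg ?_ (bpm_nonneg (by linarith [hp.1]) hp.2 k)
      rw [sub_nonpos, le_div_iff₀ (by positivity), one_mul]
      have : n * pb ≤ n * p := by gcongr; exact hp.1
      nlinarith
    simpa using this
  have o2 : (∫ p in pa..pb, (1 - (n * p - k) ^ 2 / A ^ 2) * bpm n p k) ≤ ∫ p in pa..pb, bpm n p k := by
    refine intervalIntegral.integral_mono_on hab (ii _ _) (c.intervalIntegrable _ _) fun p hp => ?_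
    have := bpm_nonneg (n := n) (h0.trans hp.1) (hp.2.trans h1) k
    have q : 0 ≤ (n * p - k) ^ 2 / A ^ 2 := by positivity
    nlinarith
  have : (1 - ((k : ℝ) * (n - k) / n + 2) / A ^ 2) / (n + 1) =
      1 / (n + 1) - ((k : ℝ) * (n - k) / n + 2) / (n + 1) / A ^ 2 := by
    field_simp
  rw [this]
  have : (∫ p in (0:ℝ)..1, (n * p - k) ^ 2 * bpm n p k) / A ^ 2 ≤
      ((k : ℝ) * (n - k) / n + 2) / (n + 1) / A ^ 2 := by gcongr
  linarith

lemma sg_lt_n {n : ℕ} {t : ℝ} (h0 : 0 < t) (h1 : t < 1) (h : 0 < sg n t) {x : ℝ}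
    (hx : x ≤ sg n t) : t + x * sg n t / n ≤ 1 := by
  have hn : (0:ℝ) < n := by exact_mod_cast n_pos_of_sg h
  have hs := sg_sq (n := n) h0 h1
  have : x * sg n t / n ≤ 1 - t := by
    rw [div_le_iff₀ hn]
    have : x * sg n t ≤ sg n t ^ 2 := by nlinarith
    have h2 : 0 < 1 - t := by linarith
    have h3 : 0 < n * (1 - t) := by positivity
    nlinarith
  linarith

/-- Lower bound for a piece of the mixture integral. -/
lemma mix_lower {n : ℕ} {t a b η : ℝ} (h0 : 0 < t) (h1 : t < 1) (h : 0 < sg n t) {k : ℕ}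
    (hk : k ≤ n) (hη : 0 < η) (hη1 : η < 1) (hy : 0 < yy n t k)
    (ha : a = Real.log ((1 - η) * yy n t k)) (hb : b = Real.log ((1 + η) * yy n t k))
    (hys : (1 + η) * yy n t k ≤ sg n t) :
    n / (n + 1) * (1 - (sg n t ^ 2 + yy n t k * sg n t + 2) / (η * (yy n t k * sg n t)) ^ 2) / (1 + η)
      ≤ (∫ v in a..b, LR n t (Real.exp v) k) * bpm n t k * (yy n t k * sg n t) := by
  have hn : (0:ℝ) < n := by exact_mod_cast n_pos_of_sg h
  have hs := sg_sq (n := n) h0 h1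
  have hkk := k_eq_yy h k
  have hη2 : 0 < 1 - η := by linarith
  have ea : Real.exp a = (1 - η) * yy n t k := by rw [ha, Real.exp_log (by positivity)]
  have eb : Real.exp b = (1 + η) * yy n t k := by rw [hb, Real.exp_log (by positivity)]
  have hab : a ≤ b := by
    rw [← Real.exp_le_exp, ea, eb]; gcongr; linarith
  have hpb := sg_lt_n h0 h1 h hys
  set s := sg n t
  set y := yy n t k
  have ch := beta_cheb n k hk (A := η * (y * s)) (pa := t + Real.exp a * s / n)
    (pb := t + Real.exp b * s / n) (by positivity) (by positivity)
    (by gcongr) (by rw [eb]; exact hpb) (by rw [ea, hkk]; field_simp; ring)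
    (by rw [eb, hkk]; field_simp; ring)
  rw [← subst_bpm] at ch
  have e1 : (∫ v in a..b, LR n t (Real.exp v) k) * bpm n t k
      = ∫ v in a..b, bpm n (t + Real.exp v * s / n) k := by
    rw [← intervalIntegral.integral_mul_const]
    refine intervalIntegral.integral_congr fun v _ => ?_
    rw [mul_comm, bpm_mul_LR h0 h1 h]
  have cb := bpm_continuous n k
  have hmono : ∫ v in a..b, bpm n (t + Real.exp v * s / n) k * (Real.exp v * s / n) ≤
      ∫ v in a..b, bpm n (t + Real.exp v * s / n) k * ((1 + η) * y * s / n) := by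
    refine intervalIntegral.integral_mono_on hab
      (Continuous.intervalIntegrable (by fun_prop) _ _)
      (Continuous.intervalIntegrable (by fun_prop) _ _) fun v hv => ?_
    have hvb : Real.exp v ≤ (1 + η) * y := by rw [← eb]; exact Real.exp_le_exp.2 hv.2
    have : 0 ≤ bpm n (t + Real.exp v * s / n) k := by
      refine bpm_nonneg (by positivity) (le_trans ?_ hpb) k
      gcongr
    gcongr
  rw [intervalIntegral.integral_mul_const, ← e1] at hmono
  have hfin := ch.trans hmono
  have hvar : (k : ℝ) * (n - k) / n ≤ s ^ 2 + y * s := by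
    rw [div_le_iff₀ hn, hkk]
    have : 0 < n * (y * s) := by positivity
    have h5 : (n * t + y * s) * (n - (n * t + y * s)) = n * s ^ 2 + n * (y * s) * (1 - 2 * t) - (y * s) ^ 2 := by
      rw [hs]; ring
    rw [h5]
    nlinarith [sq_nonneg (y * s)]
  have h6 : (1 - (s ^ 2 + y * s + 2) / (η * (y * s)) ^ 2) / (n + 1) ≤
      (1 - ((k : ℝ) * (n - k) / n + 2) / (η * (y * s)) ^ 2) / (n + 1) := by
    gcongr
  have h7 := h6.trans hfin
  calc n / (n + 1) * (1 - (s ^ 2 + y * s + 2) / (η * (y * s)) ^ 2) / (1 + η)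
      = (1 - (s ^ 2 + y * s + 2) / (η * (y * s)) ^ 2) / (n + 1) * (n / (1 + η)) := by ring
    _ ≤ ((∫ v in a..b, LR n t (Real.exp v) k) * bpm n t k * ((1 + η) * y * s / n)) * (n / (1 + η)) := by
        gcongr
    _ = _ := by field_simp

/-- Upper bound for a piece of the mixture integral. -/
lemma mix_upper {n : ℕ} {t a b r : ℝ} (h0 : 0 < t) (h1 : t < 1) (h : 0 < sg n t) {k : ℕ}
    (hk : k ≤ n) (hr : 0 < r) (ha : a = Real.log r) (hab : a ≤ b) (hbs : Real.exp b ≤ sg n t) :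
    (∫ v in a..b, LR n t (Real.exp v) k) * bpm n t k * sg n t ≤ 1 / r := by
  have hn : (0:ℝ) < n := by exact_mod_cast n_pos_of_sg h
  have ea : Real.exp a = r := by rw [ha, Real.exp_log hr]
  have hpb := sg_lt_n h0 h1 h hbs
  set s := sg n t
  have e1 : (∫ v in a..b, LR n t (Real.exp v) k) * bpm n t k
      = ∫ v in a..b, bpm n (t + Real.exp v * s / n) k := by
    rw [← intervalIntegral.integral_mul_const]
    refine intervalIntegral.integral_congr fun v _ => ?_
    rw [mul_comm, bpm_mul_LR h0 h1 h]
  have cb := bpm_continuous n k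
  have hmono : ∫ v in a..b, bpm n (t + Real.exp v * s / n) k * (r * s / n) ≤
      ∫ v in a..b, bpm n (t + Real.exp v * s / n) k * (Real.exp v * s / n) := by
    refine intervalIntegral.integral_mono_on hab
      (Continuous.intervalIntegrable (by fun_prop) _ _)
      (Continuous.intervalIntegrable (by fun_prop) _ _) fun v hv => ?_
    have hvb : r ≤ Real.exp v := by rw [← ea]; exact Real.exp_le_exp.2 hv.1
    have hvc : Real.exp v ≤ Real.exp b := Real.exp_le_exp.2 hv.2
    have : 0 ≤ bpm n (t + Real.exp v * s / n) k := by
      refine bpm_nonneg (by positivity) (le_trans ?_ hpb) k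
      gcongr
    gcongr
  rw [intervalIntegral.integral_mul_const, ← e1, subst_bpm] at hmono
  have hle : ∫ p in (t + Real.exp a * s / n)..(t + Real.exp b * s / n), bpm n p k ≤ 1 / (n + 1) := by
    rw [← bpm_integral n k hk]
    refine intervalIntegral.integral_mono_interval (by positivity) (by gcongr) hpb ?_
      (cb.intervalIntegrable _ _)
    filter_upwards [ae_restrict_mem measurableSet_Ioc] with p hp
    exact bpm_nonneg hp.1.le hp.2 k
  have h7 := hmono.trans hle
  have h8 : (1:ℝ) / (n + 1) ≤ 1 / n := by gcongr; linarith
  calc _ = ((∫ v in a..b, LR n t (Real.exp v) k) * bpm n t k * (r * s / n)) * (n / r) := by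
        field_simp
    _ ≤ (1 / n) * (n / r) := by gcongr; exact h7.trans h8
    _ = 1 / r := by field_simp


/-- Largeness hypotheses on the window parameter. -/
structure WH (η w : ℝ) : Prop where
  e0 : 0 < η
  e1 : η ≤ 1 / 20
  w16 : 16 ≤ w
  c1 : 12 ≤ η ^ 3 * w
  c2 : 4 * w * Lw w * Real.exp (2 - η ^ 2 * w / 8) ≤ η
  c3 : 256 * √w ^ 3 ≤ η * w ^ 3
  c4 : w * Lw w * Real.exp 2 ≤ 3 / 4 * Real.exp (η * w / 4)
  c5 : 2 * √w ≤ η * w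
  c6 : Real.exp (1 - w) ≤ η
  c7 : 3 * w * Lw w * Real.exp (-w / 4) ≤ η

/-- Hypotheses on a time point. -/
structure TH (n : ℕ) (t w : ℝ) : Prop where
  t0 : 0 < t
  t1 : t < 1
  hs : w ^ 3 ≤ sg n t

lemma TH.refl {n : ℕ} {t w : ℝ} (h : TH n t w) : TH n (1 - t) w :=
  ⟨by linarith [h.t1], by linarith [h.t0], by rw [sg_refl]; exact h.hs⟩

lemma WH.r4 {η w : ℝ} (W : WH η w) : 4 ≤ √w := by
  have := Real.sqrt_le_sqrt W.w16
  rwa [show (16:ℝ) = 4 ^ 2 by norm_num, Real.sqrt_sq (by norm_num)] at this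

lemma WH.rr {η w : ℝ} (W : WH η w) : √w ^ 2 = w := Real.sq_sqrt (by linarith [W.w16])

lemma WH.logle {η w : ℝ} (W : WH η w) : Real.log (1 / w) ≤ Real.log (4 * √w) := by
  have := W.w16
  have := W.r4
  refine Real.log_le_log (by positivity) ?_
  have : 1 / w ≤ 1 := by rw [div_le_one (by positivity)]; linarith
  linarith

lemma WH.Lw0 {η w : ℝ} (W : WH η w) : 0 ≤ Lw w := by
  unfold Lw; linarith [W.logle]

/-- Basic consequences on the size of `sg`. -/
lemma TH.big {n : ℕ} {t w η : ℝ} (h : TH n t w) (W : WH η w) :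
    256 * √w ^ 3 ≤ η * sg n t ∧ 4096 ≤ sg n t ∧ 0 < sg n t ∧ 8 * √w ≤ sg n t := by
  have := W.w16
  have a := W.r4
  have e := W.e0
  have b : (4096:ℝ) ≤ w ^ 3 := by
    calc (4096:ℝ) = 16 ^ 3 := by norm_num
      _ ≤ w ^ 3 := by gcongr
  have c := h.hs
  refine ⟨W.c3.trans (by gcongr), by linarith, by linarith, ?_⟩
  refine le_trans ?_ c
  have : √w ≤ w := by
    nth_rw 2 [← W.rr]; nlinarith
  have h8 : 16 * 16 * w ≤ w ^ 3 := by
    rw [show w ^ 3 = w * w * w by ring]; gcongr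
  linarith

lemma TH.big2 {n : ℕ} {t w η : ℝ} (h : TH n t w) (W : WH η w) : 4096 * √w ≤ η * sg n t := by
  have a := W.r4
  refine le_trans ?_ (h.big W).1
  have : 4 * 4 * √w ≤ √w ^ 3 := by
    rw [show √w ^ 3 = √w * √w * √w by ring]; gcongr
  linarith

lemma wlu_exp {y η w L : ℝ} (e0 : 0 < η) (e1 : η ≤ 1 / 20) (hy : w / 4 ≤ y ^ 2) (hL : 0 ≤ L)
    (hw : 0 ≤ w) :
    Real.exp (-y ^ 2 / 2 + η) * (4 * w) * (L * Real.exp ((1 - η ^ 2) * y ^ 2 / 2 + η)) ≤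
      4 * w * L * Real.exp (2 - η ^ 2 * w / 8) := by
  have : Real.exp (-y ^ 2 / 2 + η) * (4 * w) * (L * Real.exp ((1 - η ^ 2) * y ^ 2 / 2 + η)) =
      4 * w * L * (Real.exp (-y ^ 2 / 2 + η) * Real.exp ((1 - η ^ 2) * y ^ 2 / 2 + η)) := by ring
  rw [this, ← Real.exp_add]
  have h2 : η ^ 2 * (w / 4) ≤ η ^ 2 * y ^ 2 := by gcongr
  have h3 : -y ^ 2 / 2 + η + ((1 - η ^ 2) * y ^ 2 / 2 + η) ≤ 2 - η ^ 2 * w / 8 := by linarith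
  gcongr

lemma wll_arith {η y s n : ℝ} (e0 : 0 < η) (e1 : η ≤ 1 / 20) (ypos : 2 ≤ y) (hs : 0 < s)
    (hys : 2 * y ≤ η * s) (ew : 3 ≤ η ^ 3 * y ^ 2) (hn : s ^ 2 ≤ n) (s4 : 4096 ≤ s) :
    (1 - η / 4) ≤ n / (n + 1) ∧ (s ^ 2 + y * s + 2) / (η * (y * s)) ^ 2 ≤ 2 / 3 * η ∧
      y * s + s / y + 1 ≤ (1 + η) * (y * s) := by
  have n0 : 0 < n := by nlinarith
  refine ⟨?_, ?_, ?_⟩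
  · rw [le_div_iff₀ (by positivity)]
    have : 4 * 1 ≤ (η * s) * s := by gcongr <;> linarith
    have : η * s ^ 2 ≤ η * n := by gcongr
    nlinarith
  · rw [div_le_iff₀ (by positivity)]
    have h1 : y * s + 2 ≤ s ^ 2 := by
      have : y ≤ s / 2 := by nlinarith
      nlinarith
    have h2 : 2 / 3 * η * (η * (y * s)) ^ 2 = 2 / 3 * (η ^ 3 * y ^ 2) * s ^ 2 := by ring
    rw [h2]
    have : 2 / 3 * 3 * s ^ 2 ≤ 2 / 3 * (η ^ 3 * y ^ 2) * s ^ 2 := by gcongr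
    linarith
  · have h3 : 3 ≤ η * y ^ 2 := by
      refine ew.trans ?_
      gcongr
      have : η ^ 2 ≤ 1 := pow_le_one₀ e0.le (by linarith)
      nlinarith
    have h1 : s / y ≤ η / 2 * (y * s) := by
      rw [div_le_iff₀ (by linarith)]
      nlinarith
    have h2 : 1 ≤ η / 2 * (y * s) := by nlinarith
    linarith

lemma LR_win {n : ℕ} {t w η : ℝ} (h : TH n t w) (W : WH η w) {k : ℕ} (hk : k ≤ n) {z : ℝ}
    (hz : |z| ≤ 4 * √w) (hy : |yy n t k| ≤ 4 * √w) :
    Real.exp (z * yy n t k - z ^ 2 / 2 - η) ≤ LR n t z k ∧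
    LR n t z k ≤ Real.exp (z * yy n t k - z ^ 2 / 2 + η) := by
  obtain ⟨b1, b2, b3, b4⟩ := h.big W
  have r4 := W.r4
  obtain ⟨p, q⟩ := LR_log h.t0 h.t1 b3 hk (R := 4 * √w) (by linarith) hz hy (by linarith)
  have q' : 4 * (4 * √w) ^ 3 / sg n t ≤ η := by
    rw [div_le_iff₀ b3]; refine le_trans (le_of_eq (by ring)) b1
  have := abs_le.1 (q.trans q')
  constructor
  · rw [← Real.le_log_iff_exp_le p]; linarith
  · rw [← Real.log_le_iff_le_exp p]; linarith

lemma F_le {n : ℕ} {t w η : ℝ} (h : TH n t w) (W : WH η w) {k : ℕ} (hk : k ≤ n)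
    (hy0 : 0 ≤ yy n t k) (hy : yy n t k ≤ 4 * √w) :
    upT n t k ≤ Real.exp (-(yy n t k) ^ 2 / 2 + η) := by
  obtain ⟨b1, b2, b3, b4⟩ := h.big W
  have hy' : |yy n t k| ≤ 4 * √w := by rwa [abs_of_nonneg hy0]
  have l := (LR_win h W hk hy' hy').1
  have c := chernoff h.t0 h.t1 b3 hy0 (by linarith [W.r4]) k
  have F0 := upT_nonneg (n := n) h.t0.le h.t1.le k
  have : upT n t k * Real.exp (yy n t k * yy n t k - yy n t k ^ 2 / 2 - η) ≤ 1 :=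
    le_trans (by gcongr) c
  have e : Real.exp (-(yy n t k) ^ 2 / 2 + η) = 
      (Real.exp (yy n t k * yy n t k - yy n t k ^ 2 / 2 - η))⁻¹ := by
    rw [← Real.exp_neg]; congr 1; ring
  rw [e, ← one_div, le_div_iff₀ (Real.exp_pos _)]
  exact this

/-- the mixture is bounded by its maximal integrand -/
lemma Ip_le {n : ℕ} {t w η : ℝ} (h : TH n t w) (W : WH η w) {k : ℕ} (hk : k ≤ n)
    (hy : |yy n t k| ≤ 4 * √w) {a b : ℝ} {c : ℝ} (ha : Real.log (1 / w) ≤ a) (hab : a ≤ b)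
    (hb : b ≤ Real.log (4 * √w))
    (hc : ∀ v, a ≤ v → v ≤ b → Real.exp v * yy n t k - Real.exp v ^ 2 / 2 ≤ c) :
    ∫ v in a..b, LR n t (Real.exp v) k ≤ Lw w * Real.exp (c + η) := by
  have r4 := W.r4
  have : ∫ v in a..b, LR n t (Real.exp v) k ≤ ∫ v in a..b, Real.exp (c + η) := by
    refine intervalIntegral.integral_mono_on hab ((LR_exp_continuous n t k).intervalIntegrable _ _)
      (by simp) fun v hv => ?_
    refine (LR_win h W hk ?_ hy).2.trans ?_
    · rw [abs_of_pos (Real.exp_pos v), ← Real.exp_log (show 0 < 4 * √w by positivity)]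
      exact Real.exp_le_exp.2 (hv.2.trans hb)
    · exact Real.exp_le_exp.2 (by linarith [hc v hv.1 hv.2])
  refine this.trans ?_
  rw [intervalIntegral.integral_const, smul_eq_mul]
  gcongr
  unfold Lw; linarith

lemma Ip_nonneg {n : ℕ} {t w η : ℝ} (h : TH n t w) (W : WH η w) (k : ℕ) {a b : ℝ}
    (hab : a ≤ b) (hb : b ≤ Real.log (4 * √w)) :
    0 ≤ ∫ v in a..b, LR n t (Real.exp v) k := by
  obtain ⟨b1, b2, b3, b4⟩ := h.big W
  have r4 := W.r4
  refine intervalIntegral.integral_nonneg hab fun v hv => ?_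
  refine LR_nonneg h.t0 h.t1 b3 ?_ k
  rw [abs_of_pos (Real.exp_pos v)]
  have : Real.exp v ≤ 4 * √w := by
    rw [← Real.exp_log (show 0 < 4 * √w by positivity)]
    exact Real.exp_le_exp.2 (hv.2.trans hb)
  linarith

lemma Ip_mono {n : ℕ} {t w η : ℝ} (h : TH n t w) (W : WH η w) {k l : ℕ} (hkl : k ≤ l)
    (hl : l ≤ n) : Ip n w t k ≤ Ip n w t l := by
  obtain ⟨b1, b2, b3, b4⟩ := h.big W
  have r4 := W.r4
  refine intervalIntegral.integral_mono_on W.logle ((LR_exp_continuous n t k).intervalIntegrable _ _)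
    ((LR_exp_continuous n t l).intervalIntegrable _ _) fun v hv => ?_
  refine LR_mono h.t0 h.t1 b3 (Real.exp_pos v).le ?_ hkl hl
  have : Real.exp v ≤ 4 * √w := by
    rw [← Real.exp_log (show 0 < 4 * √w by positivity)]
    exact Real.exp_le_exp.2 hv.2
  linarith

lemma wl_ar1 {η : ℝ} (e0 : 0 < η) (e1 : η ≤ 1 / 20) : (1 + η) / (1 - η) ≤ 1 + 7 * η := by
  rw [div_le_iff₀ (by linarith)]; nlinarith

lemma wl_ar2 {η : ℝ} (e0 : 0 < η) (e1 : η ≤ 1 / 20) :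
    (1 - 5 * η) * ((1 + η) * (1 + η)) ≤ (1 - η / 4) * (1 - 2 / 3 * η) := by
  nlinarith [sq_nonneg η, pow_pos e0 3]

lemma k_bound {n : ℕ} {t : ℝ} (h0 : 0 < t) (h1 : t < 1) (h : 0 < sg n t) {k : ℕ}
    (hy : 0 < yy n t k) : sg n t ^ 2 ≤ k * (1 - t) ∧ k * (1 - t) ≤ sg n t ^ 2 + yy n t k * sg n t
      ∧ sg n t ^ 2 ≤ n := by
  have kk := k_eq_yy h k
  have ss := sg_sq (n := n) h0 h1
  have : 0 < yy n t k * sg n t := by positivity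
  refine ⟨?_, ?_, ?_⟩
  · rw [kk, ss]; nlinarith
  · rw [kk, ss]; nlinarith
  · rw [ss]
    have : t * (1 - t) ≤ 1 := by nlinarith
    nlinarith

set_option maxHeartbeats 600000 in
lemma WL_upper {n : ℕ} {t w η : ℝ} (h : TH n t w) (W : WH η w) {k : ℕ} (hk : k ≤ n)
    (hy1 : √w / 2 ≤ yy n t k) (hy2 : yy n t k ≤ 2 * √w) :
    upT n t k * yy n t k ^ 2 * Ip n w t k ≤ 1 + 8 * η := by
  obtain ⟨b1, b2, b3, b4⟩ := h.big W
  have b5 := h.big2 W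
  have r4 := W.r4
  have rr := W.rr
  have e0 := W.e0
  have e1 := W.e1
  have w16 := W.w16
  have t0 := h.t0
  have t1 := h.t1
  have L0 := W.Lw0
  have F0 := upT_nonneg (n := n) h.t0.le h.t1.le k
  have hb := bpm_pos h.t0 h.t1 hk
  have ypos : 0 < yy n t k := by linarith
  have kb := k_bound h.t0 h.t1 b3 ypos
  have tb := (tail_bounds h.t0 h.t1 b3 hk ypos).1
  have Fl := F_le h W hk ypos.le (by linarith)
  have hya : |yy n t k| ≤ 4 * √w := by rw [abs_of_pos ypos]; linarith
  have he : 0 < (1 - η) * yy n t k := mul_pos (by linarith) ypos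
  have g1 : Real.log (1 / w) ≤ Real.log ((1 - η) * yy n t k) := by
    refine Real.log_le_log (by positivity) ?_
    have : 1 / w ≤ 1 := by rw [div_le_one (by positivity)]; linarith
    nlinarith
  have g2 : Real.log ((1 - η) * yy n t k) ≤ Real.log (4 * √w) := by
    refine Real.log_le_log he ?_
    nlinarith
  have I1 := Ip_le h W hk hya (c := (1 - η ^ 2) * yy n t k ^ 2 / 2) le_rfl g1 g2 (fun v _ hv => by
    have hv' : Real.exp v ≤ (1 - η) * yy n t k := by
      rw [← Real.exp_log he]; exact Real.exp_le_exp.2 hv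
    have : 0 < η * yy n t k := by positivity
    nlinarith)
  have I2 := mix_upper h.t0 h.t1 b3 hk he rfl g2 (by
    rw [Real.exp_log (by positivity)]; linarith)
  have I20 := Ip_nonneg h W k g2 le_rfl
  have I10 := Ip_nonneg h W k g1 g2
  have sp : Ip n w t k = (∫ v in Real.log (1 / w)..Real.log ((1 - η) * yy n t k), LR n t (Real.exp v) k)
     + ∫ v in Real.log ((1 - η) * yy n t k)..Real.log (4 * √w), LR n t (Real.exp v) k := by
    unfold Ip
    rw [intervalIntegral.integral_add_adjacent_intervals]
    all_goals exact (LR_exp_continuous n t k).intervalIntegrable _ _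
  rw [sp]
  set J1 := ∫ v in Real.log (1 / w)..Real.log ((1 - η) * yy n t k), LR n t (Real.exp v) k
  set J2 := ∫ v in Real.log ((1 - η) * yy n t k)..Real.log (4 * √w), LR n t (Real.exp v) k
  set y := yy n t k
  set s := sg n t
  set F := upT n t k
  have A1 : F * y ^ 2 * J1 ≤ η := by
    have ysq : y ^ 2 ≤ 4 * w := by rw [← rr]; nlinarith
    have ysq2 : w / 4 ≤ y ^ 2 := by rw [← rr]; nlinarith
    calc F * y ^ 2 * J1 ≤ Real.exp (-y ^ 2 / 2 + η) * (4 * w) * (Lw w * Real.exp ((1 - η ^ 2) * y ^ 2 / 2 + η)) := by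
          gcongr
      _ ≤ 4 * w * Lw w * Real.exp (2 - η ^ 2 * w / 8) := wlu_exp e0 e1 ysq2 L0 (by linarith)
      _ ≤ η := W.c2
  have A2 : F * y ^ 2 * J2 ≤ (1 + η) / (1 - η) := by
    have q : F * y ≤ bpm n t k * (s + y) := by
      have : F * (y * s) ≤ bpm n t k * (s + y) * s := by
        refine tb.trans ?_
        calc (k:ℝ) * (1 - t) * bpm n t k ≤ (s ^ 2 + y * s) * bpm n t k := by
              gcongr; exact kb.2.1
          _ = _ := by ring
      refine le_of_mul_le_mul_right ?_ b3
      linarith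
    have q2 : y ≤ η * s := by linarith
    have q3 : F * y ≤ bpm n t k * ((1 + η) * s) := q.trans (by gcongr; linarith)
    calc F * y ^ 2 * J2 = (F * y) * (y * J2) := by ring
      _ ≤ (bpm n t k * ((1 + η) * s)) * (y * J2) := by gcongr
      _ = (1 + η) * y * (J2 * bpm n t k * s) := by ring
      _ ≤ (1 + η) * y * (1 / ((1 - η) * y)) := by gcongr
      _ = (1 + η) / (1 - η) := by field_simp
  have A3 := wl_ar1 e0 e1
  rw [mul_add]; linarith

set_option maxHeartbeats 600000 in
lemma WL_lower {n : ℕ} {t w η : ℝ} (h : TH n t w) (W : WH η w) {k : ℕ} (hk : k ≤ n)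
    (hy1 : √w / 2 ≤ yy n t k) (hy2 : yy n t k ≤ 2 * √w) :
    1 - 5 * η ≤ upT n t k * yy n t k ^ 2 * Ip n w t k := by
  obtain ⟨b1, b2, b3, b4⟩ := h.big W
  have b5 := h.big2 W
  have r4 := W.r4
  have rr := W.rr
  have e0 := W.e0
  have e1 := W.e1
  have w16 := W.w16
  have t0 := h.t0
  have t1 := h.t1
  have L0 := W.Lw0
  have F0 := upT_nonneg (n := n) h.t0.le h.t1.le k
  have hb := bpm_pos h.t0 h.t1 hk
  have ypos : 0 < yy n t k := by linarith
  have kb := k_bound h.t0 h.t1 b3 ypos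
  have tb := (tail_bounds h.t0 h.t1 b3 hk ypos).2
  have he : 0 < (1 - η) * yy n t k := mul_pos (by linarith) ypos
  have g1 : Real.log (1 / w) ≤ Real.log ((1 - η) * yy n t k) := by
    refine Real.log_le_log (by positivity) ?_
    have : 1 / w ≤ 1 := by rw [div_le_one (by positivity)]; linarith
    nlinarith
  have g2 : Real.log ((1 - η) * yy n t k) ≤ Real.log ((1 + η) * yy n t k) := by
    refine Real.log_le_log he ?_
    nlinarith
  have g3 : Real.log ((1 + η) * yy n t k) ≤ Real.log (4 * √w) := by
    refine Real.log_le_log (by positivity) ?_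
    nlinarith
  have ml := mix_lower h.t0 h.t1 b3 hk e0 (by linarith) ypos rfl rfl (by nlinarith)
  have P1 := Ip_nonneg h W k g1 (g2.trans g3)
  have P3 := Ip_nonneg h W k g3 le_rfl
  have sp : Ip n w t k = (∫ v in Real.log (1 / w)..Real.log ((1 - η) * yy n t k), LR n t (Real.exp v) k)
     + (∫ v in Real.log ((1 - η) * yy n t k)..Real.log ((1 + η) * yy n t k), LR n t (Real.exp v) k)
     + ∫ v in Real.log ((1 + η) * yy n t k)..Real.log (4 * √w), LR n t (Real.exp v) k := by
    unfold Ip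
    rw [intervalIntegral.integral_add_adjacent_intervals, 
      intervalIntegral.integral_add_adjacent_intervals]
    all_goals exact (LR_exp_continuous n t k).intervalIntegrable _ _
  have Jle : (∫ v in Real.log ((1 - η) * yy n t k)..Real.log ((1 + η) * yy n t k), LR n t (Real.exp v) k)
     ≤ Ip n w t k := by rw [sp]; linarith
  have hI : 0 ≤ Ip n w t k := Ip_nonneg h W k W.logle le_rfl
  set J := ∫ v in Real.log ((1 - η) * yy n t k)..Real.log ((1 + η) * yy n t k), LR n t (Real.exp v) k
  set y := yy n t k
  set s := sg n t
  set F := upT n t k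
  set I := Ip n w t k
  have n0 : (0:ℝ) < n := by exact_mod_cast n_pos_of_sg b3
  have ysq2 : w / 4 ≤ y ^ 2 := by rw [← rr]; nlinarith
  have ew : 3 ≤ η ^ 3 * y ^ 2 := by
    have : η ^ 3 * (w / 4) ≤ η ^ 3 * y ^ 2 := by gcongr
    linarith [W.c1]
  have sn : s ^ 2 ≤ n := kb.2.2
  obtain ⟨E1, E2, E3⟩ := wll_arith e0 e1 (by linarith) b3 (by linarith) ew sn b2
  have A : bpm n t k * s ≤ F * ((1 + η) * y) := by
    have : bpm n t k * s * s ≤ F * ((1 + η) * y) * s := by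
      calc bpm n t k * s * s = s ^ 2 * bpm n t k := by ring
        _ ≤ k * (1 - t) * bpm n t k := by
            gcongr; exact kb.1
        _ ≤ F * (y * s + s / y + 1) := tb
        _ ≤ F * ((1 + η) * (y * s)) := by gcongr
        _ = _ := by ring
    exact le_of_mul_le_mul_right this b3
  have B : J * bpm n t k * (y * s) ≤ (F * y ^ 2 * I) * (1 + η) := by
    calc J * bpm n t k * (y * s) ≤ I * bpm n t k * (y * s) := by gcongr
      _ = I * y * (bpm n t k * s) := by ring
      _ ≤ I * y * (F * ((1 + η) * y)) := by gcongr
      _ = _ := by ring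
  have C1 : (1 - η / 4) * (1 - 2 / 3 * η) / (1 + η) ≤ F * y ^ 2 * I * (1 + η) := by
    refine le_trans ?_ (ml.trans B)
    gcongr
    · linarith
  rw [div_le_iff₀ (by positivity)] at C1
  have : (1 - 5 * η) * ((1 + η) * (1 + η)) ≤ (1 - η / 4) * (1 - 2 / 3 * η) := wl_ar2 e0 e1
  have : (1 - 5 * η) * ((1 + η) * (1 + η)) ≤ F * y ^ 2 * I * ((1 + η) * (1 + η)) := by linarith
  exact le_of_mul_le_mul_right this (by positivity)


/-- Hypotheses on the level. -/
structure EH (η w ε : ℝ) : Prop where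
  lo : Real.exp (-(1 + η) * w / 2) ≤ ε
  hi : ε ≤ Real.exp (-(1 - η / 2) * w / 2)

lemma EH.pos {η w ε : ℝ} (E : EH η w ε) : 0 < ε := (Real.exp_pos _).trans_le E.lo

lemma yy_lt {n : ℕ} {t : ℝ} (h : 0 < sg n t) {k l : ℕ} : yy n t k < yy n t l ↔ k < l := by
  unfold yy
  rw [div_lt_div_iff_of_pos_right h]
  simp

lemma yy_le {n : ℕ} {t : ℝ} (h : 0 < sg n t) {k l : ℕ} : yy n t k ≤ yy n t l ↔ k ≤ l := by
  rw [← not_lt, yy_lt h, not_lt]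

/-- first integer above a given normalized level -/
lemma exists_k {n : ℕ} {t w η : ℝ} (h : TH n t w) (W : WH η w) {c : ℝ} (hc : 0 ≤ c)
    (hc2 : c ≤ 2 * √w) : ∃ k, k ≤ n ∧ c ≤ yy n t k ∧ yy n t k ≤ c + η * √w / 4 ∧
      ∀ l, c ≤ yy n t l → k ≤ l := by
  obtain ⟨b1, b2, b3, b4⟩ := h.big W
  have b5 := h.big2 W
  have r4 := W.r4
  have e0 := W.e0
  have t0 := h.t0
  have ss := sg_sq (n := n) h.t0 h.t1
  set s := sg n t with hs
  have hx : 0 ≤ n * t + c * s := by positivity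
  have hce := Nat.le_ceil (n * t + c * s)
  have hlt := Nat.ceil_lt_add_one hx
  refine ⟨⌈n * t + c * s⌉₊, ?_, ?_, ?_, ?_⟩
  · refine Nat.ceil_le.2 ?_
    have : c * s ≤ s ^ 2 := by rw [sq]; gcongr; linarith
    have h3 : 0 ≤ n * (1 - t) := by have := h.t1; have : 0 ≤ 1 - t := by linarith
                                    positivity
    nlinarith [h.t1]
  · unfold yy; rw [← hs, le_div_iff₀ b3]; linarith
  · unfold yy; rw [← hs, div_le_iff₀ b3]
    have : 1 ≤ η * √w / 4 * s := by nlinarith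
    linarith
  · intro l hl
    refine Nat.ceil_le.2 ?_
    have := k_eq_yy b3 l
    rw [← hs] at this
    rw [this]; gcongr

lemma bd_p1a {n : ℕ} {t w η ε : ℝ} (h : TH n t w) (W : WH η w) (E : EH η w ε) {k : ℕ} (hk : k ≤ n)
    (h1 : (1 + η) * √w ≤ yy n t k) (h2 : yy n t k ≤ 2 * √w) : upT n t k < ε := by
  have r4 := W.r4
  have rr := W.rr
  have e0 := W.e0
  have e1 := W.e1
  have w16 := W.w16
  have y0 : 0 ≤ yy n t k := le_trans (by positivity) h1
  refine (F_le h W hk y0 (by linarith)).trans_lt (lt_of_lt_of_le ?_ E.lo)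
  refine Real.exp_lt_exp.2 ?_
  have : ((1 + η) * √w) ^ 2 ≤ yy n t k ^ 2 := by gcongr
  rw [mul_pow, rr] at this
  have q1 : η * 16 ≤ η * w := by gcongr
  have q2 : 0 ≤ η * η * w := by positivity
  linarith

lemma bd_p1 {n : ℕ} {t w η ε : ℝ} (h : TH n t w) (W : WH η w) (E : EH η w ε) {k : ℕ} (hk : k ≤ n)
    (h1 : (1 + η) * √w ≤ yy n t k) : ∃ l, l ≤ k ∧ upT n t l < ε ∧ upT n t k < ε ∧
      (1 + η) * √w ≤ yy n t l ∧ yy n t l ≤ (1 + 2 * η) * √w := by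
  have r4 := W.r4
  have e0 := W.e0
  have e1 := W.e1
  obtain ⟨l, l1, l2, l3, l4⟩ := exists_k h W (c := (1 + η) * √w) (by positivity) (by nlinarith)
  have := bd_p1a h W E l1 l2 (by nlinarith)
  refine ⟨l, l4 k h1, this, (upT_anti h.t0.le h.t1.le (l4 k h1)).trans_lt this, l2, by nlinarith⟩

lemma p2_arith {η w L y : ℝ} (W : WH η w) (hL : L = Lw w) (hL0 : 0 < L) (h1 : 0 < y)
    (h2 : y ≤ (1 - 3 / 4 * η) * √w) :
    Real.exp (-(1 - η / 2) * w / 2) * (y ^ 2 * (L * Real.exp (y ^ 2 / 2 + η))) ≤ 1 - 5 * η := by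
  have e0 := W.e0
  have e1 := W.e1
  have w16 := W.w16
  have c4 := W.c4
  rw [← hL] at c4
  have y2 : y ^ 2 ≤ (1 - η) * w := by
    have : y ^ 2 ≤ ((1 - 3 / 4 * η) * √w) ^ 2 := by gcongr
    rw [mul_pow, W.rr] at this
    refine this.trans ?_
    gcongr
    nlinarith
  have y3 : y ^ 2 ≤ w := by nlinarith
  calc Real.exp (-(1 - η / 2) * w / 2) * (y ^ 2 * (L * Real.exp (y ^ 2 / 2 + η)))
      ≤ Real.exp (-(1 - η / 2) * w / 2) * (w * (L * Real.exp ((1 - η) * w / 2 + 2))) := by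
        gcongr; linarith
    _ = w * L * Real.exp 2 * Real.exp (-(η * w / 4)) := by
        have : Real.exp ((1 - η) * w / 2 + 2) * Real.exp (-(1 - η / 2) * w / 2) =
          Real.exp 2 * Real.exp (-(η * w / 4)) := by
          rw [← Real.exp_add, ← Real.exp_add]; congr 1; ring
        linear_combination w * L * this
    _ ≤ 3 / 4 * Real.exp (η * w / 4) * Real.exp (-(η * w / 4)) := by gcongr
    _ = 3 / 4 := by rw [mul_assoc, ← Real.exp_add]; simp
    _ ≤ _ := by linarith

lemma WH.Lwpos {η w : ℝ} (W : WH η w) : 0 < Lw w := by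
  have := W.w16
  have := W.r4
  unfold Lw
  have : Real.log (1 / w) < Real.log (4 * √w) := by
    refine Real.log_lt_log (by positivity) ?_
    have : 1 / w ≤ 1 := by rw [div_le_one (by positivity)]; linarith
    linarith
  linarith

lemma bd_p2a {n : ℕ} {t w η ε : ℝ} (h : TH n t w) (W : WH η w) (E : EH η w ε) {k : ℕ} (hk : k ≤ n)
    (h1 : (1 - η) * √w ≤ yy n t k) (h2 : yy n t k ≤ (1 - 3 / 4 * η) * √w) : ε ≤ upT n t k := by
  have r4 := W.r4
  have e0 := W.e0
  have e1 := W.e1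
  have Lp := W.Lwpos
  have y0 : 0 < yy n t k := lt_of_lt_of_le (by nlinarith) h1
  have wl := WL_lower h W hk (by nlinarith) (by nlinarith)
  have ar := p2_arith W rfl Lp y0 h2
  have hy : |yy n t k| ≤ 4 * √w := by rw [abs_of_pos y0]; nlinarith
  have Ile := Ip_le h W hk hy (c := yy n t k ^ 2 / 2) le_rfl W.logle le_rfl (fun v _ _ => by
    nlinarith [sq_nonneg (Real.exp v - yy n t k)])
  change Ip n w t k ≤ _ at Ile
  have F0 := upT_nonneg (n := n) h.t0.le h.t1.le k
  have : Real.exp (-(1 - η / 2) * w / 2) * (yy n t k ^ 2 * (Lw w * Real.exp (yy n t k ^ 2 / 2 + η))) ≤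
      upT n t k * (yy n t k ^ 2 * (Lw w * Real.exp (yy n t k ^ 2 / 2 + η))) := by
    refine ar.trans (wl.trans ?_)
    rw [mul_assoc]
    gcongr
  exact E.hi.trans (le_of_mul_le_mul_right this (by positivity))

lemma bd_p2 {n : ℕ} {t w η ε : ℝ} (h : TH n t w) (W : WH η w) (E : EH η w ε) {k : ℕ}
    (h1 : yy n t k ≤ (1 - η) * √w) : ∃ l, k ≤ l ∧ l ≤ n ∧ ε ≤ upT n t l ∧ ε ≤ upT n t k ∧
      (1 - η) * √w ≤ yy n t l ∧ yy n t l ≤ √w := by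
  have r4 := W.r4
  have e0 := W.e0
  have e1 := W.e1
  obtain ⟨l, l1, l2, l3, l4⟩ := exists_k h W (c := (1 - η) * √w)
    (mul_nonneg (by linarith) (by positivity)) (by nlinarith)
  have := bd_p2a h W E l1 l2 (by nlinarith)
  have hkl : k ≤ l := (yy_le (h.big W).2.2.1).1 (h1.trans l2)
  exact ⟨l, hkl, l1, this, this.trans (upT_anti h.t0.le h.t1.le hkl), l2, by nlinarith⟩

lemma p3_core {F y I w η ε : ℝ} (e0 : 0 < η) (e1 : η ≤ 1 / 20) (hw : 0 < w) (hI : 0 ≤ I)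
    (hy0 : 0 < y) (hy : y ≤ (1 + 2 * η) * √w) (hF0 : 0 ≤ F) (hF : F ≤ ε) (hl : 1 - 5 * η ≤ F * y ^ 2 * I) :
    1 - 9 * η ≤ w * ε * I := by
  have y2 : y ^ 2 ≤ (1 + 2 * η) ^ 2 * w := by
    calc y ^ 2 ≤ ((1 + 2 * η) * √w) ^ 2 := by gcongr
      _ = _ := by rw [mul_pow, Real.sq_sqrt hw.le]
  have : F * y ^ 2 * I ≤ (1 + 2 * η) ^ 2 * (w * ε * I) := by
    calc F * y ^ 2 * I ≤ ε * ((1 + 2 * η) ^ 2 * w) * I := by gcongr; linarith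
      _ = _ := by ring
  have h3 : (1 - 9 * η) * (1 + 2 * η) ^ 2 ≤ 1 - 5 * η := by nlinarith [sq_nonneg η, pow_pos e0 3]
  have : (1 + 2 * η) ^ 2 * (1 - 9 * η) ≤ (1 + 2 * η) ^ 2 * (w * ε * I) := by linarith
  exact le_of_mul_le_mul_left this (by positivity)

lemma p4_core {F y I w η ε : ℝ} (e0 : 0 < η) (e1 : η ≤ 1 / 20) (hw : 0 < w) (hI : 0 ≤ I)
    (hy : (1 - η) * √w ≤ y) (hε : 0 ≤ ε) (hF : ε ≤ F) (hl : F * y ^ 2 * I ≤ 1 + 8 * η) :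
    w * ε * I ≤ 1 + 20 * η := by
  have h1 : 0 ≤ 1 - η := by linarith
  have y2 : (1 - η) ^ 2 * w ≤ y ^ 2 := by
    calc (1 - η) ^ 2 * w = ((1 - η) * √w) ^ 2 := by rw [mul_pow, Real.sq_sqrt hw.le]
      _ ≤ y ^ 2 := by gcongr
  have : (1 - η) ^ 2 * (w * ε * I) ≤ F * y ^ 2 * I := by
    calc (1 - η) ^ 2 * (w * ε * I) = ε * ((1 - η) ^ 2 * w) * I := by ring
      _ ≤ F * y ^ 2 * I := by gcongr; linarith
  have h3 : 1 + 8 * η ≤ (1 - η) ^ 2 * (1 + 20 * η) := by nlinarith [sq_nonneg η, pow_pos e0 3]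
  have : (1 - η) ^ 2 * (w * ε * I) ≤ (1 - η) ^ 2 * (1 + 20 * η) := by linarith
  exact le_of_mul_le_mul_left this (by have : 0 < 1 - η := by linarith
                                       positivity)

lemma bd_p3 {n : ℕ} {t w η ε : ℝ} (h : TH n t w) (W : WH η w) (E : EH η w ε) {k : ℕ} (hk : k ≤ n)
    (hF : upT n t k < ε) : 1 - 9 * η ≤ w * ε * Ip n w t k := by
  have r4 := W.r4
  have e0 := W.e0
  have e1 := W.e1
  have w0 : 0 < w := by linarith [W.w16]
  have y1 : (1 - η) * √w < yy n t k := by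
    by_contra hc
    obtain ⟨l, _, _, _, q, _⟩ := bd_p2 h W E (not_lt.1 hc)
    linarith
  have y0 : 0 < yy n t k := lt_of_le_of_lt (by nlinarith) y1
  rcases le_total (yy n t k) ((1 + η) * √w) with hy | hy
  · exact p3_core e0 e1 w0 (Ip_nonneg h W k W.logle le_rfl) y0 (by nlinarith)
      (upT_nonneg h.t0.le h.t1.le k) hF.le (WL_lower h W hk (by nlinarith) (by nlinarith))
  · obtain ⟨l, l1, l2, l3, l4, l5⟩ := bd_p1 h W E hk hy
    have hl : l ≤ n := l1.trans hk
    refine (p3_core e0 e1 w0 (Ip_nonneg h W l W.logle le_rfl) (lt_of_lt_of_le (by positivity) l4) l5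
      (upT_nonneg h.t0.le h.t1.le l) l2.le (WL_lower h W hl (by nlinarith) (by nlinarith))).trans ?_
    have := E.pos
    have : Ip n w t l ≤ Ip n w t k := Ip_mono h W l1 hk
    change w * ε * Ip n w t l ≤ _
    gcongr

lemma bd_p4 {n : ℕ} {t w η ε : ℝ} (h : TH n t w) (W : WH η w) (E : EH η w ε) {k : ℕ} (hk : k ≤ n)
    (hF : ε ≤ upT n t k) : w * ε * Ip n w t k ≤ 1 + 20 * η ∧ yy n t k ≤ (1 + η) * √w := by
  have r4 := W.r4
  have e0 := W.e0
  have e1 := W.e1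
  have w0 : 0 < w := by linarith [W.w16]
  have y1 : yy n t k ≤ (1 + η) * √w := by
    by_contra hc
    obtain ⟨l, _, _, q, _⟩ := bd_p1 h W E hk (not_le.1 hc).le
    linarith
  refine ⟨?_, y1⟩
  rcases le_total ((1 - η) * √w) (yy n t k) with hy | hy
  · exact p4_core e0 e1 w0 (Ip_nonneg h W k W.logle le_rfl) hy E.pos.le hF
      (WL_upper h W hk (by nlinarith) (by nlinarith))
  · obtain ⟨l, l1, l2, l3, l4, l5, l6⟩ := bd_p2 h W E hy
    refine le_trans ?_ (p4_core e0 e1 w0 (Ip_nonneg h W l W.logle le_rfl) l5 E.pos.le l3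
      (WL_upper h W l2 (by nlinarith) (by nlinarith)))
    have := E.pos
    have : Ip n w t k ≤ Ip n w t l := Ip_mono h W l1 l2
    change _ ≤ w * ε * Ip n w t l
    gcongr

lemma bd_p5 {n : ℕ} {t w η ε : ℝ} (h : TH n t w) (W : WH η w) (E : EH η w ε) {k : ℕ} (hk : k ≤ n)
    (h0 : yy n t k ≤ 0) (h1 : -(4 * √w) ≤ yy n t k) : w * ε * Ip n w t k ≤ η := by
  have e0 := W.e0
  have e1 := W.e1
  have w0 : 0 < w := by linarith [W.w16]
  have L0 := W.Lw0
  have r4 := W.r4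
  have Ile := Ip_le h W hk (abs_le.2 ⟨h1, by linarith⟩) (c := 0) le_rfl W.logle le_rfl (fun v _ _ => by
    nlinarith [sq_nonneg (Real.exp v), Real.exp_pos v])
  change Ip n w t k ≤ _ at Ile
  refine le_trans ?_ W.c7
  have Ehi : ε ≤ Real.exp (-w / 4) := E.hi.trans (Real.exp_le_exp.2 (by nlinarith))
  have := E.pos
  have e3 : Real.exp (0 + η) ≤ 3 := (Real.exp_le_exp.2 (by linarith)).trans Real.exp_one_lt_three.le
  calc w * ε * Ip n w t k ≤ w * Real.exp (-w / 4) * (Lw w * 3) := by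
        gcongr
        · exact Ip_nonneg h W k W.logle le_rfl
        · exact Ile.trans (by gcongr)
    _ = _ := by ring

/-- Non-crossing at a time-point. -/
def nc (n : ℕ) (ε t : ℝ) (k : ℕ) : Prop := ε ≤ upT n t k ∧ ε ≤ loT n t k

/-- The harmonic function. -/
noncomputable def gg (n : ℕ) (w ε t : ℝ) (k : ℕ) : ℝ := w * ε * (Ip n w t k + Im n w t k)

lemma nc_refl {n : ℕ} {ε t : ℝ} {k : ℕ} (hk : k ≤ n) : nc n ε (1 - t) (n - k) ↔ nc n ε t k := by
  unfold nc
  rw [upT_refl t hk]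
  have := upT_refl (n := n) (1 - t) (k := n - k) (by omega)
  rw [← this]
  rw [show n - (n - k) = k by omega, sub_sub_cancel]
  tauto

lemma gg_refl {n : ℕ} {w ε t : ℝ} {k : ℕ} (hk : k ≤ n) :
    gg n w ε (1 - t) (n - k) = gg n w ε t k := by
  unfold gg
  rw [Im_eq w t hk, Im_eq w (1 - t) (show n - k ≤ n by omega), show n - (n - k) = k by omega,
    sub_sub_cancel]
  ring

lemma bd_yy {n : ℕ} {t w η ε : ℝ} (h : TH n t w) (W : WH η w) (E : EH η w ε) {k : ℕ} (hk : k ≤ n)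
    (hc : nc n ε t k) : |yy n t k| ≤ (1 + η) * √w := by
  have h1 := (bd_p4 h W E hk hc.1).2
  have h2 := (bd_p4 h.refl W E (show n - k ≤ n by omega) ((nc_refl hk).2 hc).1).2
  rw [yy_refl t hk] at h2
  exact abs_le.2 ⟨by linarith, h1⟩

lemma bd_gg_le {n : ℕ} {t w η ε : ℝ} (h : TH n t w) (W : WH η w) (E : EH η w ε) {k : ℕ} (hk : k ≤ n)
    (hc : nc n ε t k) : gg n w ε t k ≤ 1 + 21 * η := by
  have key : ∀ {t : ℝ} {k : ℕ}, TH n t w → k ≤ n → nc n ε t k → 0 ≤ yy n t k →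
      gg n w ε t k ≤ 1 + 21 * η := by
    intro t k h hk hc hy
    have := bd_yy h W E hk hc
    rw [abs_of_nonneg hy] at this
    have a := (bd_p4 h W E hk hc.1).1
    have b := bd_p5 h.refl W E (show n - k ≤ n by omega) (by rw [yy_refl t hk]; linarith)
      (by rw [yy_refl t hk]; nlinarith [W.e1, W.r4])
    unfold gg; rw [Im_eq w t hk]; linarith
  rcases le_total 0 (yy n t k) with hy | hy
  · exact key h hk hc hy
  · rw [← gg_refl hk]
    exact key h.refl (by omega) ((nc_refl hk).2 hc) (by rw [yy_refl t hk]; linarith)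

lemma gg_nonneg {n : ℕ} {t w η ε : ℝ} (h : TH n t w) (W : WH η w) (hε : 0 ≤ ε) {k : ℕ} (hk : k ≤ n) :
    0 ≤ Ip n w t k ∧ 0 ≤ Im n w t k ∧ 0 ≤ gg n w ε t k := by
  have a : 0 ≤ Ip n w t k := Ip_nonneg h W k W.logle le_rfl
  have b : 0 ≤ Im n w t k := by rw [Im_eq w t hk]; exact Ip_nonneg h.refl W _ W.logle le_rfl
  have := W.w16
  exact ⟨a, b, by unfold gg; positivity⟩

lemma bd_gg_ge {n : ℕ} {t w η ε : ℝ} (h : TH n t w) (W : WH η w) (E : EH η w ε) {k : ℕ} (hk : k ≤ n)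
    (hc : ¬ nc n ε t k) : 1 - 9 * η ≤ gg n w ε t k := by
  have key : ∀ {t : ℝ} {k : ℕ}, TH n t w → k ≤ n → upT n t k < ε → 1 - 9 * η ≤ gg n w ε t k := by
    intro t k h hk hF
    have a := bd_p3 h W E hk hF
    obtain ⟨_, b, _⟩ := gg_nonneg h W E.pos.le hk
    have := E.pos
    have := W.w16
    have : 0 ≤ w * ε * Im n w t k := by positivity
    unfold gg; linarith
  rcases lt_or_ge (upT n t k) ε with h1 | h1
  · exact key h hk h1
  · rw [← gg_refl hk]
    refine key h.refl (by omega) ?_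
    rw [upT_refl t hk]
    by_contra h3
    exact hc ⟨h1, not_lt.1 h3⟩

lemma bd_small {n : ℕ} {t w η : ℝ} (h : TH n t w) (W : WH η w) {k : ℕ} (hk : k ≤ n)
    (hy : |yy n t k| ≤ (1 + η) * √w) {z : ℝ} (hz : |z| ≤ 1 / w) : |LR n t z k - 1| ≤ 6 * η := by
  have e0 := W.e0
  have e1 := W.e1
  have w0 := W.w16
  have r4 := W.r4
  have c5 := W.c5
  have h1w : 1 / w ≤ 1 := by rw [div_le_one (by positivity)]; linarith
  have hy' : |yy n t k| ≤ 2 * √w := hy.trans (by nlinarith)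
  obtain ⟨a, b⟩ := LR_win h W hk (z := z) (by linarith) (by linarith)
  have zy : |z * yy n t k| ≤ η := by
    rw [abs_mul]
    calc |z| * |yy n t k| ≤ 1 / w * (2 * √w) := by gcongr
      _ ≤ 1 / w * (η * w) := by gcongr
      _ = η := by field_simp
  have z2 : z ^ 2 / 2 ≤ η := by
    have : z ^ 2 ≤ (1 / w) ^ 2 := by rw [← sq_abs]; gcongr
    have h5 : 1 / w ≤ η := by rw [div_le_iff₀ (by positivity)]; linarith
    nlinarith [sq_nonneg z, show 0 < 1 / w by positivity]
  obtain ⟨zy1, zy2⟩ := abs_le.1 zy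
  have ub : LR n t z k ≤ Real.exp (2 * η) := b.trans (Real.exp_le_exp.2 (by nlinarith [sq_nonneg z]))
  have lb : Real.exp (-(3 * η)) ≤ LR n t z k := le_trans (Real.exp_le_exp.2 (by linarith)) a
  have l2 := Real.add_one_le_exp (-(3 * η))
  have u2 : Real.exp (2 * η) ≤ 1 + 6 * η := by
    have := Real.abs_exp_sub_one_le (x := 2 * η) (by rw [abs_of_pos (by positivity)]; linarith)
    rw [abs_of_pos (show 0 < 2 * η by positivity)] at this
    linarith [(abs_le.1 this).2]
  exact abs_le.2 ⟨by linarith, by linarith⟩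

lemma bd_large {n : ℕ} {t w η : ℝ} (h : TH n t w) (W : WH η w) {k : ℕ} (hk : k ≤ n)
    (hy : |yy n t k| ≤ (1 + η) * √w) {z : ℝ} (hz : |z| ≤ 4 * √w) (hz2 : 3 * √w ≤ |z|) :
    LR n t z k ≤ η := by
  have e0 := W.e0
  have e1 := W.e1
  have w0 := W.w16
  have r4 := W.r4
  have hy' : |yy n t k| ≤ 21 / 20 * √w := hy.trans (by nlinarith)
  obtain ⟨a, b⟩ := LR_win h W hk hz (by linarith)
  refine b.trans (le_trans (Real.exp_le_exp.2 ?_) W.c6)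
  have h1 : z * yy n t k ≤ |z| * (21 / 20 * √w) := by
    refine (le_abs_self _).trans ?_
    rw [abs_mul]; gcongr
  have h2 : z ^ 2 = |z| * |z| := by rw [abs_mul_abs_self, sq]
  have h3 : |z| * (3 * √w) ≤ |z| * |z| := by gcongr
  have h4 : 3 * √w * √w ≤ |z| * √w := by gcongr
  have rr := W.rr
  nlinarith


/-- Logistic time change. -/
noncomputable def tt (s : ℝ) : ℝ := 1 / (1 + Real.exp (-2 * s))

lemma tt_pos (s : ℝ) : 0 < tt s := by unfold tt; positivity

lemma tt_eq (s : ℝ) : tt s = Real.exp s / (Real.exp s + Real.exp (-s)) := by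
  unfold tt
  rw [div_eq_div_iff (by positivity) (by positivity), one_mul, mul_add, mul_one, ← Real.exp_add]
  ring_nf

lemma one_sub_tt (s : ℝ) : 1 - tt s = Real.exp (-s) / (Real.exp s + Real.exp (-s)) := by
  rw [tt_eq]; field_simp; ring

lemma tt_lt_one (s : ℝ) : tt s < 1 := by
  have : 0 < 1 - tt s := by rw [one_sub_tt]; positivity
  linarith

lemma tt_neg (s : ℝ) : tt (-s) = 1 - tt s := by
  rw [one_sub_tt, tt_eq, neg_neg, add_comm]

lemma sg_tt (n : ℕ) (s : ℝ) : sg n (tt s) = √n / (Real.exp s + Real.exp (-s)) := by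
  unfold sg
  rw [one_sub_tt, tt_eq]
  have : (n:ℝ) * (Real.exp s / (Real.exp s + Real.exp (-s))) * (Real.exp (-s) / (Real.exp s + Real.exp (-s)))
    = n / (Real.exp s + Real.exp (-s)) ^ 2 := by
    have : Real.exp s * Real.exp (-s) = 1 := by rw [← Real.exp_add]; simp
    field_simp
    linear_combination (n:ℝ) * this
  rw [this, Real.sqrt_div (by positivity), Real.sqrt_sq (by positivity)]

lemma LR_tt {n : ℕ} (hn : 0 < n) (s z : ℝ) (k : ℕ) : LR n (tt s) z k =
    (1 + z / √n * Real.exp (-s)) ^ k * (1 - z / √n * Real.exp s) ^ (n - k) := by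
  have : (0:ℝ) < √n := by positivity
  unfold LR
  rw [sg_tt, one_sub_tt, tt_eq]
  congr 2
  · field_simp
  · field_simp

/-- conditional jump probability -/
noncomputable def qj (t t' : ℝ) : ℝ := (t' - t) / (1 - t)

/-- transition kernel -/
noncomputable def Pk (n : ℕ) (q : ℝ) (k l : ℕ) : ℝ := if k ≤ l then bpm (n - k) q (l - k) else 0

lemma Pk_sum {n k : ℕ} (hk : k ≤ n) (q : ℝ) (f : ℕ → ℝ) :
    ∑ l ∈ Finset.range (n + 1), Pk n q k l * f l =
      ∑ r ∈ Finset.range (n - k + 1), bpm (n - k) q r * f (k + r) := by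
  obtain ⟨m, rfl⟩ := Nat.exists_eq_add_of_le hk
  rw [show k + m - k = m by omega, show k + m + 1 = k + (m + 1) by ring, Finset.sum_range_add]
  have : ∑ x ∈ Finset.range k, Pk (k + m) q k x * f x = 0 := by
    refine Finset.sum_eq_zero fun x hx => ?_
    simp at hx
    simp [Pk, hx]
  rw [this, zero_add]
  refine Finset.sum_congr rfl fun r _ => ?_
  simp [Pk]

lemma Pk_nonneg {n : ℕ} {q : ℝ} (h0 : 0 ≤ q) (h1 : q ≤ 1) (k l : ℕ) : 0 ≤ Pk n q k l := by
  unfold Pk; split_ifs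
  · exact bpm_nonneg h0 h1 _
  · exact le_rfl

lemma Pk_total {n k : ℕ} (hk : k ≤ n) (q : ℝ) : ∑ l ∈ Finset.range (n + 1), Pk n q k l = 1 := by
  have := Pk_sum hk q (fun _ => 1)
  simp only [mul_one] at this
  rw [this, bpm_sum]

lemma Pk_bpm {n : ℕ} {t t' : ℝ} (h1 : t < 1) {l : ℕ} (hl : l ≤ n) :
    ∑ k ∈ Finset.range (n + 1), bpm n t k * Pk n (qj t t') k l = bpm n t' l := by
  have h2 : 0 < 1 - t := by linarith
  have e1 : (1 - t) * qj t t' = t' - t := by unfold qj; field_simp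
  have e2 : (1 - t) * (1 - qj t t') = 1 - t' := by unfold qj; field_simp; ring
  obtain ⟨m, rfl⟩ := Nat.exists_eq_add_of_le hl
  rw [show l + m + 1 = (l + 1) + m by ring, Finset.sum_range_add]
  have z : ∑ x ∈ Finset.range m, bpm (l + m) t (l + 1 + x) * Pk (l + m) (qj t t') (l + 1 + x) l = 0 := by
    refine Finset.sum_eq_zero fun x _ => ?_
    simp [Pk, show ¬ (l + 1 + x ≤ l) by omega]
  rw [z, add_zero]
  have : t' ^ l = ∑ k ∈ Finset.range (l + 1), t ^ k * (t' - t) ^ (l - k) * (l.choose k) := by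
    rw [← add_pow]; congr 1; ring
  unfold bpm at *
  rw [this, Finset.mul_sum, Finset.sum_mul]
  refine Finset.sum_congr rfl fun k hk => ?_
  have hk : k ≤ l := by simpa [Nat.lt_succ_iff] using hk
  have ch : (l + m).choose k * (l + m - k).choose (l - k) = (l + m).choose l * l.choose k := by
    rw [Nat.choose_mul hk]
  have ch' : ((l + m).choose k : ℝ) * ((l + m - k).choose (l - k) : ℝ) = (l + m).choose l * l.choose k := by
    exact_mod_cast ch
  unfold Pk bpm
  rw [if_pos hk, ← e1, ← e2, show l + m - k - (l - k) = m by omega, show l + m - l = m by omega,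
    show l + m - k = (l - k) + m by omega, pow_add, mul_pow, mul_pow]
  rw [show l + m - k = (l - k) + m by omega] at ch'
  linear_combination (t ^ k * (1 - t) ^ (l - k) * (1 - t) ^ m * qj t t' ^ (l - k) * (1 - qj t t') ^ m) * ch'

lemma qj_tt (s Δ : ℝ) : 1 - qj (tt s) (tt (s + Δ)) =
    (1 + Real.exp s ^ 2) / (1 + Real.exp s ^ 2 * Real.exp Δ ^ 2) := by
  have h := one_sub_tt s
  have h0 : 0 < 1 - tt s := by rw [h]; positivity
  have : 1 - qj (tt s) (tt (s + Δ)) = (1 - tt (s + Δ)) / (1 - tt s) := by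
    unfold qj; field_simp; ring
  rw [this, one_sub_tt, one_sub_tt]
  simp only [Real.exp_neg, Real.exp_add]
  field_simp
  ring

lemma qj_bounds {s Δ : ℝ} (h : 0 ≤ Δ) : 0 ≤ qj (tt s) (tt (s + Δ)) ∧
    qj (tt s) (tt (s + Δ)) ≤ 2 * Δ ∧ qj (tt s) (tt (s + Δ)) ≤ 1 := by
  have e := qj_tt s Δ
  have h1 : 1 ≤ Real.exp Δ ^ 2 := one_le_pow₀ (Real.one_le_exp h)
  refine ⟨?_, ?_, ?_⟩
  · have : (1 + Real.exp s ^ 2) / (1 + Real.exp s ^ 2 * Real.exp Δ ^ 2) ≤ 1 := by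
      rw [div_le_one (by positivity)]
      have : Real.exp s ^ 2 * 1 ≤ Real.exp s ^ 2 * Real.exp Δ ^ 2 := by gcongr
      linarith
    linarith
  · have : 1 - 2 * Δ ≤ (1 + Real.exp s ^ 2) / (1 + Real.exp s ^ 2 * Real.exp Δ ^ 2) := by
      have h2 : 1 - 2 * Δ ≤ (Real.exp Δ ^ 2)⁻¹ := by
        rw [← Real.exp_nat_mul, ← Real.exp_neg]
        have := Real.add_one_le_exp (-((2:ℕ) * Δ))
        push_cast at this ⊢; linarith
      refine h2.trans ?_
      rw [← one_div, div_le_div_iff₀ (by positivity) (by positivity)]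
      nlinarith [sq_nonneg (Real.exp s)]
    linarith
  · have : 0 < (1 + Real.exp s ^ 2) / (1 + Real.exp s ^ 2 * Real.exp Δ ^ 2) := by positivity
    linarith

lemma step_id {s Δ x : ℝ} : qj (tt s) (tt (s + Δ)) * (1 + x * Real.exp (-s)) +
    (1 - qj (tt s) (tt (s + Δ))) * (1 - x * (Real.exp s * Real.exp Δ ^ 2)) = 1 - x * Real.exp s := by
  have e := qj_tt s Δ
  have e2 : qj (tt s) (tt (s + Δ)) = 1 - (1 + Real.exp s ^ 2) / (1 + Real.exp s ^ 2 * Real.exp Δ ^ 2) := by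
    linarith
  rw [e, e2, Real.exp_neg]
  field_simp
  ring

lemma LR_tt' {n : ℕ} (hn : 0 < n) (s Δ z : ℝ) (k : ℕ) : LR n (tt (s + Δ)) (z * Real.exp Δ) k =
    (1 + z / √n * Real.exp (-s)) ^ k * (1 - z / √n * (Real.exp s * Real.exp Δ ^ 2)) ^ (n - k) := by
  rw [LR_tt hn, Real.exp_add, neg_add, Real.exp_add, Real.exp_neg Δ]
  congr 2
  · field_simp
  · ring

/-- Harmonicity of the likelihood ratio. -/
lemma LR_step {n : ℕ} (hn : 0 < n) (s Δ z : ℝ) {k : ℕ} (hk : k ≤ n) :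
    ∑ l ∈ Finset.range (n + 1), Pk n (qj (tt s) (tt (s + Δ))) k l *
      LR n (tt (s + Δ)) (z * Real.exp Δ) l = LR n (tt s) z k := by
  rw [Pk_sum hk]
  simp_rw [LR_tt' hn]
  rw [LR_tt hn]
  have id := step_id (s := s) (Δ := Δ) (x := z / √n)
  set q := qj (tt s) (tt (s + Δ))
  set b := 1 + z / √n * Real.exp (-s)
  set c' := 1 - z / √n * (Real.exp s * Real.exp Δ ^ 2)
  rw [← id, add_pow (q * b) ((1 - q) * c'), Finset.mul_sum]
  refine Finset.sum_congr rfl fun r hr => ?_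
  unfold bpm
  rw [show n - (k + r) = n - k - r by omega, pow_add, mul_pow, mul_pow]
  ring

/-- Shifted mixture. -/
noncomputable def Ig (n : ℕ) (w t σ δ : ℝ) (k : ℕ) : ℝ :=
  ∫ v in Real.log (1 / w)..Real.log (4 * √w), LR n t (σ * Real.exp (v - δ)) k

lemma Ip_Ig (n : ℕ) (w t : ℝ) (k : ℕ) : Ip n w t k = Ig n w t 1 0 k := by
  simp [Ip, Ig]

lemma Im_Ig (n : ℕ) (w t : ℝ) (k : ℕ) : Im n w t k = Ig n w t (-1) 0 k := by
  simp [Im, Ig]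

lemma LRs_cont (n : ℕ) (t σ δ : ℝ) (k : ℕ) : Continuous fun v => LR n t (σ * Real.exp (v - δ)) k :=
  (LR_continuous n t k).comp (by fun_prop)

lemma Ig_step {n : ℕ} (hn : 0 < n) (w s Δ σ : ℝ) {k : ℕ} (hk : k ≤ n) :
    ∑ l ∈ Finset.range (n + 1), Pk n (qj (tt s) (tt (s + Δ))) k l *
      Ig n w (tt (s + Δ)) σ 0 l = Ig n w (tt s) σ Δ k := by
  unfold Ig
  simp_rw [← intervalIntegral.integral_const_mul]
  rw [← intervalIntegral.integral_finsetSum]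
  · refine intervalIntegral.integral_congr fun v _ => ?_
    change ∑ l ∈ Finset.range (n + 1), _ = _
    rw [← LR_step hn s Δ _ hk]
    refine Finset.sum_congr rfl fun l _ => ?_
    rw [mul_assoc σ, ← Real.exp_add]
    simp
  · intro l _
    exact (continuous_const.mul (LRs_cont n _ σ 0 l)).intervalIntegrable _ _

lemma Ig_sum {n : ℕ} {t : ℝ} (h0 : 0 < t) (h1 : t < 1) (h : 0 < sg n t) (w σ δ : ℝ) :
    ∑ k ∈ Finset.range (n + 1), bpm n t k * Ig n w t σ δ k = Lw w := by
  unfold Ig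
  simp_rw [← intervalIntegral.integral_const_mul]
  rw [← intervalIntegral.integral_finsetSum]
  · simp_rw [LR_sum h0 h1 h]
    simp [Lw]
  · intro l _
    exact (continuous_const.mul (LRs_cont n t σ δ l)).intervalIntegrable _ _

lemma Ig_shift (n : ℕ) (w t σ δ : ℝ) (k : ℕ) : Ig n w t σ δ k = Ig n w t σ 0 k +
    (∫ v in (Real.log (1 / w) - δ)..Real.log (1 / w), LR n t (σ * Real.exp v) k)
    - ∫ v in (Real.log (4 * √w) - δ)..Real.log (4 * √w), LR n t (σ * Real.exp v) k := by
  have c : Continuous fun v => LR n t (σ * Real.exp v) k :=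
    (LR_continuous n t k).comp (by fun_prop)
  have ii : ∀ a b, IntervalIntegrable (fun v => LR n t (σ * Real.exp v) k) volume a b :=
    fun a b => c.intervalIntegrable a b
  unfold Ig
  rw [intervalIntegral.integral_comp_sub_right (fun v => LR n t (σ * Real.exp v) k)]
  simp only [sub_zero]
  have h1 := intervalIntegral.integral_add_adjacent_intervals
    (ii (Real.log (1 / w) - δ) (Real.log (1 / w))) (ii (Real.log (1 / w)) (Real.log (4 * √w)))
  have h2 := intervalIntegral.integral_add_adjacent_intervals
    (ii (Real.log (1 / w) - δ) (Real.log (4 * √w) - δ)) (ii (Real.log (4 * √w) - δ) (Real.log (4 * √w)))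
  linarith

lemma Ig_drift {n : ℕ} {t w η : ℝ} (h : TH n t w) (W : WH η w) {k : ℕ} (hk : k ≤ n)
    (hy : |yy n t k| ≤ (1 + η) * √w) {σ δ : ℝ} (hσ : |σ| = 1) (d0 : 0 ≤ δ) (d1 : δ ≤ 1 / 4) :
    Ig n w t σ 0 k + δ * (1 - 7 * η) ≤ Ig n w t σ δ k ∧
    Ig n w t σ δ k ≤ Ig n w t σ 0 k + δ * (1 + 6 * η) := by
  rw [Ig_shift n w t σ δ k]
  obtain ⟨b1, b2, b3, b4⟩ := h.big W
  have w0 : 0 < w := by linarith [W.w16]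
  have r4 := W.r4
  have c : Continuous fun v => LR n t (σ * Real.exp v) k :=
    (LR_continuous n t k).comp (by fun_prop)
  have ii : ∀ a b, IntervalIntegrable (fun v => LR n t (σ * Real.exp v) k) volume a b :=
    fun a b => c.intervalIntegrable a b
  have hc : ∀ C : ℝ, ∀ a : ℝ, ∫ _ in (a - δ)..a, C = δ * C := by
    intro C a; simp
  have az : ∀ v, |σ * Real.exp v| = Real.exp v := by
    intro v; rw [abs_mul, hσ, one_mul, abs_of_pos (Real.exp_pos v)]
  have s1 : ∀ v ∈ Set.Icc (Real.log (1 / w) - δ) (Real.log (1 / w)), |LR n t (σ * Real.exp v) k - 1| ≤ 6 * η := by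
    intro v hv
    refine bd_small h W hk hy ?_
    rw [az, ← Real.exp_log (show 0 < 1 / w by positivity)]
    exact Real.exp_le_exp.2 hv.2
  have s2 : ∀ v ∈ Set.Icc (Real.log (4 * √w) - δ) (Real.log (4 * √w)),
      0 ≤ LR n t (σ * Real.exp v) k ∧ LR n t (σ * Real.exp v) k ≤ η := by
    intro v hv
    have u : Real.exp v ≤ 4 * √w := by
      rw [← Real.exp_log (show 0 < 4 * √w by positivity)]; exact Real.exp_le_exp.2 hv.2
    have l : 3 * √w ≤ Real.exp v := by
      have h1 : Real.exp (Real.log (4 * √w) - δ) ≤ Real.exp v := Real.exp_le_exp.2 hv.1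
      rw [sub_eq_add_neg, Real.exp_add, Real.exp_log (by positivity)] at h1
      have := Real.add_one_le_exp (-δ)
      have : 4 * √w * (3 / 4) ≤ 4 * √w * Real.exp (-δ) := by gcongr; linarith
      linarith
    refine ⟨LR_nonneg h.t0 h.t1 b3 (by rw [az]; linarith) k, bd_large h W hk hy (by rw [az]; exact u)
      (by rw [az]; exact l)⟩
  have i1 := intervalIntegral.integral_mono_on (a := Real.log (1 / w) - δ) (b := Real.log (1 / w)) (by linarith)
    (by simp : IntervalIntegrable (fun _ => 1 - 6 * η) volume _ _) (ii _ _)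
    fun v hv => by linarith [(abs_le.1 (s1 v hv)).1]
  have i2 := intervalIntegral.integral_mono_on (a := Real.log (1 / w) - δ) (b := Real.log (1 / w)) (by linarith) (ii _ _)
    (by simp : IntervalIntegrable (fun _ => 1 + 6 * η) volume _ _)
    fun v hv => by linarith [(abs_le.1 (s1 v hv)).2]
  have i3 := intervalIntegral.integral_mono_on (a := Real.log (4 * √w) - δ) (b := Real.log (4 * √w)) (by linarith) (ii _ _)
    (by simp : IntervalIntegrable (fun _ => η) volume _ _) fun v hv => (s2 v hv).2
  have i4 := intervalIntegral.integral_nonneg (a := Real.log (4 * √w) - δ) (b := Real.log (4 * √w)) (by linarith)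
    (fun v hv => (s2 v hv).1) (μ := volume)
  rw [hc] at i1 i2 i3
  constructor <;> linarith

/-- pointwise control of a jump -/
lemma LR_jump {n : ℕ} {s Δ w η : ℝ} (h' : TH n (tt (s + Δ)) w) (W : WH η w)
    (d0 : 0 ≤ Δ) (d1 : 4 * n * Δ ≤ η) {k r : ℕ} (hk : k + r ≤ n) {z : ℝ}
    (hz : |z * Real.exp Δ| ≤ 4 * √w) :
    LR n (tt (s + Δ)) (z * Real.exp Δ) (k + r) ≤ (1 + η) ^ (r + 1) * LR n (tt s) z k := by
  obtain ⟨b1, b2, b3, b4⟩ := h'.big W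
  have b5 := h'.big2 W
  have e0 := W.e0
  have e1 := W.e1
  have r4 := W.r4
  have hn := n_pos_of_sg b3
  obtain ⟨q0, q1, q2⟩ := qj_bounds (s := s) d0
  have id := step_id (s := s) (Δ := Δ) (x := z / √n)
  have eb : 1 + z / √n * Real.exp (-s) = 1 + z * Real.exp Δ * (1 - tt (s + Δ)) / sg n (tt (s + Δ)) := by
    have : (0:ℝ) < √n := by positivity
    rw [one_sub_tt, sg_tt, neg_add, Real.exp_add (-s), Real.exp_neg Δ]; field_simp
  have ec : 1 - z / √n * (Real.exp s * Real.exp Δ ^ 2) = 1 - z * Real.exp Δ * tt (s + Δ) / sg n (tt (s + Δ)) := by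
    have : (0:ℝ) < √n := by positivity
    rw [sg_tt, tt_eq, Real.exp_add s]; field_simp
  have hb : ∀ p : ℝ, 0 ≤ p → p ≤ 1 → |z * Real.exp Δ * p / sg n (tt (s + Δ))| ≤ η / 1024 := by
    intro p p0 p1
    rw [abs_div, abs_of_pos b3, div_le_iff₀ b3, abs_mul, abs_of_nonneg p0]
    calc |z * Real.exp Δ| * p ≤ 4 * √w * 1 := by gcongr
      _ ≤ _ := by linarith
  have hb1 := abs_le.1 (hb (1 - tt (s + Δ)) (by linarith [h'.t1]) (by linarith [h'.t0]))
  have hb2 := abs_le.1 (hb (tt (s + Δ)) h'.t0.le h'.t1.le)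
  rw [LR_tt' hn, LR_tt hn, ← id]
  set q := qj (tt s) (tt (s + Δ))
  have hb0 : 0 < 1 + z / √n * Real.exp (-s) := by rw [eb]; linarith [hb1.1]
  have hc0 : 0 < 1 - z / √n * (Real.exp s * Real.exp Δ ^ 2) := by rw [ec]; linarith [hb2.2]
  have hbc : 1 + z / √n * Real.exp (-s) ≤ (1 + η) * (1 - z / √n * (Real.exp s * Real.exp Δ ^ 2)) := by
    rw [eb, ec]; nlinarith [hb1.2, hb2.2]
  set b := 1 + z / √n * Real.exp (-s)
  set c' := 1 - z / √n * (Real.exp s * Real.exp Δ ^ 2)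
  have hq1 : 1 ≤ (1 + η) * (1 - q) ^ (n - k) := by
    have hq3 : q ≤ 1 / 2 := by
      have : (1:ℝ) ≤ n := by exact_mod_cast hn
      nlinarith
    have B := one_add_mul_le_pow (a := -q) (by linarith) (n - k)
    have hnk : ((n - k : ℕ) : ℝ) * q ≤ n * (2 * Δ) := by
      gcongr; omega
    rw [← sub_eq_add_neg] at B
    nlinarith
  obtain ⟨m, hm⟩ := Nat.exists_eq_add_of_le hk
  have e3 : n - k = r + m := by omega
  have e4 : n - (k + r) = m := by omega
  rw [e4, pow_add]
  calc b ^ k * b ^ r * c' ^ m ≤ b ^ k * ((1 + η) * c') ^ r * c' ^ m := by gcongr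
    _ = (1 + η) ^ r * (b ^ k * c' ^ (n - k)) * 1 := by rw [mul_pow, e3, pow_add]; ring
    _ ≤ (1 + η) ^ r * (b ^ k * c' ^ (n - k)) * ((1 + η) * (1 - q) ^ (n - k)) := by gcongr
    _ = (1 + η) ^ (r + 1) * (b ^ k * ((1 - q) * c') ^ (n - k)) := by rw [mul_pow]; ring
    _ ≤ _ := by
        have p1 : 0 ≤ (1 - q) * c' := mul_nonneg (by linarith) hc0.le
        have p2 : 0 ≤ q * b := mul_nonneg q0 hb0.le
        have p3 : ((1 - q) * c') ^ (n - k) ≤ (q * b + (1 - q) * c') ^ (n - k) :=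
          pow_le_pow_left₀ p1 (by linarith) _
        gcongr


lemma gg_Ig (n : ℕ) (w ε t : ℝ) (k : ℕ) :
    gg n w ε t k = w * ε * (Ig n w t 1 0 k + Ig n w t (-1) 0 k) := by
  unfold gg; rw [Ip_Ig, Im_Ig]

/-- drift -/
noncomputable def dd (n : ℕ) (w ε t Δ : ℝ) (k : ℕ) : ℝ :=
  w * ε * (Ig n w t 1 Δ k + Ig n w t (-1) Δ k) - gg n w ε t k

lemma gg_step {n : ℕ} (hn : 0 < n) (w ε s Δ : ℝ) {k : ℕ} (hk : k ≤ n) :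
    ∑ l ∈ Finset.range (n + 1), Pk n (qj (tt s) (tt (s + Δ))) k l * gg n w ε (tt (s + Δ)) l =
      gg n w ε (tt s) k + dd n w ε (tt s) Δ k := by
  unfold dd
  rw [add_sub_cancel, ← Ig_step hn w s Δ 1 hk, ← Ig_step hn w s Δ (-1) hk, ← Finset.sum_add_distrib,
    Finset.mul_sum]
  refine Finset.sum_congr rfl fun l _ => ?_
  rw [gg_Ig]; ring

lemma dd_bounds {n : ℕ} {t w η ε Δ : ℝ} (h : TH n t w) (W : WH η w) (E : EH η w ε) {k : ℕ} (hk : k ≤ n)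
    (hc : nc n ε t k) (d0 : 0 ≤ Δ) (d1 : Δ ≤ 1 / 4) :
    2 * (w * ε) * Δ * (1 - 7 * η) ≤ dd n w ε t Δ k ∧ dd n w ε t Δ k ≤ 2 * (w * ε) * Δ * (1 + 6 * η) := by
  have hy := bd_yy h W E hk hc
  obtain ⟨a1, a2⟩ := Ig_drift h W hk hy (σ := 1) (by simp) d0 d1
  obtain ⟨b1, b2⟩ := Ig_drift h W hk hy (σ := -1) (by simp) d0 d1
  have hp : 0 ≤ w * ε := mul_nonneg (by linarith [W.w16]) E.pos.le
  unfold dd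
  rw [gg_Ig, ← mul_sub]
  constructor
  · calc 2 * (w * ε) * Δ * (1 - 7 * η) = w * ε * (2 * (Δ * (1 - 7 * η))) := by ring
      _ ≤ _ := by gcongr; linarith
  · calc _ ≤ w * ε * (2 * (Δ * (1 + 6 * η))) := by gcongr; linarith
      _ = _ := by ring

lemma Ig_jump {n : ℕ} {s Δ w η : ℝ} (h' : TH n (tt (s + Δ)) w) (W : WH η w)
    (d0 : 0 ≤ Δ) (d1 : 4 * n * Δ ≤ η) {k r : ℕ} (hk : k + r ≤ n) {σ : ℝ} (hσ : |σ| = 1) :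
    Ig n w (tt (s + Δ)) σ 0 (k + r) ≤ (1 + η) ^ (r + 1) * Ig n w (tt s) σ Δ k := by
  unfold Ig
  have w0 : 0 < w := by linarith [W.w16]
  have r4 := W.r4
  rw [← intervalIntegral.integral_const_mul]
  refine intervalIntegral.integral_mono_on ?_ ((LRs_cont n _ σ 0 _).intervalIntegrable _ _)
    ((continuous_const.mul (LRs_cont n _ σ Δ k)).intervalIntegrable _ _) ?_
  · refine Real.log_le_log (by positivity) ?_
    have : 1 / w ≤ 1 := by rw [div_le_one w0]; linarith [W.w16]
    linarith
  · intro v hv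
    have e : σ * Real.exp (v - 0) = σ * Real.exp (v - Δ) * Real.exp Δ := by
      rw [mul_assoc, ← Real.exp_add]; simp
    have u : Real.exp v ≤ 4 * √w := by
      rw [← Real.exp_log (show 0 < 4 * √w by positivity)]; exact Real.exp_le_exp.2 hv.2
    rw [e]
    refine LR_jump h' W d0 d1 hk ?_
    rw [← e, abs_mul, hσ, one_mul, sub_zero, abs_of_pos (Real.exp_pos v)]
    exact u

lemma jump_arith {η a c : ℝ} {r : ℕ} (e0 : 0 < η) (e1 : η ≤ 1 / 20) (ha : a ≤ 1 + 22 * η)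
    (hc : c ≤ (1 + η) ^ (r + 1) * a) :
    c - 1 ≤ 30 * η + 12 * ((2:ℝ) ^ r - 1 - r) := by
  have hc2 : c ≤ (1 + η) ^ (r + 1) * (1 + 22 * η) := hc.trans (by gcongr)
  rcases r with _ | _ | r
  · simp at hc2 ⊢; nlinarith
  · norm_num at hc2 ⊢
    have h1 : (1 + η) ^ 2 ≤ 1 + 41 / 20 * η := by nlinarith
    have h2 : (1 + η) ^ 2 * (1 + 22 * η) ≤ (1 + 41 / 20 * η) * (1 + 22 * η) := by gcongr
    nlinarith
  · have h1 : (1 + η) ^ (r + 2 + 1) ≤ (21/20) ^ 3 * 2 ^ r := by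
      rw [show r + 2 + 1 = 3 + r by ring, pow_add]
      gcongr
      · linarith
      · linarith
    have h2 : (1 + η) ^ (r + 2 + 1) * (1 + 22 * η) ≤ ((21/20) ^ 3 * 2 ^ r) * (21/10) := by
      gcongr; linarith
    have h3 : ((r:ℝ) + 1) ≤ 2 ^ r := by
      have := one_add_mul_le_pow (a := (1:ℝ)) (by norm_num) r
      norm_num at this; linarith
    have h4 : (1:ℝ) ≤ 2 ^ r := one_le_pow₀ (by norm_num)
    push_cast
    rw [show (2:ℝ) ^ (r + 1 + 1) = 4 * 2 ^ r by ring]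
    have h5 : r + 1 + 1 + 1 = r + 2 + 1 := by ring
    rw [h5] at hc2
    norm_num at h2
    nlinarith

lemma gg_jump {n : ℕ} {s Δ w η ε : ℝ} (h : TH n (tt s) w) (h' : TH n (tt (s + Δ)) w) (W : WH η w)
    (E : EH η w ε) (hwe : w * ε ≤ 1)
    (d0 : 0 ≤ Δ) (d1 : 4 * n * Δ ≤ η) {k r : ℕ} (hk : k + r ≤ n) (hc : nc n ε (tt s) k) :
    gg n w ε (tt (s + Δ)) (k + r) - 1 ≤ 30 * η + 12 * ((2:ℝ) ^ r - 1 - r) := by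
  have e0 := W.e0
  have e1 := W.e1
  obtain ⟨b1, b2, b3, b4⟩ := h.big W
  have hn := n_pos_of_sg b3
  have hn1 : (1:ℝ) ≤ n := by exact_mod_cast hn
  have dη : Δ ≤ η / 4 := by nlinarith
  have hp : 0 ≤ w * ε := mul_nonneg (by linarith [W.w16]) E.pos.le
  have hkn : k ≤ n := by omega
  refine jump_arith e0 e1 (a := gg n w ε (tt s) k + dd n w ε (tt s) Δ k) ?_ ?_
  · have h1 := bd_gg_le h W E hkn hc
    have h2 := (dd_bounds h W E hkn hc d0 (by linarith)).2
    have h3 : 2 * (w * ε) * Δ * (1 + 6 * η) ≤ 2 * 1 * (η / 4) * (1 + 6 * (1/20)) := by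
      gcongr
    linarith
  · have j1 := Ig_jump h' W d0 d1 hk (σ := 1) (by simp)
    have j2 := Ig_jump h' W d0 d1 hk (σ := -1) (by simp)
    rw [gg_Ig, show gg n w ε (tt s) k + dd n w ε (tt s) Δ k =
      w * ε * (Ig n w (tt s) 1 Δ k + Ig n w (tt s) (-1) Δ k) by unfold dd; ring]
    calc _ ≤ w * ε * ((1 + η) ^ (r + 1) * Ig n w (tt s) 1 Δ k + (1 + η) ^ (r + 1) * Ig n w (tt s) (-1) Δ k) := by
          gcongr
      _ = _ := by ring

lemma bpm_mean (m : ℕ) (q : ℝ) : ∑ r ∈ Finset.range (m + 1), bpm m q r * r = m * q := by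
  have := congrArg (Polynomial.eval q) (bernsteinPolynomial.sum_smul ℝ m)
  simp only [Polynomial.eval_finsetSum, bernsteinPolynomial, nsmul_eq_mul, Polynomial.eval_mul,
    Polynomial.eval_natCast, Polynomial.eval_pow, Polynomial.eval_X, Polynomial.eval_sub, Polynomial.eval_one] at this
  rw [← this]
  refine Finset.sum_congr rfl fun r _ => ?_
  unfold bpm; ring

lemma bpm_two (m : ℕ) (q : ℝ) : ∑ r ∈ Finset.range (m + 1), bpm m q r * 2 ^ r = (1 + q) ^ m := by
  rw [show 1 + q = 2 * q + (1 - q) by ring, add_pow]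
  refine Finset.sum_congr rfl fun r _ => ?_
  unfold bpm; rw [mul_pow]; ring

lemma bpm_err {m : ℕ} {q : ℝ} (q0 : 0 ≤ q) (hq : m * q ≤ 1) :
    ∑ r ∈ Finset.range (m + 1), bpm m q r * ((2:ℝ) ^ r - 1 - r) ≤ (m * q) ^ 2 := by
  have : ∑ r ∈ Finset.range (m + 1), bpm m q r * ((2:ℝ) ^ r - 1 - r) = (1 + q) ^ m - 1 - m * q := by
    simp_rw [mul_sub, Finset.sum_sub_distrib, mul_one, bpm_mean, bpm_two, bpm_sum]
  rw [this]
  have h1 : (1 + q) ^ m ≤ Real.exp (m * q) := by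
    rw [Real.exp_nat_mul]
    gcongr
    rw [add_comm]; exact Real.add_one_le_exp q
  have h2 := Real.abs_exp_sub_one_sub_id_le (x := m * q) (by rw [abs_of_nonneg (by positivity)]; exact hq)
  have := (abs_le.1 h2).2
  linarith

/-- One step of the killed chain. -/
noncomputable def stp (n : ℕ) (ε t t' : ℝ) (α : ℕ → ℝ) (l : ℕ) : ℝ :=
  open Classical in
  if nc n ε t' l then ∑ k ∈ Finset.range (n + 1), α k * Pk n (qj t t') k l else 0

/-- Mass. -/
noncomputable def mA (n : ℕ) (α : ℕ → ℝ) : ℝ := ∑ k ∈ Finset.range (n + 1), α k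

noncomputable def mB (n : ℕ) (w ε t : ℝ) (α : ℕ → ℝ) : ℝ :=
  ∑ k ∈ Finset.range (n + 1), α k * (1 - gg n w ε t k)

section
open Classical

lemma stp_sum {n : ℕ} {ε t t' : ℝ} {α : ℕ → ℝ} (f : ℕ → ℝ) :
    ∑ l ∈ Finset.range (n + 1), stp n ε t t' α l * f l =
    ∑ k ∈ Finset.range (n + 1), α k * (∑ l ∈ Finset.range (n + 1), Pk n (qj t t') k l * f l)
    - ∑ k ∈ Finset.range (n + 1), α k * (∑ l ∈ Finset.range (n + 1), Pk n (qj t t') k l *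
        (if nc n ε t' l then 0 else f l)) := by
  rw [← Finset.sum_sub_distrib]
  simp_rw [← mul_sub, ← Finset.sum_sub_distrib, Finset.mul_sum]
  rw [Finset.sum_comm]
  refine Finset.sum_congr rfl fun l _ => ?_
  unfold stp
  split_ifs
  · rw [Finset.sum_mul]
    refine Finset.sum_congr rfl fun k _ => ?_
    ring
  · simp

lemma stp_mass {n : ℕ} {ε t t' : ℝ} {α : ℕ → ℝ} :
    mA n α - mA n (stp n ε t t' α) = ∑ k ∈ Finset.range (n + 1), α k *
      (∑ l ∈ Finset.range (n + 1), Pk n (qj t t') k l * (if nc n ε t' l then 0 else 1)) := by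
  have := stp_sum (n := n) (ε := ε) (t := t) (t' := t') (α := α) (fun _ => 1)
  simp only [mul_one] at this
  unfold mA
  rw [this]
  have : ∑ k ∈ Finset.range (n + 1), α k * (∑ l ∈ Finset.range (n + 1), Pk n (qj t t') k l) =
      ∑ k ∈ Finset.range (n + 1), α k := by
    refine Finset.sum_congr rfl fun k hk => ?_
    rw [Pk_total (by simpa [Nat.lt_succ_iff] using hk), mul_one]
  rw [this]; ring

lemma stp_B {n : ℕ} (hn : 0 < n) {w ε s Δ : ℝ} {α : ℕ → ℝ} :
    mB n w ε (tt (s + Δ)) (stp n ε (tt s) (tt (s + Δ)) α) = mB n w ε (tt s) α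
      - ∑ k ∈ Finset.range (n + 1), α k * dd n w ε (tt s) Δ k
      + ∑ k ∈ Finset.range (n + 1), α k * (∑ l ∈ Finset.range (n + 1), Pk n (qj (tt s) (tt (s + Δ))) k l *
        (if nc n ε (tt (s + Δ)) l then 0 else gg n w ε (tt (s + Δ)) l - 1)) := by
  unfold mB
  rw [stp_sum]
  have e1 : ∀ k ∈ Finset.range (n + 1), α k * (∑ l ∈ Finset.range (n + 1), Pk n (qj (tt s) (tt (s + Δ))) k l *
      (1 - gg n w ε (tt (s + Δ)) l)) = α k * (1 - gg n w ε (tt s) k) - α k * dd n w ε (tt s) Δ k := by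
    intro k hk
    have hk : k ≤ n := by simpa [Nat.lt_succ_iff] using hk
    simp_rw [mul_sub, Finset.sum_sub_distrib, mul_one]
    rw [Pk_total hk, gg_step hn w ε s Δ hk]; ring
  rw [Finset.sum_congr rfl e1, Finset.sum_sub_distrib, sub_eq_add_neg, ← Finset.sum_neg_distrib]
  congr 1
  refine Finset.sum_congr rfl fun k _ => ?_
  rw [← mul_neg, ← Finset.sum_neg_distrib]
  congr 1
  refine Finset.sum_congr rfl fun l _ => ?_
  split_ifs <;> ring

end

/-- step hypotheses on the state -/
structure SA (n : ℕ) (ε t : ℝ) (α : ℕ → ℝ) : Prop where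
  nn : ∀ k, 0 ≤ α k
  sp : ∀ k, ¬ nc n ε t k → α k = 0

lemma stp_lower {n : ℕ} {s Δ w η ε : ℝ} {α : ℕ → ℝ} (h : TH n (tt s) w) (h' : TH n (tt (s + Δ)) w) (W : WH η w)
    (E : EH η w ε) (S : SA n ε (tt s) α)
    (d0 : 0 ≤ Δ) (d1 : 4 * n * Δ ≤ η) :
    mB n w ε (tt s) α - 2 * (w * ε) * Δ * (1 + 6 * η) * mA n α
      - 9 * η * (mA n α - mA n (stp n ε (tt s) (tt (s + Δ)) α)) ≤
      mB n w ε (tt (s + Δ)) (stp n ε (tt s) (tt (s + Δ)) α) := by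
  classical
  obtain ⟨b1, b2, b3, b4⟩ := h.big W
  have hn := n_pos_of_sg b3
  have hn1 : (1:ℝ) ≤ n := by exact_mod_cast hn
  have e0 := W.e0
  have e1 := W.e1
  have d4 : Δ ≤ 1 / 4 := by nlinarith
  obtain ⟨q0, q1, q2⟩ := qj_bounds (s := s) d0
  rw [stp_B hn, stp_mass]
  have i1 : ∑ k ∈ Finset.range (n + 1), α k * dd n w ε (tt s) Δ k ≤
      2 * (w * ε) * Δ * (1 + 6 * η) * mA n α := by
    unfold mA
    rw [Finset.mul_sum]
    refine Finset.sum_le_sum fun k hk => ?_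
    have hk : k ≤ n := by simpa [Nat.lt_succ_iff] using hk
    by_cases hc : nc n ε (tt s) k
    · rw [mul_comm]
      exact mul_le_mul_of_nonneg_right (dd_bounds h W E hk hc d0 d4).2 (S.nn k)
    · rw [S.sp k hc]; simp
  have i2 : -(9 * η * ∑ k ∈ Finset.range (n + 1), α k *
      (∑ l ∈ Finset.range (n + 1), Pk n (qj (tt s) (tt (s + Δ))) k l * (if nc n ε (tt (s + Δ)) l then 0 else 1)))
      ≤ ∑ k ∈ Finset.range (n + 1), α k * (∑ l ∈ Finset.range (n + 1), Pk n (qj (tt s) (tt (s + Δ))) k l *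
        (if nc n ε (tt (s + Δ)) l then 0 else gg n w ε (tt (s + Δ)) l - 1)) := by
    rw [← neg_mul, Finset.mul_sum]
    refine Finset.sum_le_sum fun k hk => ?_
    rw [mul_left_comm, Finset.mul_sum]
    refine mul_le_mul_of_nonneg_left (Finset.sum_le_sum fun l hl => ?_) (S.nn k)
    have hl : l ≤ n := by simpa [Nat.lt_succ_iff] using hl
    rw [mul_left_comm]
    refine mul_le_mul_of_nonneg_left ?_ (Pk_nonneg q0 q2 k l)
    split_ifs with hc
    · simp
    · linarith [bd_gg_ge h' W E hl hc]
  linarith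

lemma stp_upper {n : ℕ} {s Δ w η ε : ℝ} {α : ℕ → ℝ} (h : TH n (tt s) w) (h' : TH n (tt (s + Δ)) w) (W : WH η w)
    (E : EH η w ε) (hwe : w * ε ≤ 1) (S : SA n ε (tt s) α)
    (d0 : 0 ≤ Δ) (d1 : 4 * n * Δ ≤ η) :
      mB n w ε (tt (s + Δ)) (stp n ε (tt s) (tt (s + Δ)) α) ≤
    mB n w ε (tt s) α - 2 * (w * ε) * Δ * (1 - 7 * η) * mA n α
      + 30 * η * (mA n α - mA n (stp n ε (tt s) (tt (s + Δ)) α)) + 48 * (n * Δ) ^ 2 * mA n α := by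
  classical
  obtain ⟨b1, b2, b3, b4⟩ := h.big W
  have hn := n_pos_of_sg b3
  have hn1 : (1:ℝ) ≤ n := by exact_mod_cast hn
  have e0 := W.e0
  have e1 := W.e1
  have d4 : Δ ≤ 1 / 4 := by nlinarith
  obtain ⟨q0, q1, q2⟩ := qj_bounds (s := s) d0
  rw [stp_B hn, stp_mass]
  have i1 : 2 * (w * ε) * Δ * (1 - 7 * η) * mA n α ≤
      ∑ k ∈ Finset.range (n + 1), α k * dd n w ε (tt s) Δ k := by
    unfold mA
    rw [Finset.mul_sum]
    refine Finset.sum_le_sum fun k hk => ?_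
    have hk : k ≤ n := by simpa [Nat.lt_succ_iff] using hk
    by_cases hc : nc n ε (tt s) k
    · rw [mul_comm (α k)]
      exact mul_le_mul_of_nonneg_right (dd_bounds h W E hk hc d0 d4).1 (S.nn k)
    · rw [S.sp k hc]; simp
  have i2 : ∑ k ∈ Finset.range (n + 1), α k * (∑ l ∈ Finset.range (n + 1), Pk n (qj (tt s) (tt (s + Δ))) k l *
        (if nc n ε (tt (s + Δ)) l then 0 else gg n w ε (tt (s + Δ)) l - 1)) ≤
      30 * η * (∑ k ∈ Finset.range (n + 1), α k *
      (∑ l ∈ Finset.range (n + 1), Pk n (qj (tt s) (tt (s + Δ))) k l * (if nc n ε (tt (s + Δ)) l then 0 else 1)))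
      + 48 * (n * Δ) ^ 2 * mA n α := by
    unfold mA
    rw [Finset.mul_sum, Finset.mul_sum, ← Finset.sum_add_distrib]
    refine Finset.sum_le_sum fun k hk => ?_
    have hk : k ≤ n := by simpa [Nat.lt_succ_iff] using hk
    by_cases hc : nc n ε (tt s) k
    swap
    · rw [S.sp k hc]; simp
    rw [mul_left_comm, mul_comm _ (α k), ← mul_add]
    refine mul_le_mul_of_nonneg_left ?_ (S.nn k)
    rw [Pk_sum hk, Pk_sum hk, Finset.mul_sum]
    have er := bpm_err (m := n - k) q0 (by
      have : ((n - k : ℕ):ℝ) * qj (tt s) (tt (s + Δ)) ≤ n * (2 * Δ) := by gcongr; omega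
      linarith)
    have er2 : (((n - k : ℕ):ℝ) * qj (tt s) (tt (s + Δ))) ^ 2 ≤ (n * (2 * Δ)) ^ 2 := by
      gcongr; omega
    have : ∑ r ∈ Finset.range (n - k + 1), bpm (n - k) (qj (tt s) (tt (s + Δ))) r *
        (if nc n ε (tt (s + Δ)) (k + r) then 0 else gg n w ε (tt (s + Δ)) (k + r) - 1) ≤
        ∑ r ∈ Finset.range (n - k + 1), (30 * η * (bpm (n - k) (qj (tt s) (tt (s + Δ))) r *
          (if nc n ε (tt (s + Δ)) (k + r) then 0 else 1)) +
          12 * (bpm (n - k) (qj (tt s) (tt (s + Δ))) r * ((2:ℝ) ^ r - 1 - r))) := by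
      refine Finset.sum_le_sum fun r hr => ?_
      have hr : k + r ≤ n := by simp at hr; omega
      rw [mul_left_comm, mul_left_comm 12, ← mul_add]
      refine mul_le_mul_of_nonneg_left ?_ (bpm_nonneg q0 q2 r)
      split_ifs with hc'
      · have h3 : ((r:ℝ) + 1) ≤ 2 ^ r := by
          have := one_add_mul_le_pow (a := (1:ℝ)) (by norm_num) r
          norm_num at this; linarith
        linarith
      · linarith [gg_jump h h' W E hwe d0 d1 hr hc]
    rw [Finset.sum_add_distrib, ← Finset.mul_sum, ← Finset.mul_sum] at this
    rw [← Finset.mul_sum]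
    nlinarith
  linarith


/-- sub-distribution of the killed count chain -/
noncomputable def al (n : ℕ) (ε : ℝ) (τ : ℕ → ℝ) : ℕ → ℕ → ℝ
  | 0 => fun k => open Classical in if nc n ε (τ 0) k then bpm n (τ 0) k else 0
  | (j + 1) => stp n ε (τ j) (τ (j + 1)) (al n ε τ j)

/-- hypotheses on times -/
structure TT (m : ℕ) (τ : ℕ → ℝ) : Prop where
  p0 : ∀ j ≤ m, 0 < τ j
  p1 : ∀ j ≤ m, τ j < 1
  mo : ∀ j < m, τ j ≤ τ (j + 1)

lemma TT.qj0 {m : ℕ} {τ : ℕ → ℝ} (T : TT m τ) {j : ℕ} (hj : j < m) : 0 ≤ qj (τ j) (τ (j + 1)) :=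
  div_nonneg (by linarith [T.mo j hj]) (by linarith [T.p1 j hj.le])

lemma TT.qj1 {m : ℕ} {τ : ℕ → ℝ} (T : TT m τ) {j : ℕ} (hj : j < m) : qj (τ j) (τ (j + 1)) ≤ 1 := by
  unfold qj
  rw [div_le_one (by linarith [T.p1 j hj.le])]
  linarith [T.p1 (j + 1) hj]

lemma al_SA {n : ℕ} {ε : ℝ} {m : ℕ} {τ : ℕ → ℝ} (T : TT m τ) {j : ℕ} (hj : j ≤ m) :
    SA n ε (τ j) (al n ε τ j) := by
  induction j with
  | zero =>
    constructor
    · intro k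
      simp only [al]
      split_ifs
      · exact bpm_nonneg (T.p0 0 hj).le (T.p1 0 hj).le k
      · exact le_rfl
    · intro k hk
      simp [al, hk]
  | succ j ih =>
    have ih := ih (by omega)
    constructor
    · intro l
      simp only [al, stp]
      split_ifs
      · exact Finset.sum_nonneg fun k _ => mul_nonneg (ih.nn k) (Pk_nonneg (T.qj0 hj) (T.qj1 hj) k l)
      · exact le_rfl
    · intro l hl
      simp [al, stp, hl]

lemma al_le {n : ℕ} {ε : ℝ} {m : ℕ} {τ : ℕ → ℝ} (T : TT m τ) {j : ℕ} (hj : j ≤ m) {k : ℕ} (hk : k ≤ n) :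
    al n ε τ j k ≤ bpm n (τ j) k := by
  induction j generalizing k with
  | zero =>
    simp only [al]
    split_ifs
    · exact le_rfl
    · exact bpm_nonneg (T.p0 0 hj).le (T.p1 0 hj).le k
  | succ j ih =>
    have ih := fun k hk => @ih (by omega) k hk
    simp only [al, stp]
    split_ifs
    · rw [← Pk_bpm (t := τ j) (T.p1 j (by omega)) hk]
      refine Finset.sum_le_sum fun i hi => ?_
      refine mul_le_mul_of_nonneg_right (ih i ?_) (Pk_nonneg (T.qj0 hj) (T.qj1 hj) _ _)
      simpa [Nat.lt_succ_iff] using hi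
    · exact bpm_nonneg (T.p0 _ hj).le (T.p1 _ hj).le k

lemma mA_le {n : ℕ} {ε : ℝ} {m : ℕ} {τ : ℕ → ℝ} (T : TT m τ) {j : ℕ} (hj : j ≤ m) :
    mA n (al n ε τ j) ≤ 1 := by
  rw [← bpm_sum n (τ j)]
  exact Finset.sum_le_sum fun k hk => al_le T hj (by simpa [Nat.lt_succ_iff] using hk)

lemma mA_nonneg {n : ℕ} {ε : ℝ} {m : ℕ} {τ : ℕ → ℝ} (T : TT m τ) {j : ℕ} (hj : j ≤ m) :
    0 ≤ mA n (al n ε τ j) :=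
  Finset.sum_nonneg fun k _ => (al_SA T hj).nn k

lemma mB_bounds {n : ℕ} {ε w η : ℝ} {m : ℕ} {τ : ℕ → ℝ} (T : TT m τ) {j : ℕ} (hj : j ≤ m)
    (h : TH n (τ j) w) (W : WH η w) (E : EH η w ε) :
    mB n w ε (τ j) (al n ε τ j) ≤ mA n (al n ε τ j) ∧
    mA n (al n ε τ j) - 2 * (w * ε) * Lw w ≤ mB n w ε (τ j) (al n ε τ j) := by
  have e : mB n w ε (τ j) (al n ε τ j) = mA n (al n ε τ j) -
      ∑ k ∈ Finset.range (n + 1), al n ε τ j k * gg n w ε (τ j) k := by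
    unfold mB mA
    rw [← Finset.sum_sub_distrib]
    refine Finset.sum_congr rfl fun k _ => by ring
  have b3 := (h.big W).2.2.1
  have n1 : 0 ≤ ∑ k ∈ Finset.range (n + 1), al n ε τ j k * gg n w ε (τ j) k :=
    Finset.sum_nonneg fun k hk => mul_nonneg ((al_SA T hj).nn k)
      (gg_nonneg h W E.pos.le (by simpa [Nat.lt_succ_iff] using hk)).2.2
  have n2 : ∑ k ∈ Finset.range (n + 1), al n ε τ j k * gg n w ε (τ j) k ≤ 2 * (w * ε) * Lw w := by
    calc _ ≤ ∑ k ∈ Finset.range (n + 1), bpm n (τ j) k * gg n w ε (τ j) k := by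
          refine Finset.sum_le_sum fun k hk => ?_
          have hk : k ≤ n := by simpa [Nat.lt_succ_iff] using hk
          exact mul_le_mul_of_nonneg_right (al_le T hj hk) (gg_nonneg h W E.pos.le hk).2.2
      _ = w * ε * (∑ k ∈ Finset.range (n + 1), bpm n (τ j) k * Ig n w (τ j) 1 0 k
            + ∑ k ∈ Finset.range (n + 1), bpm n (τ j) k * Ig n w (τ j) (-1) 0 k) := by
          rw [← Finset.sum_add_distrib, Finset.mul_sum]
          refine Finset.sum_congr rfl fun k _ => ?_
          rw [gg_Ig]; ring
      _ = _ := by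
          rw [Ig_sum h.t0 h.t1 b3, Ig_sum h.t0 h.t1 b3]; ring
      _ ≤ _ := le_rfl
  constructor <;> linarith

lemma upT_crossing {n : ℕ} {t ε : ℝ} (h0 : 0 ≤ t) (h1 : t ≤ 1) (he : 0 ≤ ε) :
    ∑ k ∈ (Finset.range (n + 1)).filter (fun k => upT n t k < ε), bpm n t k ≤ ε := by
  set s := (Finset.range (n + 1)).filter (fun k => upT n t k < ε) with hs
  rcases s.eq_empty_or_nonempty with h | h
  · rw [h]; simpa using he
  · have hm := s.min'_mem h
    replace hm := Finset.mem_filter.1 hm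
    refine le_trans ?_ hm.2.le
    unfold upT
    refine Finset.sum_le_sum_of_subset_of_nonneg ?_ fun k _ _ => bpm_nonneg h0 h1 k
    intro k hk
    have := s.min'_le k hk
    rw [hs, Finset.mem_filter, Finset.mem_range] at hk
    rw [Finset.mem_Icc]; exact ⟨this, by omega⟩

lemma loT_crossing {n : ℕ} {t ε : ℝ} (h0 : 0 ≤ t) (h1 : t ≤ 1) (he : 0 ≤ ε) :
    ∑ k ∈ (Finset.range (n + 1)).filter (fun k => loT n t k < ε), bpm n t k ≤ ε := by
  set s := (Finset.range (n + 1)).filter (fun k => loT n t k < ε) with hs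
  rcases s.eq_empty_or_nonempty with h | h
  · rw [h]; simpa using he
  · have hm := s.max'_mem h
    replace hm := Finset.mem_filter.1 hm
    refine le_trans ?_ hm.2.le
    unfold loT
    refine Finset.sum_le_sum_of_subset_of_nonneg ?_ fun k _ _ => bpm_nonneg h0 h1 k
    intro k hk
    have := s.le_max' k hk
    rw [Finset.mem_range]; omega

lemma mA_zero {n : ℕ} {ε : ℝ} {m : ℕ} {τ : ℕ → ℝ} (T : TT m τ) (he : 0 ≤ ε) :
    1 - 2 * ε ≤ mA n (al n ε τ 0) := by
  classical
  have p0 := (T.p0 0 (by omega)).le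
  have p1 := (T.p1 0 (by omega)).le
  have a := upT_crossing (n := n) p0 p1 he
  have b := loT_crossing (n := n) p0 p1 he
  rw [Finset.sum_filter] at a b
  rw [← bpm_sum n (τ 0)]
  have : ∑ k ∈ Finset.range (n + 1), bpm n (τ 0) k ≤
      mA n (al n ε τ 0) + (∑ k ∈ Finset.range (n + 1), (if upT n (τ 0) k < ε then bpm n (τ 0) k else 0)
      + ∑ k ∈ Finset.range (n + 1), (if loT n (τ 0) k < ε then bpm n (τ 0) k else 0)) := by
    unfold mA
    rw [← Finset.sum_add_distrib, ← Finset.sum_add_distrib]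
    refine Finset.sum_le_sum fun k _ => ?_
    have := bpm_nonneg (n := n) p0 p1 k
    simp only [al]
    by_cases h1 : upT n (τ 0) k < ε <;> by_cases h2 : loT n (τ 0) k < ε
    · have : ¬ nc n ε (τ 0) k := fun h => absurd h.1 (not_le.2 h1)
      simp [*]
    · have : ¬ nc n ε (τ 0) k := fun h => absurd h.1 (not_le.2 h1)
      simp [*]
    · have : ¬ nc n ε (τ 0) k := fun h => absurd h.2 (not_le.2 h2)
      simp [*]
    · have : nc n ε (τ 0) k := ⟨not_lt.1 h1, not_lt.1 h2⟩
      simp [*]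
  linarith

/-- Times on the logistic scale. -/
noncomputable def tj (s0 Δ : ℝ) (j : ℕ) : ℝ := tt (s0 + j * Δ)

lemma tj_succ (s0 Δ : ℝ) (j : ℕ) : tj s0 Δ (j + 1) = tt (s0 + j * Δ + Δ) := by
  unfold tj; push_cast; ring_nf

lemma tt_mono {s s' : ℝ} (h : s ≤ s') : tt s ≤ tt s' := by
  unfold tt
  gcongr 1 / (1 + Real.exp ?_)
  linarith

lemma tj_TT (m : ℕ) {s0 Δ : ℝ} (d0 : 0 ≤ Δ) : TT m (tj s0 Δ) :=
  ⟨fun _ _ => tt_pos _, fun _ _ => tt_lt_one _, fun j _ => by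
    rw [tj_succ]; exact tt_mono (by linarith)⟩

lemma gron_lower {η c γ A B A' B' : ℝ} (e0 : 0 < η) (e1 : η ≤ 1 / 20) (c0 : 0 ≤ c)
    (h1 : A - γ ≤ B) (h2 : B - c * A - 9 * η * (A - A') ≤ B') :
    (1 - c / (1 - 9 * η)) * (B - 9 * η * A + γ) ≤ B' - 9 * η * A' + γ := by
  have p : 0 < 1 - 9 * η := by linarith
  have h3 : A ≤ (B - 9 * η * A + γ) / (1 - 9 * η) := by
    rw [le_div_iff₀ p]; linarith
  have h4 : c * A ≤ c * ((B - 9 * η * A + γ) / (1 - 9 * η)) := by gcongr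
  have : c / (1 - 9 * η) * (B - 9 * η * A + γ) = c * ((B - 9 * η * A + γ) / (1 - 9 * η)) := by ring
  linarith

lemma gron_upper {η c A B A' B' e : ℝ} (e0 : 0 < η) (c0 : 0 ≤ c)
    (h1 : B ≤ A) (h2 : B' ≤ B - c * A + 30 * η * (A - A') + e) :
    B' + 30 * η * A' ≤ (1 - c / (1 + 30 * η)) * (B + 30 * η * A) + e := by
  have p : 0 < 1 + 30 * η := by linarith
  have h3 : (B + 30 * η * A) / (1 + 30 * η) ≤ A := by
    rw [div_le_iff₀ p]; linarith
  have h4 : c * ((B + 30 * η * A) / (1 + 30 * η)) ≤ c * A := by gcongr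
  have : c / (1 + 30 * η) * (B + 30 * η * A) = c * ((B + 30 * η * A) / (1 + 30 * η)) := by ring
  linarith

lemma gron_arith {ρ X e E y : ℝ} {j : ℕ} (r0 : 0 ≤ ρ) (r1 : ρ ≤ 1) (he : 0 ≤ e) (hj : (0:ℝ) ≤ j)
    (h : X ≤ ρ ^ j * y + j * e) (hE : E ≤ e) : ρ * X + E ≤ ρ ^ (j + 1) * y + (j + 1) * e := by
  have h1 := mul_le_mul_of_nonneg_left h r0
  have h2 : ρ * (j * e) ≤ 1 * (j * e) := by gcongr
  rw [pow_succ']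
  linarith

/-- Lower bound for survival. -/
lemma surv_lower {n m : ℕ} {s0 Δ w η ε : ℝ} (h : ∀ j ≤ m, TH n (tj s0 Δ j) w) (W : WH η w)
    (E : EH η w ε) (d0 : 0 ≤ Δ) (d1 : 4 * n * Δ ≤ η)
    (hc : 2 * (w * ε) * Δ * (1 + 6 * η) / (1 - 9 * η) ≤ 1) :
    (1 - 2 * (w * ε) * Δ * (1 + 6 * η) / (1 - 9 * η)) ^ m * ((1 - 9 * η) * (1 - 2 * ε))
      - 2 * (w * ε) * Lw w ≤ mA n (al n ε (tj s0 Δ) m) := by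
  have T := tj_TT m (s0 := s0) d0
  have e0 := W.e0
  have e1 := W.e1
  have hp : 0 ≤ w * ε := mul_nonneg (by linarith [W.w16]) E.pos.le
  have key : ∀ j ≤ m, (1 - 2 * (w * ε) * Δ * (1 + 6 * η) / (1 - 9 * η)) ^ j * ((1 - 9 * η) * (1 - 2 * ε)) ≤
      mB n w ε (tj s0 Δ j) (al n ε (tj s0 Δ) j) - 9 * η * mA n (al n ε (tj s0 Δ) j) + 2 * (w * ε) * Lw w := by
    intro j
    induction j with
    | zero =>
      intro hj
      have := (mB_bounds T hj (h 0 hj) W E).2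
      have h0 := mA_zero (n := n) T E.pos.le
      rw [pow_zero, one_mul]
      nlinarith
    | succ j ih =>
      intro hj
      have ih := ih (by omega)
      have h2 := (mB_bounds T (show j ≤ m by omega) (h j (by omega)) W E).2
      have hj' := h (j + 1) hj
      rw [tj_succ] at hj'
      have st := stp_lower (h j (by omega)) hj' W E (al_SA T (show j ≤ m by omega)) d0 d1
      rw [← tj_succ] at st
      have g := gron_lower e0 e1 (c := 2 * (w * ε) * Δ * (1 + 6 * η)) (by positivity) h2 st
      refine le_trans ?_ g
      rw [pow_succ', mul_assoc]
      exact mul_le_mul_of_nonneg_left ih (by linarith)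
  have k := key m le_rfl
  have := (mB_bounds T le_rfl (h m le_rfl) W E).1
  have a0 := mA_nonneg (n := n) (ε := ε) T le_rfl
  nlinarith

lemma surv_upper {n m : ℕ} {s0 Δ w η ε : ℝ} (h : ∀ j ≤ m, TH n (tj s0 Δ j) w) (W : WH η w)
    (E : EH η w ε) (hwe : w * ε ≤ 1) (d0 : 0 ≤ Δ) (d1 : 4 * n * Δ ≤ η)
    (hc : 2 * (w * ε) * Δ * (1 - 7 * η) / (1 + 30 * η) ≤ 1) :
    mA n (al n ε (tj s0 Δ) m) ≤ (1 - 2 * (w * ε) * Δ * (1 - 7 * η) / (1 + 30 * η)) ^ m * (1 + 30 * η)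
      + m * (48 * (n * Δ) ^ 2) + 2 * (w * ε) * Lw w := by
  have T := tj_TT m (s0 := s0) d0
  have e0 := W.e0
  have e1 := W.e1
  have hp : 0 ≤ w * ε := mul_nonneg (by linarith [W.w16]) E.pos.le
  have e7 : 0 ≤ 1 - 7 * η := by linarith
  have c0 : 0 ≤ 2 * (w * ε) * Δ * (1 - 7 * η) := by positivity
  have c1 : 0 ≤ 2 * (w * ε) * Δ * (1 - 7 * η) / (1 + 30 * η) := by positivity
  have key : ∀ j ≤ m, mB n w ε (tj s0 Δ j) (al n ε (tj s0 Δ) j) + 30 * η * mA n (al n ε (tj s0 Δ) j) ≤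
      (1 - 2 * (w * ε) * Δ * (1 - 7 * η) / (1 + 30 * η)) ^ j * (1 + 30 * η) + j * (48 * (n * Δ) ^ 2) := by
    intro j
    induction j with
    | zero =>
      intro hj
      have := (mB_bounds T hj (h 0 hj) W E).1
      have h0 := mA_le (n := n) (ε := ε) T hj
      rw [pow_zero, one_mul]
      push_cast
      nlinarith
    | succ j ih =>
      intro hj
      have ih := ih (by omega)
      have h2 := (mB_bounds T (show j ≤ m by omega) (h j (by omega)) W E).1
      have hj' := h (j + 1) hj
      rw [tj_succ] at hj'
      have st := stp_upper (h j (by omega)) hj' W E hwe (al_SA T (show j ≤ m by omega)) d0 d1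
      rw [← tj_succ] at st
      have g := gron_upper e0 c0 h2 st
      refine g.trans ?_
      have h0 := mA_le (n := n) (ε := ε) T (show j ≤ m by omega)
      have i1 : 48 * (n * Δ) ^ 2 * mA n (al n ε (tj s0 Δ) j) ≤ 48 * (n * Δ) ^ 2 * 1 := by gcongr
      push_cast
      rw [mul_one] at i1
      exact gron_arith (sub_nonneg.2 hc) (by linarith) (by positivity) (by positivity) ih i1
  have k := key m le_rfl
  have := (mB_bounds T le_rfl (h m le_rfl) W E).2
  have a0 := mA_nonneg (n := n) (ε := ε) T le_rfl
  have : 0 ≤ 30 * η * mA n (al n ε (tj s0 Δ) m) := by positivity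
  linarith


lemma ms_forall {α ι : Type*} [MeasurableSpace α] [Countable ι] {p : ι → α → Prop}
    (h : ∀ i, MeasurableSet {u | p i u}) : MeasurableSet {u | ∀ i, p i u} := by
  have : {u | ∀ i, p i u} = ⋂ i, {u | p i u} := by ext u; simp
  rw [this]; exact MeasurableSet.iInter h

lemma ms_forall2 {α ι : Type*} [MeasurableSpace α] [Countable ι] {P : ι → Prop} {p : ι → α → Prop}
    (h : ∀ i, P i → MeasurableSet {u | p i u}) : MeasurableSet {u | ∀ i, P i → p i u} :=
  ms_forall fun i => by
    by_cases hi : P i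
    · simpa [hi] using h i hi
    · simp [hi]

/-- uniform measure -/
noncomputable def nu : Measure ℝ := volume.restrict (Set.Icc (0:ℝ) 1)

instance nu_prob : IsProbabilityMeasure nu := ⟨by simp [nu]⟩

lemma nullMeasure_eq (n : ℕ) : nullMeasure n = Measure.pi fun _ : Fin n => nu := rfl

instance null_prob (n : ℕ) : IsProbabilityMeasure (nullMeasure n) := by
  rw [nullMeasure_eq]; infer_instance

lemma nu_Ioi {t : ℝ} (h0 : 0 ≤ t) (h1 : t ≤ 1) : nu.real (Set.Ioi t) = 1 - t := by
  unfold nu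
  rw [measureReal_restrict_apply measurableSet_Ioi]
  have : Set.Ioi t ∩ Set.Icc 0 1 = Set.Ioc t 1 := by
    ext y; simp only [Set.mem_inter_iff, Set.mem_Ioi, Set.mem_Icc, Set.mem_Ioc]
    exact ⟨fun h => ⟨h.1, h.2.2⟩, fun h => ⟨h.1, by linarith [h.1], h.2⟩⟩
  rw [this]; simp [h1]

lemma nu_Ioc {t t' : ℝ} (h0 : 0 ≤ t) (h : t ≤ t') (h1 : t' ≤ 1) : nu.real (Set.Ioc t t') = t' - t := by
  unfold nu
  rw [measureReal_restrict_apply measurableSet_Ioc]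
  have : Set.Ioc t t' ∩ Set.Icc 0 1 = Set.Ioc t t' := by
    ext y; simp only [Set.mem_inter_iff, Set.mem_Icc, Set.mem_Ioc]
    exact ⟨fun h => h.1, fun h => ⟨h, by linarith [h.1], by linarith [h.2]⟩⟩
  rw [this]; simp [h]

lemma nu_Iic {t : ℝ} (h0 : 0 ≤ t) (h1 : t ≤ 1) : nu.real (Set.Iic t) = t := by
  unfold nu
  rw [measureReal_restrict_apply measurableSet_Iic]
  have : Set.Iic t ∩ Set.Icc 0 1 = Set.Icc 0 t := by
    ext y; simp only [Set.mem_inter_iff, Set.mem_Icc, Set.mem_Iic]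
    exact ⟨fun h => ⟨h.2.1, h.1⟩, fun h => ⟨h.2, h.1, by linarith [h.2]⟩⟩
  rw [this]; simp [h0]

lemma box_measure {n : ℕ} (S : Finset (Fin n)) (B : Fin n → Set ℝ) :
    (nullMeasure n).real {u | ∀ i ∈ S, u i ∈ B i} = ∏ i ∈ S, nu.real (B i) := by
  classical
  have : {u : Fin n → ℝ | ∀ i ∈ S, u i ∈ B i} = Set.pi Set.univ fun i => if i ∈ S then B i else Set.univ := by
    ext u
    simp only [Set.mem_ofPred_eq, Set.mem_pi, Set.mem_univ, true_imp_iff]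
    refine forall_congr' fun i => ?_
    split_ifs with h <;> simp [h]
  rw [this, measureReal_def, nullMeasure_eq, Measure.pi_pi, ENNReal.toReal_prod]
  rw [← Finset.prod_subset (Finset.subset_univ S)]
  · refine Finset.prod_congr rfl fun i hi => ?_
    rw [if_pos hi]; rfl
  · intro i _ hi
    rw [if_neg hi]; simp

lemma indep_box {n : ℕ} (S : Finset (Fin n)) {F : Set (Fin n → ℝ)} (mF : MeasurableSet F)
    (hF : ∀ u u' : Fin n → ℝ, (∀ i ∈ S, u i = u' i) → u ∈ F → u' ∈ F)
    (B : Fin n → Set ℝ) (mB : ∀ i, MeasurableSet (B i)) :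
    (nullMeasure n).real (F ∩ {u | ∀ i ∈ Sᶜ, u i ∈ B i}) =
      (nullMeasure n).real F * ∏ i ∈ Sᶜ, nu.real (B i) := by
  classical
  have ind : ProbabilityTheory.iIndepFun (fun (i : Fin n) (u : Fin n → ℝ) => u i) (nullMeasure n) := by
    rw [nullMeasure_eq]
    exact ProbabilityTheory.iIndepFun_pi (μ := fun _ : Fin n => nu) (X := fun _ => id)
      (fun i => aemeasurable_id)
  have i2 := ind.indepFun_finset S Sᶜ disjoint_compl_right (fun i => measurable_pi_apply i)
  set F' : Set (S → ℝ) := {v | (fun i => if h : i ∈ S then v ⟨i, h⟩ else 0) ∈ F} with hF'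
  have mF' : MeasurableSet F' := by
    have : Measurable (fun (v : S → ℝ) (i : Fin n) => if h : i ∈ S then v ⟨i, h⟩ else 0) := by
      refine measurable_pi_lambda _ fun i => ?_
      by_cases h : i ∈ S
      · simp only [h, dite_true]; exact measurable_pi_apply _
      · simp only [h, dite_false]; exact measurable_const
    exact this mF
  set G' : Set ((Sᶜ : Finset (Fin n)) → ℝ) := Set.pi Set.univ fun i => B i.1 with hG'
  have mG' : MeasurableSet G' := MeasurableSet.univ_pi fun i => mB i.1
  have := i2.measure_inter_preimage_eq_mul F' G' mF' mG'
  have eF : (fun (u : Fin n → ℝ) (i : S) => u i) ⁻¹' F' = F := by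
    ext u
    simp only [hF', Set.mem_preimage, Set.mem_ofPred_eq]
    constructor
    · exact hF _ _ fun i hi => by simp [hi]
    · exact hF _ _ fun i hi => by simp [hi]
  have eG : (fun (u : Fin n → ℝ) (i : (Sᶜ : Finset (Fin n))) => u i) ⁻¹' G' = {u | ∀ i ∈ Sᶜ, u i ∈ B i} := by
    ext u
    simp [hG', Set.mem_pi]
  rw [eF, eG] at this
  rw [measureReal_def, this, ENNReal.toReal_mul, ← box_measure]
  rfl

/-- indices at most `t` -/
noncomputable def stf {n : ℕ} (u : Fin n → ℝ) (t : ℝ) : Finset (Fin n) := Finset.univ.filter (fun i => u i ≤ t)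

lemma card_meas {n : ℕ} (S : Finset (Fin n)) (t : ℝ) :
    Measurable fun u : Fin n → ℝ => (S.filter (fun i => u i ≤ t)).card := by
  simp_rw [Finset.card_filter]
  refine Finset.measurable_sum _ fun i _ => ?_
  exact Measurable.ite (measurableSet_le (measurable_pi_apply i) measurable_const) measurable_const measurable_const

/-- the good event with prescribed set -/
def Ev (n : ℕ) (ε : ℝ) (τ : ℕ → ℝ) (j : ℕ) (S : Finset (Fin n)) : Set (Fin n → ℝ) :=
  {u | stf u (τ j) = S ∧ ∀ i ≤ j, nc n ε (τ i) (stf u (τ i)).card}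

def Fv (n : ℕ) (ε : ℝ) (τ : ℕ → ℝ) (j : ℕ) (S : Finset (Fin n)) : Set (Fin n → ℝ) :=
  {u | (∀ i ∈ S, u i ≤ τ j) ∧ ∀ i ≤ j, nc n ε (τ i) (S.filter (fun a => u a ≤ τ i)).card}

lemma Fv_meas (n : ℕ) (ε : ℝ) (τ : ℕ → ℝ) (j : ℕ) (S : Finset (Fin n)) : MeasurableSet (Fv n ε τ j S) := by
  have : Fv n ε τ j S = {u | ∀ i ∈ S, u i ≤ τ j} ∩
      {u | ∀ i ≤ j, nc n ε (τ i) (S.filter (fun a => u a ≤ τ i)).card} := by ext u; simp [Fv]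
  rw [this]
  refine MeasurableSet.inter ?_ ?_
  · exact ms_forall2 fun i _ => measurableSet_le (measurable_pi_apply i) measurable_const
  · refine ms_forall2 fun i _ => ?_
    exact card_meas S (τ i) (MeasurableSet.of_discrete (s := {k | nc n ε (τ i) k}))

lemma Fv_dep (n : ℕ) (ε : ℝ) (τ : ℕ → ℝ) (j : ℕ) (S : Finset (Fin n)) (u u' : Fin n → ℝ)
    (h : ∀ i ∈ S, u i = u' i) (hu : u ∈ Fv n ε τ j S) : u' ∈ Fv n ε τ j S := by
  refine ⟨fun i hi => by rw [← h i hi]; exact hu.1 i hi, fun i hi => ?_⟩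
  have := hu.2 i hi
  rwa [Finset.filter_congr (fun a ha => by rw [h a ha])] at this

lemma TT.mono {m : ℕ} {τ : ℕ → ℝ} (T : TT m τ) {i j : ℕ} (hij : i ≤ j) (hj : j ≤ m) : τ i ≤ τ j := by
  induction j, hij using Nat.le_induction with
  | base => exact le_rfl
  | succ j _ ih => exact (ih (by omega)).trans (T.mo j (by omega))

lemma stf_mem_Fv {n : ℕ} {ε : ℝ} {m : ℕ} {τ : ℕ → ℝ} (T : TT m τ) {j : ℕ} (hj : j ≤ m) (u : Fin n → ℝ) :
    u ∈ Fv n ε τ j (stf u (τ j)) ↔ ∀ i ≤ j, nc n ε (τ i) (stf u (τ i)).card := by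
  have e : ∀ i ≤ j, (stf u (τ j)).filter (fun a => u a ≤ τ i) = stf u (τ i) := by
    intro i hi
    have := T.mono hi hj
    ext a
    simp only [stf, Finset.mem_filter, Finset.mem_univ, true_and]
    exact ⟨fun h => h.2, fun h => ⟨h.trans this, h⟩⟩
  constructor
  · intro h i hi
    rw [← e i hi]; exact h.2 i hi
  · intro h
    refine ⟨fun i hi => by simpa [stf] using hi, fun i hi => ?_⟩
    rw [e i hi]; exact h i hi

lemma stf_eq_iff {n : ℕ} (u : Fin n → ℝ) (t : ℝ) (S : Finset (Fin n)) :
    stf u t = S ↔ (∀ i ∈ S, u i ≤ t) ∧ ∀ i ∈ Sᶜ, t < u i := by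
  constructor
  · rintro rfl
    simp [stf]
  · rintro ⟨h1, h2⟩
    ext i
    simp only [stf, Finset.mem_filter, Finset.mem_univ, true_and]
    constructor
    · intro h
      by_contra hi
      exact absurd h (not_le.2 (h2 i (by simpa using hi)))
    · exact h1 i

lemma Ev_eq {n : ℕ} {ε : ℝ} {m : ℕ} {τ : ℕ → ℝ} (T : TT m τ) {j : ℕ} (hj : j ≤ m) (S : Finset (Fin n)) :
    Ev n ε τ j S = Fv n ε τ j S ∩ {u | ∀ i ∈ Sᶜ, u i ∈ Set.Ioi (τ j)} := by
  ext u
  simp only [Ev, Set.mem_inter_iff, Set.mem_ofPred_eq, Set.mem_Ioi]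
  constructor
  · rintro ⟨rfl, h⟩
    exact ⟨(stf_mem_Fv T hj u).2 h, ((stf_eq_iff u _ _).1 rfl).2⟩
  · rintro ⟨h1, h2⟩
    have e := (stf_eq_iff u (τ j) S).2 ⟨h1.1, h2⟩
    refine ⟨e, ?_⟩
    rw [← e] at h1
    exact (stf_mem_Fv T hj u).1 h1

lemma Ev_meas {n : ℕ} {ε : ℝ} {m : ℕ} {τ : ℕ → ℝ} (T : TT m τ) {j : ℕ} (hj : j ≤ m) (S : Finset (Fin n)) :
    MeasurableSet (Ev n ε τ j S) := by
  rw [Ev_eq T hj]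
  refine (Fv_meas _ _ _ _ _).inter ?_
  exact ms_forall2 fun i _ => measurableSet_lt measurable_const (measurable_pi_apply i)

lemma Ev_measure {n : ℕ} {ε : ℝ} {m : ℕ} {τ : ℕ → ℝ} (T : TT m τ) {j : ℕ} (hj : j ≤ m) (S : Finset (Fin n)) :
    (nullMeasure n).real (Ev n ε τ j S) = (nullMeasure n).real (Fv n ε τ j S) * (1 - τ j) ^ (n - S.card) := by
  rw [Ev_eq T hj, indep_box S (Fv_meas _ _ _ _ _) (Fv_dep _ _ _ _ _) (fun _ => Set.Ioi (τ j))
    (fun _ => measurableSet_Ioi)]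
  rw [Finset.prod_const, nu_Ioi (T.p0 j hj).le (T.p1 j hj).le, Finset.card_compl, Fintype.card_fin]

lemma Ev_zero {n : ℕ} {ε : ℝ} {m : ℕ} {τ : ℕ → ℝ} (T : TT m τ) (S : Finset (Fin n)) :
    (nullMeasure n).real (Ev n ε τ 0 S) = open Classical in
      if nc n ε (τ 0) S.card then (τ 0) ^ S.card * (1 - τ 0) ^ (n - S.card) else 0 := by
  rw [Ev_measure T (Nat.zero_le _)]
  split_ifs with h
  · congr 1
    have : Fv n ε τ 0 S = {u | ∀ i ∈ S, u i ∈ Set.Iic (τ 0)} := by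
      ext u
      simp only [Fv, Set.mem_ofPred_eq, Set.mem_Iic]
      refine ⟨fun h => h.1, fun hu => ⟨hu, fun i hi => ?_⟩⟩
      obtain rfl : i = 0 := by omega
      rw [Finset.filter_true_of_mem hu]; exact h
    rw [this, box_measure, Finset.prod_const, nu_Iic (T.p0 0 (Nat.zero_le _)).le (T.p1 0 (Nat.zero_le _)).le]
  · have : Fv n ε τ 0 S = ∅ := by
      ext u
      simp only [Fv, Set.mem_ofPred_eq, Set.mem_empty_iff_false, iff_false]
      rintro ⟨hu, hu2⟩
      have := hu2 0 le_rfl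
      rw [Finset.filter_true_of_mem hu] at this
      exact h this
    rw [this]; simp

/-- transition event -/
def Gv (n : ℕ) (ε : ℝ) (τ : ℕ → ℝ) (j : ℕ) (S S' : Finset (Fin n)) : Set (Fin n → ℝ) :=
  {u | stf u (τ (j + 1)) = S' ∧ u ∈ Ev n ε τ j S}

lemma Gv_eq {n : ℕ} {ε : ℝ} {m : ℕ} {τ : ℕ → ℝ} (T : TT m τ) {j : ℕ} (hj : j < m) {S S' : Finset (Fin n)}
    (hS : S ⊆ S') : Gv n ε τ j S S' = Fv n ε τ j S ∩
      {u | ∀ i ∈ Sᶜ, u i ∈ if i ∈ S' then Set.Ioc (τ j) (τ (j + 1)) else Set.Ioi (τ (j + 1))} := by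
  have mo := T.mo j hj
  ext u
  simp only [Gv, Ev_eq T hj.le, Set.mem_inter_iff, Set.mem_ofPred_eq, stf_eq_iff]
  constructor
  · rintro ⟨⟨h1, h2⟩, h3, h4⟩
    refine ⟨h3, fun i hi => ?_⟩
    split_ifs with hi'
    · exact ⟨h4 i hi, h1 i hi'⟩
    · exact h2 i (by simpa using hi')
  · rintro ⟨h3, h4⟩
    refine ⟨⟨fun i hi => ?_, fun i hi => ?_⟩, h3, fun i hi => ?_⟩
    · by_cases hiS : i ∈ S
      · exact (h3.1 i hiS).trans mo
      · have := h4 i (by simpa using hiS)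
        rw [if_pos hi] at this; exact this.2
    · have hi : i ∉ S' := by simpa using hi
      have := h4 i (by simpa using fun h => hi (hS h))
      rwa [if_neg hi] at this
    · have := h4 i hi
      split_ifs at this
      · exact this.1
      · exact lt_of_le_of_lt mo this

lemma ite_mem_meas {p : Prop} [Decidable p] {a b : Set ℝ} (ha : MeasurableSet a) (hb : MeasurableSet b) :
    MeasurableSet (if p then a else b) := by split_ifs <;> assumption

lemma Gv_meas {n : ℕ} {ε : ℝ} {m : ℕ} {τ : ℕ → ℝ} (T : TT m τ) {j : ℕ} (hj : j < m) {S S' : Finset (Fin n)}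
    (hS : S ⊆ S') : MeasurableSet (Gv n ε τ j S S') := by
  rw [Gv_eq T hj hS]
  refine (Fv_meas _ _ _ _ _).inter ?_
  exact ms_forall2 fun i _ => measurable_pi_apply i
    (ite_mem_meas (p := i ∈ S') (a := Set.Ioc (τ j) (τ (j + 1))) (b := Set.Ioi (τ (j + 1)))
      measurableSet_Ioc measurableSet_Ioi)

lemma Gv_measure {n : ℕ} {ε : ℝ} {m : ℕ} {τ : ℕ → ℝ} (T : TT m τ) {j : ℕ} (hj : j < m) {S S' : Finset (Fin n)}
    (hS : S ⊆ S') : (nullMeasure n).real (Gv n ε τ j S S') = (nullMeasure n).real (Ev n ε τ j S) *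
      (qj (τ j) (τ (j + 1)) ^ (S'.card - S.card) * (1 - qj (τ j) (τ (j + 1))) ^ (n - S'.card)) := by
  have p0 := T.p0 j hj.le
  have p1 := T.p1 (j + 1) hj
  have p2 := T.p1 j hj.le
  have mo := T.mo j hj
  have h2 : 0 < 1 - τ j := by linarith
  rw [Gv_eq T hj hS, indep_box S (Fv_meas _ _ _ _ _) (Fv_dep _ _ _ _ _) _
    (fun _ => ite_mem_meas measurableSet_Ioc measurableSet_Ioi), Ev_measure T hj.le, mul_assoc]
  congr 1
  have e : ∀ i ∈ Sᶜ, nu.real (if i ∈ S' then Set.Ioc (τ j) (τ (j + 1)) else Set.Ioi (τ (j + 1))) =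
      if i ∈ S' then τ (j + 1) - τ j else 1 - τ (j + 1) := by
    intro i _
    split_ifs
    · exact nu_Ioc p0.le mo p1.le
    · exact nu_Ioi (by linarith) p1.le
  rw [Finset.prod_congr rfl e, Finset.prod_ite, Finset.prod_const, Finset.prod_const]
  have c1 : (Finset.filter (fun i => i ∈ S') Sᶜ).card = S'.card - S.card := by
    rw [← Finset.card_sdiff_of_subset hS]
    congr 1; ext i; simp [and_comm]
  have c2 : (Finset.filter (fun i => i ∉ S') Sᶜ).card = n - S'.card := by
    have hcc : S'ᶜ.card = n - S'.card := by rw [Finset.card_compl, Fintype.card_fin]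
    rw [← hcc]
    congr 1; ext i; simp only [Finset.mem_filter, Finset.mem_compl]
    exact ⟨fun h => h.2, fun h => ⟨fun h' => h (hS h'), h⟩⟩
  have hc := Finset.card_le_card hS
  have hc' : S'.card ≤ n := by simpa using Finset.card_le_univ S'
  rw [c1, c2, show n - S.card = (S'.card - S.card) + (n - S'.card) by omega, pow_add]
  have e1 : (1 - τ j) * qj (τ j) (τ (j + 1)) = τ (j + 1) - τ j := by unfold qj; field_simp
  have e2 : (1 - τ j) * (1 - qj (τ j) (τ (j + 1))) = 1 - τ (j + 1) := by unfold qj; field_simp; ring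
  rw [← e1, ← e2, mul_pow, mul_pow]; ring

lemma stf_mono {n : ℕ} (u : Fin n → ℝ) {t t' : ℝ} (h : t ≤ t') : stf u t ⊆ stf u t' := by
  intro i hi
  simp only [stf, Finset.mem_filter, Finset.mem_univ, true_and] at hi ⊢
  exact hi.trans h

lemma Ev_succ {n : ℕ} {ε : ℝ} {m : ℕ} {τ : ℕ → ℝ} (T : TT m τ) {j : ℕ} (hj : j < m) (S' : Finset (Fin n)) :
    (nullMeasure n).real (Ev n ε τ (j + 1) S') = open Classical in
      if nc n ε (τ (j + 1)) S'.card then ∑ S ∈ S'.powerset, (nullMeasure n).real (Ev n ε τ j S) *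
      (qj (τ j) (τ (j + 1)) ^ (S'.card - S.card) * (1 - qj (τ j) (τ (j + 1))) ^ (n - S'.card)) else 0 := by
  split_ifs with h
  · have : Ev n ε τ (j + 1) S' = ⋃ S ∈ S'.powerset, Gv n ε τ j S S' := by
      ext u
      simp only [Ev, Gv, Set.mem_ofPred_eq, Set.mem_iUnion, Finset.mem_powerset, exists_prop]
      constructor
      · rintro ⟨rfl, hu⟩
        exact ⟨stf u (τ j), stf_mono u (T.mo j hj), rfl, rfl, fun i hi => hu i (by omega)⟩
      · rintro ⟨S, hS, rfl, rfl, hu⟩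
        refine ⟨rfl, fun i hi => ?_⟩
        rcases Nat.lt_or_eq_of_le hi with hi | rfl
        · exact hu i (by omega)
        · exact h
    rw [this, measureReal_biUnion_finset]
    · refine Finset.sum_congr rfl fun S hS => ?_
      exact Gv_measure T hj (Finset.mem_powerset.1 hS)
    · intro S _ R _ hne
      refine Set.disjoint_left.2 fun u hu hu' => hne ?_
      rw [← hu.2.1, ← hu'.2.1]
    · exact fun S hS => Gv_meas T hj (Finset.mem_powerset.1 hS)
  · have : Ev n ε τ (j + 1) S' = ∅ := by
      ext u
      simp only [Ev, Set.mem_ofPred_eq, Set.mem_empty_iff_false, iff_false]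
      rintro ⟨rfl, hu⟩
      exact h (hu _ le_rfl)
    rw [this]; simp

lemma Ev_al {n : ℕ} {ε : ℝ} {m : ℕ} {τ : ℕ → ℝ} (T : TT m τ) {j : ℕ} (hj : j ≤ m) (S : Finset (Fin n)) :
    (nullMeasure n).real (Ev n ε τ j S) * n.choose S.card = al n ε τ j S.card := by
  classical
  induction j generalizing S with
  | zero =>
    rw [Ev_zero T]
    simp only [al, bpm]
    split_ifs <;> ring
  | succ j ih =>
    have ih := fun S => ih (by omega) S
    rw [Ev_succ T hj]
    have hS : S.card ≤ n := by simpa using Finset.card_le_univ S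
    have cp : ∀ k ≤ n, (0:ℝ) < n.choose k := fun k hk => by exact_mod_cast Nat.choose_pos hk
    have ih' : ∀ R : Finset (Fin n), (nullMeasure n).real (Ev n ε τ j R) = al n ε τ j R.card / n.choose R.card := by
      intro R
      rw [eq_div_iff (cp _ (by simpa using Finset.card_le_univ R)).ne', ih]
    simp only [al, stp]
    split_ifs
    swap
    · simp
    simp_rw [ih']
    rw [Finset.sum_powerset_apply_card (fun k => al n ε τ j k / n.choose k *
      (qj (τ j) (τ (j + 1)) ^ (S.card - k) * (1 - qj (τ j) (τ (j + 1))) ^ (n - S.card)))]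
    obtain ⟨p, hp⟩ := Nat.exists_eq_add_of_le hS
    rw [show Finset.range (n + 1) = Finset.range (S.card + 1 + p) by congr 1; omega, Finset.sum_range_add _ (S.card + 1) p]
    have z : ∑ x ∈ Finset.range p, al n ε τ j (S.card + 1 + x) * Pk n (qj (τ j) (τ (j + 1))) (S.card + 1 + x) S.card = 0 := by
      refine Finset.sum_eq_zero fun x _ => ?_
      simp [Pk, show ¬ (S.card + 1 + x ≤ S.card) by omega]
    rw [z, add_zero, Finset.sum_mul]
    refine Finset.sum_congr rfl fun k hk => ?_
    have hk : k ≤ S.card := by simpa [Nat.lt_succ_iff] using hk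
    have ch : n.choose k * (n - k).choose (S.card - k) = n.choose S.card * S.card.choose k := by
      rw [Nat.choose_mul hk]
    have ch' : (n.choose k : ℝ) * ((n - k).choose (S.card - k) : ℝ) = n.choose S.card * S.card.choose k := by
      exact_mod_cast ch
    have ck := (cp k (by omega)).ne'
    unfold Pk bpm
    rw [if_pos hk, show n - k - (S.card - k) = n - S.card by omega, nsmul_eq_mul]
    field_simp
    linear_combination (-al n ε τ j k * qj (τ j) (τ (j + 1)) ^ (S.card - k) * (1 - qj (τ j) (τ (j + 1))) ^ (n - S.card)) * ch'

theorem surv_eq {n : ℕ} {ε : ℝ} {m : ℕ} {τ : ℕ → ℝ} (T : TT m τ) :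
    (nullMeasure n).real {u | ∀ i ≤ m, nc n ε (τ i) (stf u (τ i)).card} = mA n (al n ε τ m) ∧
    MeasurableSet {u : Fin n → ℝ | ∀ i ≤ m, nc n ε (τ i) (stf u (τ i)).card} := by
  classical
  have : {u : Fin n → ℝ | ∀ i ≤ m, nc n ε (τ i) (stf u (τ i)).card} = ⋃ S ∈ (Finset.univ : Finset (Fin n)).powerset, Ev n ε τ m S := by
    ext u
    simp [Ev]
  rw [this]
  refine ⟨?_, Finset.measurableSet_biUnion _ fun S _ => Ev_meas T le_rfl S⟩
  rw [measureReal_biUnion_finset]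
  · have cp : ∀ k ≤ n, (0:ℝ) < n.choose k := fun k hk => by exact_mod_cast Nat.choose_pos hk
    have ih' : ∀ R : Finset (Fin n), (nullMeasure n).real (Ev n ε τ m R) = al n ε τ m R.card / n.choose R.card := by
      intro R
      rw [eq_div_iff (cp _ (by simpa using Finset.card_le_univ R)).ne', Ev_al T le_rfl]
    simp_rw [ih']
    rw [Finset.sum_powerset_apply_card (fun k => al n ε τ m k / n.choose k)]
    rw [Finset.card_univ, Fintype.card_fin]
    unfold mA
    refine Finset.sum_congr rfl fun k hk => ?_
    have := (cp k (by simpa [Nat.lt_succ_iff] using hk)).ne'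
    rw [nsmul_eq_mul]; field_simp
  · intro S _ R _ hne
    refine Set.disjoint_left.2 fun u hu hu' => hne ?_
    rw [← hu.1, ← hu'.1]
  · exact fun S _ => Ev_meas T le_rfl S


lemma regInc_eq {n : ℕ} (i : Fin n) {x : ℝ} (h0 : 0 ≤ x) (h1 : x ≤ 1) :
    regIncBeta ((i : ℕ) + 1 : ℝ) ((n : ℝ) - (i : ℕ)) x = upT n x (i + 1) := by
  obtain ⟨N, rfl⟩ : ∃ N, n = N + 1 := ⟨n - 1, by have := i.2; omega⟩
  have hi : (i : ℕ) ≤ N := by have := i.2; omega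
  obtain ⟨p, hp⟩ := Nat.exists_eq_add_of_le hi
  generalize (i : ℕ) = k at *
  subst hp
  rw [← upT_integral (k + p) k hi x, intervalIntegral.integral_of_le h0]
  unfold regIncBeta
  refine setIntegral_congr_fun measurableSet_Ioc fun t ht => ?_
  have e1 : ((k + p + 1 : ℕ):ℝ) - k = (p:ℝ) + 1 := by push_cast; ring
  simp only [betaPDF]
  rw [e1, show (k:ℝ) + 1 + (p + 1) = ((k + p + 1 : ℕ) : ℝ) + 1 by push_cast; ring,
    Real.Gamma_nat_eq_factorial, Real.Gamma_nat_eq_factorial, Real.Gamma_nat_eq_factorial,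
    add_sub_cancel_right, add_sub_cancel_right, Real.rpow_natCast, Real.rpow_natCast]
  unfold bpm
  have hf : ((k + p).choose k : ℝ) * k.factorial * p.factorial = (k + p).factorial := by
    have := Nat.add_choose_mul_factorial_mul_factorial k p
    rw [Nat.choose_symm_add]
    exact_mod_cast this
  rw [Nat.factorial_succ, show k + p - k = p by omega]
  have f1 : (k.factorial : ℝ) ≠ 0 := by positivity
  have f2 : (p.factorial : ℝ) ≠ 0 := by positivity
  have f3 : ((k + p).factorial : ℝ) ≠ 0 := by positivity
  push_cast
  rw [← hf]
  field_simp

/-- the cube -/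
def cube (n : ℕ) : Set (Fin n → ℝ) := {u | ∀ i, u i ∈ Set.Icc (0:ℝ) 1}

lemma cube_compl (n : ℕ) : (nullMeasure n).real (cube n)ᶜ = 0 := by
  have hm : MeasurableSet (cube n) := ms_forall fun i => measurable_pi_apply i measurableSet_Icc
  rw [probReal_compl_eq_one_sub hm]
  have := box_measure (n := n) Finset.univ (fun _ => Set.Icc (0:ℝ) 1)
  have e : {u : Fin n → ℝ | ∀ i ∈ Finset.univ, u i ∈ Set.Icc (0:ℝ) 1} = cube n := by
    ext u; simp [cube]
  rw [e] at this
  rw [this]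
  have : nu.real (Set.Icc (0:ℝ) 1) = 1 := by simp [nu, measureReal_def]
  simp [this]

lemma orderStat_le_iff {n : ℕ} (u : Fin n → ℝ) (i : Fin n) (t : ℝ) :
    orderStat u i ≤ t ↔ (i:ℕ) < (stf u t).card := by
  have h := Tuple.lt_card_le_iff_apply_le_of_monotone (j := i) (a := t) (Tuple.monotone_sort u)
  unfold orderStat
  rw [← Function.comp_apply (f := u), ← h]
  have : (stf u t).card = (Finset.univ.filter (fun i => (u ∘ Tuple.sort u) i ≤ t)).card := by
    unfold stf
    refine (Finset.card_equiv (Tuple.sort u) fun i => ?_).symm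
    simp
  rw [this]

lemma orderStat_mem {n : ℕ} {u : Fin n → ℝ} (hu : u ∈ cube n) (i : Fin n) :
    0 ≤ orderStat u i ∧ orderStat u i ≤ 1 := hu _

lemma pOrd_eq {n : ℕ} {u : Fin n → ℝ} (hu : u ∈ cube n) (i : Fin n) :
    pOrd u i = upT n (orderStat u i) (i + 1) :=
  regInc_eq i (orderStat_mem hu i).1 (orderStat_mem hu i).2

lemma one_sub_pOrd {n : ℕ} {u : Fin n → ℝ} (hu : u ∈ cube n) (i : Fin n) :
    1 - pOrd u i = loT n (orderStat u i) i := by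
  rw [pOrd_eq hu]
  have := upT_add_loT (n := n) (orderStat u i) (k := i) i.2.le
  linarith

lemma Mn_lt_iff {n : ℕ} (hn : 0 < n) {u : Fin n → ℝ} (hu : u ∈ cube n) (ε : ℝ) :
    Mn u < ε ↔ ∃ i : Fin n, upT n (orderStat u i) (i + 1) < ε ∨ loT n (orderStat u i) i < ε := by
  have : Nonempty (Fin n) := ⟨⟨0, hn⟩⟩
  unfold Mn MnPlus MnMinus
  rw [min_lt_iff, ciInf_lt_iff (Set.finite_range _).bddBelow, ciInf_lt_iff (Set.finite_range _).bddBelow,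
    ← exists_or]
  refine exists_congr fun i => ?_
  rw [one_sub_pOrd hu, pOrd_eq hu]

lemma loT_full (n : ℕ) (t : ℝ) : loT n t n = 1 := by
  unfold loT; exact bpm_sum n t

lemma stf_card_le {n : ℕ} (u : Fin n → ℝ) (t : ℝ) : (stf u t).card ≤ n := by
  simpa using Finset.card_le_univ (stf u t)

lemma cross_imp {n : ℕ} (hn : 0 < n) {u : Fin n → ℝ} (hu : u ∈ cube n) {ε t : ℝ} (he : ε ≤ 1)
    (h0 : 0 ≤ t) (h1 : t ≤ 1) (h : ¬ nc n ε t (stf u t).card) : Mn u < ε := by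
  rw [Mn_lt_iff hn hu]
  have hle := stf_card_le u t
  unfold nc at h
  rw [not_and_or, not_le, not_le] at h
  rcases h with h | h
  · have hp : 0 < (stf u t).card := by
      by_contra hp
      have : (stf u t).card = 0 := by omega
      rw [this, upT_zero] at h; linarith
    refine ⟨⟨(stf u t).card - 1, by omega⟩, Or.inl ?_⟩
    have e : (stf u t).card - 1 + 1 = (stf u t).card := by omega
    simp only [e]
    refine lt_of_le_of_lt (upT_mono_p (orderStat_mem hu _).1 ?_ h1 ) h
    rw [orderStat_le_iff]; simp only; omega
  · have hp : (stf u t).card < n := by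
      by_contra hp
      have : (stf u t).card = n := by omega
      rw [this, loT_full] at h; linarith
    refine ⟨⟨(stf u t).card, hp⟩, Or.inr ?_⟩
    refine lt_of_le_of_lt (loT_anti_p (by omega) h0 ?_ (orderStat_mem hu _).2) h
    have := (orderStat_le_iff u ⟨(stf u t).card, hp⟩ t).not
    simp only [lt_irrefl, not_false_iff, iff_true, not_le] at this
    exact this.le

lemma Mn_lower {n : ℕ} (hn : 0 < n) {ε : ℝ} (he : ε ≤ 1) {m : ℕ} {τ : ℕ → ℝ} (T : TT m τ) :
    1 - mA n (al n ε τ m) ≤ (nullMeasure n).real {u | Mn u < ε} := by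
  obtain ⟨h1, h2⟩ := surv_eq (n := n) (ε := ε) T
  rw [← h1, ← probReal_compl_eq_one_sub h2]
  have : {u : Fin n → ℝ | ∀ i ≤ m, nc n ε (τ i) (stf u (τ i)).card}ᶜ ⊆ {u | Mn u < ε} ∪ (cube n)ᶜ := by
    intro u hu
    by_cases hc : u ∈ cube n
    · left
      simp only [Set.mem_compl_iff, Set.mem_ofPred_eq, not_forall] at hu
      obtain ⟨i, hi, hu⟩ := hu
      exact cross_imp hn hc he (T.p0 i hi).le (T.p1 i hi).le hu
    · right; exact hc
  have := (measureReal_mono (μ := nullMeasure n) this (measure_ne_top _ _)).trans (measureReal_union_le _ _)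
  rw [cube_compl] at this
  linarith

lemma upT_ratio {n : ℕ} {t t' : ℝ} (h0 : 0 < t) (h : t ≤ t') (h1 : t' ≤ 1) (k : ℕ) :
    upT n t' k ≤ (t' / t) ^ n * upT n t k := by
  unfold upT
  rw [Finset.mul_sum]
  refine Finset.sum_le_sum fun l hl => ?_
  have hl : l ≤ n := (Finset.mem_Icc.1 hl).2
  unfold bpm
  have r1 : 1 ≤ t' / t := by rw [le_div_iff₀ h0]; linarith
  have a : t' ^ l ≤ (t' / t) ^ n * t ^ l := by
    calc t' ^ l = (t' / t) ^ l * t ^ l := by rw [← mul_pow, div_mul_cancel₀ _ h0.ne']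
      _ ≤ _ := by gcongr
  have b : (1 - t') ^ (n - l) ≤ (1 - t) ^ (n - l) := by
    gcongr
  have t0' : 0 < t' := by linarith
  calc (n.choose l : ℝ) * t' ^ l * (1 - t') ^ (n - l) ≤ (n.choose l : ℝ) * ((t' / t) ^ n * t ^ l) * (1 - t) ^ (n - l) := by
        have : 0 ≤ (1 - t') ^ (n - l) := pow_nonneg (by linarith) _
        gcongr
    _ = _ := by ring

lemma loT_ratio {n : ℕ} {t t' : ℝ} (h0 : 0 ≤ t) (h : t ≤ t') (h1 : t' < 1) {k : ℕ} (hk : k ≤ n) :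
    loT n t k ≤ ((1 - t) / (1 - t')) ^ n * loT n t' k := by
  rw [← upT_refl t hk, ← upT_refl t' hk]
  exact upT_ratio (by linarith) (by linarith) (by linarith) _

lemma tt_ratio {s Δ : ℝ} (d : 0 ≤ Δ) : tt (s + Δ) / tt s ≤ Real.exp (2 * Δ) := by
  rw [div_le_iff₀ (tt_pos s)]
  unfold tt
  rw [← mul_div_assoc, mul_one, div_le_div_iff₀ (by positivity) (by positivity), one_mul, mul_add (Real.exp (2 * Δ)), mul_one, ← Real.exp_add,
    show 2 * Δ + -2 * (s + Δ) = -2 * s by ring]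
  have := Real.one_le_exp (show 0 ≤ 2 * Δ by linarith)
  linarith

lemma tt_ratio' {s Δ : ℝ} (d : 0 ≤ Δ) : (1 - tt s) / (1 - tt (s + Δ)) ≤ Real.exp (2 * Δ) := by
  rw [← tt_neg, ← tt_neg]
  have := tt_ratio (s := -(s + Δ)) d
  rwa [show -(s + Δ) + Δ = -s by ring] at this

lemma Mn_imp {n : ℕ} (hn : 0 < n) {u : Fin n → ℝ} (hu : u ∈ cube n) {ε s0 Δ : ℝ} (d0 : 0 ≤ Δ)
    (m K : ℕ) (h : Mn u < ε)
    (h1 : (stf u (tj s0 Δ 0)).card ≤ K) (h2 : n - (stf u (tj s0 Δ m)).card ≤ K)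
    (h3 : ∀ i : Fin n, (i:ℕ) < K ∨ n ≤ i + K → ε ≤ upT n (orderStat u i) (i + 1) ∧ ε ≤ loT n (orderStat u i) i) :
    ∃ j ≤ m, ¬ nc n (Real.exp (2 * Δ) ^ n * ε) (tj s0 Δ j) (stf u (tj s0 Δ j)).card := by
  rw [Mn_lt_iff hn hu] at h
  obtain ⟨i, hi⟩ := h
  have hK : ¬ ((i:ℕ) < K ∨ n ≤ i + K) := by
    intro hK
    have := h3 i hK
    rcases hi with hi | hi <;> linarith [this.1, this.2]
  have a0 : ¬ orderStat u i ≤ tj s0 Δ 0 := by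
    rw [orderStat_le_iff]; omega
  have am : orderStat u i ≤ tj s0 Δ m := by
    rw [orderStat_le_iff]; omega
  classical
  have ex : ∃ j, orderStat u i ≤ tj s0 Δ j := ⟨m, am⟩
  have hj := Nat.find_spec ex
  have hmin := fun k => Nat.find_min ex (m := k)
  have hjm : Nat.find ex ≤ m := Nat.find_min' ex am
  generalize Nat.find ex = j at *
  obtain ⟨j, rfl⟩ : ∃ j', j = j' + 1 := ⟨j - 1, by
    rcases j with _ | j
    · exact absurd hj a0
    · rfl⟩
  have hlt := not_le.1 (hmin j (by omega))
  have tp := tt_pos (s0 + j * Δ)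
  have tl := tt_lt_one (s0 + j * Δ + Δ)
  have up0 := (orderStat_mem hu i).1
  have up1 := (orderStat_mem hu i).2
  rcases hi with hi | hi
  · refine ⟨j + 1, hjm, fun hc => ?_⟩
    have c1 := hc.1
    have hcount := (orderStat_le_iff u i _).1 hj
    have b1 : upT n (tj s0 Δ (j + 1)) (stf u (tj s0 Δ (j + 1))).card ≤ upT n (tj s0 Δ (j + 1)) (i + 1) :=
      upT_anti (tt_pos _).le (tt_lt_one _).le (by omega)
    have b2 := upT_ratio (n := n) (lt_trans tp hlt) hj (tt_lt_one _).le (i + 1)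
    have b3 : tj s0 Δ (j + 1) / orderStat u i ≤ Real.exp (2 * Δ) := by
      refine le_trans ?_ (tt_ratio (s := s0 + j * Δ) d0)
      rw [← tj_succ]
      have : tt (s0 + j * Δ) ≤ orderStat u i := hlt.le
      have := tt_pos (s0 + (j + 1 : ℕ) * Δ)
      unfold tj
      gcongr
    have b4 : 0 < orderStat u i := lt_trans tp hlt
    have b5 : (tj s0 Δ (j + 1) / orderStat u i) ^ n * upT n (orderStat u i) (i + 1) <
        Real.exp (2 * Δ) ^ n * ε := by
      have : 0 ≤ upT n (orderStat u i) (i + 1) := upT_nonneg up0 up1 _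
      have : 0 ≤ tj s0 Δ (j + 1) / orderStat u i := div_nonneg (tt_pos _).le up0
      calc _ ≤ Real.exp (2 * Δ) ^ n * upT n (orderStat u i) (i + 1) := by gcongr
        _ < _ := by gcongr
    linarith
  · refine ⟨j, by omega, fun hc => ?_⟩
    have c1 := hc.2
    have hcount := (orderStat_le_iff u i _).not.1 (not_le.2 hlt)
    have lt1 : orderStat u i < 1 := lt_of_le_of_lt hj (tt_lt_one _)
    have b1 : loT n (tj s0 Δ j) (stf u (tj s0 Δ j)).card ≤ loT n (tj s0 Δ j) i :=
      loT_mono (tt_pos _).le (tt_lt_one _).le (by omega)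
    have b2 := loT_ratio (n := n) (tt_pos (s0 + j * Δ)).le hlt.le lt1 (k := i) i.2.le
    have b3 : (1 - tj s0 Δ j) / (1 - orderStat u i) ≤ Real.exp (2 * Δ) := by
      refine le_trans ?_ (tt_ratio' (s := s0 + j * Δ) d0)
      rw [← tj_succ]
      have : 0 < 1 - tj s0 Δ (j + 1) := by linarith [tt_lt_one (s0 + (j + 1 : ℕ) * Δ), show tj s0 Δ (j + 1) = tt (s0 + (j + 1 : ℕ) * Δ) from rfl]
      have : 0 < 1 - tt (s0 + j * Δ) := by linarith [tt_lt_one (s0 + j * Δ)]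
      change (1 - tt (s0 + j * Δ)) / _ ≤ _
      gcongr
    have b5 : ((1 - tj s0 Δ j) / (1 - orderStat u i)) ^ n * loT n (orderStat u i) i <
        Real.exp (2 * Δ) ^ n * ε := by
      have : 0 ≤ loT n (orderStat u i) i := loT_nonneg up0 up1 _
      have : 0 ≤ (1 - tj s0 Δ j) / (1 - orderStat u i) := div_nonneg (by linarith [tt_lt_one (s0 + j * Δ), show tj s0 Δ j = tt (s0 + j * Δ) from rfl]) (by linarith)
      calc _ ≤ Real.exp (2 * Δ) ^ n * loT n (orderStat u i) i := by gcongr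
        _ < _ := by gcongr
    change loT n (tj s0 Δ j) i ≤ _ at b2
    have : tj s0 Δ j = tt (s0 + j * Δ) := rfl
    rw [← this] at b2
    linarith


lemma stf_law {n : ℕ} {t : ℝ} (h0 : 0 ≤ t) (h1 : t ≤ 1) (S : Finset (Fin n)) :
    (nullMeasure n).real {u | stf u t = S} = t ^ S.card * (1 - t) ^ (n - S.card) := by
  have e : {u : Fin n → ℝ | stf u t = S} = {u | ∀ i ∈ Finset.univ, u i ∈ if i ∈ S then Set.Iic t else Set.Ioi t} := by
    ext u
    simp only [Set.mem_ofPred_eq, stf_eq_iff, Finset.mem_univ, true_imp_iff, Finset.mem_compl]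
    constructor
    · rintro ⟨a, b⟩ i
      split_ifs with h
      · exact a i h
      · exact b i h
    · intro h
      refine ⟨fun i hi => ?_, fun i hi => ?_⟩
      · have := h i; rwa [if_pos hi] at this
      · have := h i; rwa [if_neg hi] at this
  rw [e, box_measure]
  have e2 : ∀ i ∈ Finset.univ, nu.real (if i ∈ S then Set.Iic t else Set.Ioi t) = if i ∈ S then t else 1 - t := by
    intro i _
    split_ifs
    · exact nu_Iic h0 h1
    · exact nu_Ioi h0 h1
  rw [Finset.prod_congr rfl e2, Finset.prod_ite, Finset.prod_const, Finset.prod_const]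
  congr 2
  · congr 1; ext i; simp
  · have hcc : Sᶜ.card = n - S.card := by rw [Finset.card_compl, Fintype.card_fin]
    rw [← hcc]
    congr 1; ext i; simp

lemma count_law {n : ℕ} {t : ℝ} (h0 : 0 ≤ t) (h1 : t ≤ 1) (P : ℕ → Prop) [DecidablePred P] :
    (nullMeasure n).real {u | P (stf u t).card} ≤ ∑ k ∈ Finset.range (n + 1), if P k then bpm n t k else 0 := by
  classical
  have e : {u : Fin n → ℝ | P (stf u t).card} ⊆ ⋃ S ∈ (Finset.univ : Finset (Fin n)).powerset.filter (fun S => P S.card),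
      {u | stf u t = S} := by
    intro u hu
    simp only [Set.mem_ofPred_eq] at hu
    simp [hu]
  refine (measureReal_mono (μ := nullMeasure n) e (measure_ne_top _ _)).trans ?_
  refine (measureReal_biUnion_finset_le _ _).trans ?_
  simp_rw [stf_law h0 h1]
  rw [Finset.sum_filter, Finset.sum_powerset_apply_card (fun k => if P k then t ^ k * (1 - t) ^ (n - k) else 0)]
  rw [Finset.card_univ, Fintype.card_fin]
  refine Finset.sum_le_sum fun k _ => ?_
  split_ifs
  · unfold bpm; rw [nsmul_eq_mul, mul_assoc]
  · simp

lemma count_ge {n : ℕ} {t : ℝ} (h0 : 0 ≤ t) (h1 : t ≤ 1) (k : ℕ) :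
    (nullMeasure n).real {u | k ≤ (stf u t).card} ≤ upT n t k := by
  refine (count_law h0 h1 (fun l => k ≤ l)).trans ?_
  rw [← Finset.sum_filter]
  unfold upT
  refine Finset.sum_le_sum_of_subset_of_nonneg ?_ fun l _ _ => bpm_nonneg h0 h1 l
  intro l hl
  simp at hl ⊢; omega

lemma count_le {n : ℕ} {t : ℝ} (h0 : 0 ≤ t) (h1 : t ≤ 1) (k : ℕ) :
    (nullMeasure n).real {u | (stf u t).card ≤ k} ≤ loT n t k := by
  refine (count_law h0 h1 (fun l => l ≤ k)).trans ?_
  rw [← Finset.sum_filter]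
  unfold loT
  refine Finset.sum_le_sum_of_subset_of_nonneg ?_ fun l _ _ => bpm_nonneg h0 h1 l
  intro l hl
  simp at hl ⊢; omega

lemma count_mk {n : ℕ} {t : ℝ} (h0 : 0 ≤ t) (h1 : t ≤ 1) {K : ℕ} (hK : 0 < K) :
    (nullMeasure n).real {u | ¬ (stf u t).card ≤ K} ≤ n * t / K := by
  refine (count_law h0 h1 (fun l => ¬ l ≤ K)).trans ?_
  have hK' : (0:ℝ) < K := by exact_mod_cast hK
  rw [le_div_iff₀ hK', ← bpm_mean, Finset.sum_mul]
  refine Finset.sum_le_sum fun k _ => ?_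
  have b := bpm_nonneg (n := n) h0 h1 k
  split_ifs with h
  · rw [zero_mul]; positivity
  · gcongr; omega

lemma count_mk' {n : ℕ} {t : ℝ} (h0 : 0 ≤ t) (h1 : t ≤ 1) {K : ℕ} (hK : 0 < K) :
    (nullMeasure n).real {u | ¬ n - (stf u t).card ≤ K} ≤ n * (1 - t) / K := by
  refine (count_law h0 h1 (fun l => ¬ n - l ≤ K)).trans ?_
  have hK' : (0:ℝ) < K := by exact_mod_cast hK
  have e : (n:ℝ) * (1 - t) = ∑ k ∈ Finset.range (n + 1), bpm n t k * (n - k) := by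
    simp_rw [mul_sub, Finset.sum_sub_distrib, bpm_mean, ← Finset.sum_mul, bpm_sum]; ring
  rw [le_div_iff₀ hK', e, Finset.sum_mul]
  refine Finset.sum_le_sum fun k hk => ?_
  have hk : k ≤ n := by simpa [Nat.lt_succ_iff] using hk
  have b := bpm_nonneg (n := n) h0 h1 k
  rw [← Nat.cast_sub hk]
  split_ifs with h
  · rw [zero_mul]; positivity
  · gcongr; omega

lemma upT_at_zero {n k : ℕ} : upT n 0 (k + 1) = 0 := by
  unfold upT
  refine Finset.sum_eq_zero fun l hl => ?_
  have := (Finset.mem_Icc.1 hl).1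
  unfold bpm
  rw [zero_pow (by omega)]; ring

lemma exists_quant {n : ℕ} (i : Fin n) {ε : ℝ} (e0 : 0 ≤ ε) (e1 : ε ≤ 1) :
    ∃ x, 0 ≤ x ∧ x ≤ 1 ∧ upT n x (i + 1) = ε := by
  have hi := i.2
  have h1 : upT n 1 (i + 1) = 1 := by
    have : upT n (1 - 0) (n - (n - (i + 1))) = loT n 0 (n - (i + 1)) := upT_refl 0 (by omega)
    rw [sub_zero, show n - (n - ((i:ℕ) + 1)) = i + 1 by omega] at this
    rw [this]
    unfold loT
    rw [Finset.sum_range_succ']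
    have : ∑ k ∈ Finset.range (n - (i + 1)), bpm n 0 (k + 1) = 0 :=
      Finset.sum_eq_zero fun k _ => by unfold bpm; simp
    rw [this]; simp [bpm]
  have := intermediate_value_Icc (show (0:ℝ) ≤ 1 by norm_num)
    (f := fun x => upT n x (i + 1)) (upT_continuous n (i + 1)).continuousOn
  simp only [upT_at_zero, h1] at this
  obtain ⟨x, hx, h⟩ := this ⟨e0, e1⟩
  exact ⟨x, hx.1, hx.2, h⟩

lemma tail_plus {n : ℕ} (i : Fin n) {ε : ℝ} (e0 : 0 ≤ ε) (e1 : ε ≤ 1) :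
    (nullMeasure n).real {u | u ∈ cube n ∧ upT n (orderStat u i) (i + 1) < ε} ≤ ε := by
  obtain ⟨x, x0, x1, hx⟩ := exists_quant i e0 e1
  have := count_ge (n := n) x0 x1 (i + 1)
  rw [hx] at this
  refine (measureReal_mono ?_ (measure_ne_top _ _)).trans this
  rintro u ⟨hu, h⟩
  have : orderStat u i ≤ x := by
    by_contra hc
    have := upT_mono_p (n := n) (k := i + 1) x0 (not_le.1 hc).le (orderStat_mem hu i).2
    linarith
  have := (orderStat_le_iff u i x).1 this
  exact this

lemma tail_minus {n : ℕ} (i : Fin n) {ε : ℝ} (e0 : 0 ≤ ε) (e1 : ε ≤ 1) :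
    (nullMeasure n).real {u | u ∈ cube n ∧ loT n (orderStat u i) i < ε} ≤ ε := by
  obtain ⟨x, x0, x1, hx⟩ := exists_quant i (ε := 1 - ε) (by linarith) (by linarith)
  have := count_le (n := n) x0 x1 i
  have hl : loT n x i = ε := by
    have := upT_add_loT (n := n) x (k := i) i.2.le
    linarith
  rw [hl] at this
  refine (measureReal_mono ?_ (measure_ne_top _ _)).trans this
  rintro u ⟨hu, h⟩
  have : ¬ orderStat u i ≤ x := by
    intro hc
    have := loT_anti_p (n := n) (k := i) i.2.le (orderStat_mem hu i).1 hc x1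
    linarith
  have := (orderStat_le_iff u i x).not.1 this
  exact not_lt.1 this

lemma fin_count (n K : ℕ) :
    (Finset.univ.filter (fun i : Fin n => (i:ℕ) < K ∨ n ≤ i + K)).card ≤ 2 * K := by
  have : (Finset.univ.filter (fun i : Fin n => (i:ℕ) < K ∨ n ≤ i + K)).card ≤
      (Finset.range K ∪ Finset.Ico (n - K) n).card := by
    refine Finset.card_le_card_of_injOn (fun i => (i:ℕ)) ?_ (Fin.val_injective.injOn)
    intro i hi
    have := i.2
    simp at hi ⊢; omega
  refine this.trans ((Finset.card_union_le _ _).trans ?_)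
  simp; omega

lemma Mn_upper {n : ℕ} (hn : 0 < n) {ε s0 Δ : ℝ} (d0 : 0 ≤ Δ) (e0 : 0 ≤ ε) (e1 : ε ≤ 1)
    (m : ℕ) {K : ℕ} (hK : 0 < K) :
    (nullMeasure n).real {u | Mn u < ε} ≤ 1 - mA n (al n (Real.exp (2 * Δ) ^ n * ε) (tj s0 Δ) m)
      + n * tj s0 Δ 0 / K + n * (1 - tj s0 Δ m) / K + 4 * K * ε := by
  classical
  have T := tj_TT m (s0 := s0) d0
  obtain ⟨h1, h2⟩ := surv_eq (n := n) (ε := Real.exp (2 * Δ) ^ n * ε) T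
  rw [← h1, ← probReal_compl_eq_one_sub h2]
  set G := {u : Fin n → ℝ | ∀ i ≤ m, nc n (Real.exp (2 * Δ) ^ n * ε) (tj s0 Δ i) (stf u (tj s0 Δ i)).card}
  set I := Finset.univ.filter (fun i : Fin n => (i:ℕ) < K ∨ n ≤ i + K) with hI
  have sub : {u : Fin n → ℝ | Mn u < ε} ⊆ ((((cube n)ᶜ ∪ Gᶜ) ∪ {u | ¬ (stf u (tj s0 Δ 0)).card ≤ K})
      ∪ {u | ¬ n - (stf u (tj s0 Δ m)).card ≤ K}) ∪
      ⋃ i ∈ I, ({u | u ∈ cube n ∧ upT n (orderStat u i) (i + 1) < ε} ∪ {u | u ∈ cube n ∧ loT n (orderStat u i) i < ε}) := by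
    intro u hu
    by_cases hc : u ∈ cube n
    swap
    · left; left; left; left; exact hc
    by_cases c1 : (stf u (tj s0 Δ 0)).card ≤ K
    swap
    · left; left; right; exact c1
    by_cases c2 : n - (stf u (tj s0 Δ m)).card ≤ K
    swap
    · left; right; exact c2
    by_cases c3 : ∀ i : Fin n, (i:ℕ) < K ∨ n ≤ i + K → ε ≤ upT n (orderStat u i) (i + 1) ∧ ε ≤ loT n (orderStat u i) i
    · left; left; left; right
      obtain ⟨j, hj, hh⟩ := Mn_imp hn hc d0 m K hu c1 c2 c3
      exact fun hG => hh (hG j hj)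
    · right
      push Not at c3
      obtain ⟨i, hi, hh⟩ := c3
      refine Set.mem_biUnion (x := i) (by simpa [hI] using hi) ?_
      by_cases h' : ε ≤ upT n (orderStat u i) (i + 1)
      · right; exact ⟨hc, hh h'⟩
      · left; exact ⟨hc, not_le.1 h'⟩
  have p1 := (tt_pos (s0 + (0:ℕ) * Δ)).le
  have p2 := (tt_lt_one (s0 + (0:ℕ) * Δ)).le
  have p3 := (tt_pos (s0 + m * Δ)).le
  have p4 := (tt_lt_one (s0 + m * Δ)).le
  have b1 : (nullMeasure n).real {u | ¬ (stf u (tj s0 Δ 0)).card ≤ K} ≤ n * tj s0 Δ 0 / K := count_mk p1 p2 hK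
  have b2 : (nullMeasure n).real {u | ¬ n - (stf u (tj s0 Δ m)).card ≤ K} ≤ n * (1 - tj s0 Δ m) / K :=
    count_mk' p3 p4 hK
  have b3 : (nullMeasure n).real (⋃ i ∈ I, ({u | u ∈ cube n ∧ upT n (orderStat u i) (i + 1) < ε} ∪
      {u | u ∈ cube n ∧ loT n (orderStat u i) i < ε})) ≤ 4 * K * ε := by
    refine (measureReal_biUnion_finset_le _ _).trans ?_
    calc _ ≤ ∑ _ ∈ I, (2 * ε) := by
          refine Finset.sum_le_sum fun i _ => (measureReal_union_le _ _).trans ?_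
          linarith [tail_plus i e0 e1, tail_minus i e0 e1]
      _ = I.card * (2 * ε) := by simp
      _ ≤ (2 * K : ℕ) * (2 * ε) := by gcongr; exact fin_count n K
      _ = _ := by push_cast; ring
  have c := cube_compl n
  refine (measureReal_mono sub (measure_ne_top _ _)).trans ?_
  refine (measureReal_union_le _ _).trans ?_
  refine add_le_add ((measureReal_union_le _ _).trans ?_) b3
  refine add_le_add ((measureReal_union_le _ _).trans ?_) b2
  refine add_le_add ((measureReal_union_le _ _).trans ?_) b1
  rw [c, zero_add]

open scoped Topology

lemma Lw_le {w : ℝ} (h : 16 ≤ w) : Lw w ≤ 6 * w := by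
  unfold Lw
  have h0 : 0 < w := by linarith
  have s : √w ≤ w := by
    rw [Real.sqrt_le_left (by linarith)]; nlinarith
  have s0 : 0 < √w := Real.sqrt_pos.2 h0
  have a := Real.log_le_sub_one_of_pos (show 0 < 4 * √w by positivity)
  have b := Real.log_le_sub_one_of_pos h0
  rw [one_div, Real.log_inv]
  linarith

lemma pe_lim (k : ℕ) {b : ℝ} (hb : 0 < b) :
    Tendsto (fun w : ℝ => w ^ k * Real.exp (-b * w)) atTop (𝓝 0) := by
  have := tendsto_rpow_mul_exp_neg_mul_atTop_nhds_zero k b hb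
  simpa using this

lemma pe_ev (k : ℕ) {b c : ℝ} (hb : 0 < b) (hc : 0 < c) :
    ∀ᶠ w : ℝ in atTop, w ^ k * Real.exp (-b * w) ≤ c :=
  ((tendsto_order.1 (pe_lim k hb)).2 c hc).mono fun _ h => h.le

lemma WH_ev {η : ℝ} (e0 : 0 < η) (e1 : η ≤ 1 / 20) : ∀ᶠ w : ℝ in atTop, WH η w := by
  have q : 0 < η ^ 2 / 8 := by positivity
  filter_upwards [eventually_ge_atTop 16, eventually_ge_atTop (12 / η ^ 3),
    eventually_ge_atTop (256 / η), eventually_ge_atTop ((2 / η) ^ 2),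
    pe_ev 2 q (show 0 < η / (24 * Real.exp 2) by positivity),
    pe_ev 2 (show 0 < η / 4 by positivity) (show 0 < 1 / (8 * Real.exp 2) by positivity),
    pe_ev 0 (show (0:ℝ) < 1 by norm_num) (show 0 < η / Real.exp 1 by positivity),
    pe_ev 2 (show (0:ℝ) < 1 / 4 by norm_num) (show 0 < η / 18 by positivity)]
    with w h16 h1 h3 h5 h2 h4 h6 h7
  have w0 : 0 < w := by linarith
  have hL := Lw_le h16
  have s1 : √w * √w = w := Real.mul_self_sqrt w0.le
  have s4 : 4 ≤ √w := by
    rw [Real.le_sqrt (by norm_num) w0.le]; linarith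
  refine ⟨e0, e1, h16, ?_, ?_, ?_, ?_, ?_, ?_, ?_⟩
  · rw [div_le_iff₀ (by positivity)] at h1; linarith
  · rw [le_div_iff₀ (by positivity)] at h2
    calc 4 * w * Lw w * Real.exp (2 - η ^ 2 * w / 8)
        ≤ 4 * w * (6 * w) * Real.exp (2 - η ^ 2 * w / 8) := by gcongr
      _ = w ^ 2 * Real.exp (-(η ^ 2 / 8) * w) * (24 * Real.exp 2) := by
        rw [show 2 - η ^ 2 * w / 8 = 2 + -(η ^ 2 / 8) * w by ring, Real.exp_add]; ring
      _ ≤ η := h2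
  · rw [div_le_iff₀ e0] at h3
    have : √w ^ 3 ≤ w ^ 2 := by
      nth_rewrite 2 [← s1]
      have : √w ^ 3 * 1 ≤ √w ^ 3 * √w := by gcongr; linarith
      linarith [this, show (√w * √w) ^ 2 = √w ^ 3 * √w by ring]
    calc 256 * √w ^ 3 ≤ (w * η) * w ^ 2 := by gcongr
      _ = _ := by ring
  · rw [le_div_iff₀ (by positivity)] at h4
    have e : Real.exp (-(η / 4) * w) * Real.exp (η * w / 4) = 1 := by
      rw [← Real.exp_add, Real.exp_eq_one_iff]; ring
    calc w * Lw w * Real.exp 2 ≤ w * (6 * w) * Real.exp 2 := by gcongr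
      _ = 6 / 8 * (w ^ 2 * Real.exp (-(η / 4) * w) * (8 * Real.exp 2)) * Real.exp (η * w / 4) := by
        linear_combination (-6 * w ^ 2 * Real.exp 2) * e
      _ ≤ 6 / 8 * 1 * Real.exp (η * w / 4) := by gcongr
      _ = _ := by ring
  · have : 2 / η ≤ √w := Real.le_sqrt_of_sq_le h5
    rw [div_le_iff₀ e0] at this
    calc 2 * √w ≤ √w * η * √w := by gcongr
      _ = η * w := by linear_combination η * s1
  · rw [le_div_iff₀ (by positivity)] at h6
    calc Real.exp (1 - w) = w ^ 0 * Real.exp (-1 * w) * Real.exp 1 := by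
          rw [pow_zero, one_mul, ← Real.exp_add]; congr 1; ring
      _ ≤ η := h6
  · calc 3 * w * Lw w * Real.exp (-w / 4) ≤ 3 * w * (6 * w) * Real.exp (-w / 4) := by gcongr
      _ = 18 * (w ^ 2 * Real.exp (-(1 / 4) * w)) := by
        rw [show -w / 4 = -(1 / 4) * w by ring]; ring
      _ ≤ 18 * (η / 18) := by gcongr
      _ = η := by ring

/-- `log n`, `log log n`, the time range, the mesh. -/
noncomputable def qL (n : ℕ) : ℝ := Real.log n
noncomputable def ql (n : ℕ) : ℝ := Real.log (Real.log n)
noncomputable def qT (n : ℕ) : ℝ := qL n - ql n / 4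
noncomputable def qs (n : ℕ) : ℝ := -(qT n) / 2
noncomputable def qD (n : ℕ) : ℝ := qT n / (n ^ 3 : ℕ)

lemma qL_top : Tendsto qL atTop atTop := Real.tendsto_log_atTop.comp tendsto_natCast_atTop_atTop
lemma ql_top : Tendsto ql atTop atTop := Real.tendsto_log_atTop.comp qL_top

lemma q_ev : ∀ᶠ n : ℕ in atTop, 1 ≤ n ∧ 1 ≤ qL n ∧ 1 ≤ ql n ∧ 0 ≤ qT n ∧ qT n ≤ qL n := by
  filter_upwards [eventually_ge_atTop 1, qL_top.eventually_ge_atTop 1, ql_top.eventually_ge_atTop 1]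
    with n h1 h2 h3
  have : ql n ≤ qL n := Real.log_le_self (by unfold qL at h2; linarith)
  refine ⟨h1, h2, h3, ?_, ?_⟩ <;> unfold qT <;> linarith

lemma exp_ql {n : ℕ} (h : 1 ≤ qL n) : Real.exp (ql n) = qL n :=
  Real.exp_log (by unfold qL at h; linarith)
lemma exp_qL {n : ℕ} (h : 1 ≤ n) : Real.exp (qL n) = n :=
  Real.exp_log (by exact_mod_cast h)

lemma qTL : Tendsto (fun n => qT n / qL n) atTop (𝓝 1) := by
  have h : Tendsto (fun n => ql n / qL n) atTop (𝓝 0) := by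
    have := (Real.isLittleO_log_id_atTop.tendsto_div_nhds_zero).comp qL_top
    exact this
  have h2 : Tendsto (fun n => 1 - ql n / qL n / 4) atTop (𝓝 (1 - 0 / 4)) :=
    tendsto_const_nhds.sub (h.div_const 4)
  rw [zero_div, sub_zero] at h2
  refine h2.congr' ?_
  filter_upwards [q_ev] with n h
  have : qL n ≠ 0 := by linarith [h.2.1]
  unfold qT; field_simp

lemma qs_end {n : ℕ} (h : 1 ≤ n) : qs n + (n ^ 3 : ℕ) * qD n = qT n / 2 := by
  unfold qs qD
  have : ((n ^ 3 : ℕ) : ℝ) ≠ 0 := by positivity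
  field_simp; ring

lemma TH_ev : ∀ᶠ n : ℕ in atTop, ∀ j ≤ n ^ 3, TH n (tj (qs n) (qD n) j) (2 * ql n) := by
  filter_upwards [q_ev, ql_top.eventually (pe_ev 3 (show (0:ℝ) < 1 / 8 by norm_num)
    (show (0:ℝ) < 1 / 16 by norm_num))] with n ⟨h1, h2, h3, h4, h5⟩ h j hj
  unfold tj
  refine ⟨tt_pos _, tt_lt_one _, ?_⟩
  rw [sg_tt]
  have d0 : 0 ≤ qD n := by unfold qD; positivity
  set s := qs n + j * qD n
  have a : -(qT n / 2) ≤ s := by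
    have : 0 ≤ j * qD n := by positivity
    simp only [s, qs]; linarith
  have b : s ≤ qT n / 2 := by
    rw [← qs_end h1]
    simp only [s]
    have : (j:ℝ) ≤ (n ^ 3 : ℕ) := by exact_mod_cast hj
    gcongr
  have e1 : Real.exp s ≤ Real.exp (qT n / 2) := Real.exp_le_exp.2 b
  have e2 : Real.exp (-s) ≤ Real.exp (qT n / 2) := Real.exp_le_exp.2 (by linarith)
  rw [le_div_iff₀ (by positivity)]
  have sn : √(n:ℝ) = Real.exp (qL n / 2) := by
    rw [← exp_qL h1, Real.exp_half]
  have hh : ql n ^ 3 ≤ 1 / 16 * Real.exp (ql n / 8) := by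
    have : Real.exp (-(1 / 8) * ql n) * Real.exp (ql n / 8) = 1 := by
      rw [← Real.exp_add, Real.exp_eq_one_iff]; ring
    calc ql n ^ 3 = ql n ^ 3 * Real.exp (-(1 / 8) * ql n) * Real.exp (ql n / 8) := by
          rw [mul_assoc, this, mul_one]
      _ ≤ _ := by gcongr
  have l0 : 0 ≤ ql n := by linarith
  calc (2 * ql n) ^ 3 * (Real.exp s + Real.exp (-s))
      ≤ (2 * ql n) ^ 3 * (Real.exp (qT n / 2) + Real.exp (qT n / 2)) := by gcongr
    _ = 16 * ql n ^ 3 * Real.exp (qT n / 2) := by ring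
    _ ≤ 16 * (1 / 16 * Real.exp (ql n / 8)) * Real.exp (qT n / 2) := by gcongr
    _ = Real.exp (ql n / 8 + qT n / 2) := by rw [Real.exp_add]; ring
    _ = √(n:ℝ) := by rw [sn]; congr 1; unfold qT; ring

lemma nD_lim : Tendsto (fun n : ℕ => (n:ℝ) * qD n) atTop (𝓝 0) := by
  have h : Tendsto (fun n : ℕ => qL n / (n:ℝ)) atTop (𝓝 0) :=
    (Real.isLittleO_log_id_atTop.tendsto_div_nhds_zero).comp tendsto_natCast_atTop_atTop
  refine squeeze_zero' ?_ ?_ h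
  · filter_upwards [q_ev] with n ⟨h1, h2, h3, h4, h5⟩
    unfold qD; positivity
  · filter_upwards [q_ev] with n ⟨h1, h2, h3, h4, h5⟩
    have hn : (1:ℝ) ≤ n := by exact_mod_cast h1
    have n0 : (0:ℝ) < n := by linarith
    unfold qD
    have : (n:ℝ) * (qT n / (n ^ 3 : ℕ)) = qT n / n ^ 2 := by push_cast; field_simp
    rw [this]
    gcongr
    nlinarith

lemma mD_lim : Tendsto (fun n : ℕ => ((n ^ 3 : ℕ):ℝ) * (48 * (n * qD n) ^ 2)) atTop (𝓝 0) := by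
  have h : Tendsto (fun n : ℕ => 48 * (qL n ^ 2 / (n:ℝ))) atTop (𝓝 (48 * 0)) := by
    refine Tendsto.const_mul _ ?_
    have := (Real.isLittleO_pow_log_id_atTop (n := 2)).tendsto_div_nhds_zero.comp
      tendsto_natCast_atTop_atTop
    exact this
  rw [mul_zero] at h
  refine squeeze_zero' ?_ ?_ h
  · exact Eventually.of_forall fun n => by positivity
  · filter_upwards [q_ev] with n ⟨h1, h2, h3, h4, h5⟩
    have n0 : (0:ℝ) < n := by exact_mod_cast h1
    unfold qD
    have : ((n ^ 3 : ℕ):ℝ) * (48 * (n * (qT n / (n ^ 3 : ℕ))) ^ 2) = 48 * (qT n ^ 2 / n) := by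
      push_cast; field_simp
    rw [this]
    gcongr

lemma EH_ev {x η : ℝ} (hx : 0 < x) (h0 : 0 < η) {e : ℕ → ℝ}
    (he : Tendsto (fun n => e n * (2 * qL n * ql n)) atTop (𝓝 x)) :
    ∀ᶠ n in atTop, EH η (2 * ql n) (e n) := by
  filter_upwards [q_ev, ql_top.eventually (pe_ev 1 h0 (show 0 < x / 4 by positivity)),
    (tendsto_order.1 he).1 (x / 2) (by linarith), (tendsto_order.1 he).2 (2 * x) (by linarith),
    ql_top.eventually_ge_atTop x] with n ⟨h1, h2, h3, h4, h5⟩ ha hb hc hd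
  have l0 : 0 < ql n := by linarith
  have L0 : 0 < qL n := by linarith
  have p : 0 < 2 * qL n * ql n := by positivity
  constructor
  · refine le_of_mul_le_mul_right (le_trans ?_ hb.le) p
    have : Real.exp (-(1 + η) * (2 * ql n) / 2) * qL n = Real.exp (-η * ql n) := by
      rw [← exp_ql h2, ← Real.exp_add]; congr 1; ring
    calc _ = 2 * ql n * (Real.exp (-(1 + η) * (2 * ql n) / 2) * qL n) := by ring
      _ = 2 * (ql n ^ 1 * Real.exp (-η * ql n)) := by rw [this]; ring
      _ ≤ 2 * (x / 4) := by gcongr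
      _ = _ := by ring
  · refine le_of_mul_le_mul_right (hc.le.trans ?_) p
    have : Real.exp (-(1 - η / 2) * (2 * ql n) / 2) * qL n = Real.exp (η / 2 * ql n) := by
      rw [← exp_ql h2, ← Real.exp_add]; congr 1; ring
    have o : 1 ≤ Real.exp (η / 2 * ql n) := Real.one_le_exp (by positivity)
    calc 2 * x ≤ 2 * ql n * 1 := by linarith
      _ ≤ 2 * ql n * Real.exp (η / 2 * ql n) := by gcongr
      _ = 2 * ql n * (Real.exp (-(1 - η / 2) * (2 * ql n) / 2) * qL n) := by rw [this]
      _ = _ := by ring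

lemma e_lim {x : ℝ} {e : ℕ → ℝ}
    (he : Tendsto (fun n => e n * (2 * qL n * ql n)) atTop (𝓝 x)) :
    Tendsto (fun n => 2 * ql n * e n * qL n) atTop (𝓝 x) ∧
    Tendsto (fun n => 2 * ql n * e n) atTop (𝓝 0) ∧
    Tendsto e atTop (𝓝 0) ∧
    Tendsto (fun n => 2 * (2 * ql n * e n) * Lw (2 * ql n)) atTop (𝓝 0) ∧
    Tendsto (fun n => 2 * ql n * e n * qT n) atTop (𝓝 x) := by
  have a : Tendsto (fun n => 2 * ql n * e n * qL n) atTop (𝓝 x) := he.congr fun n => by ring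
  have b : Tendsto (fun n => 2 * ql n * e n) atTop (𝓝 0) := by
    have := a.mul qL_top.inv_tendsto_atTop
    rw [mul_zero] at this
    refine this.congr' ?_
    filter_upwards [q_ev] with n h
    have : qL n ≠ 0 := by linarith [h.2.1]
    simp only [Pi.inv_apply]; field_simp
  have c : Tendsto e atTop (𝓝 0) := by
    have := b.mul ((ql_top.inv_tendsto_atTop).div_const 2)
    rw [zero_mul] at this
    refine this.congr' ?_
    filter_upwards [q_ev] with n h
    have : ql n ≠ 0 := by linarith [h.2.2.1]
    simp only [Pi.inv_apply]; field_simp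
  refine ⟨a, b, c, ?_, ?_⟩
  · -- bounded times `Lw w / L`
    have k : Tendsto (fun n => Lw (2 * ql n) / qL n) atTop (𝓝 0) := by
      have u : Tendsto (fun n => 12 * (ql n ^ 1 * Real.exp (-1 * ql n))) atTop (𝓝 (12 * 0)) :=
        ((pe_lim 1 one_pos).comp ql_top).const_mul 12
      rw [mul_zero] at u
      refine squeeze_zero' ?_ ?_ u
      · filter_upwards [q_ev, ql_top.eventually_ge_atTop 8] with n ⟨h1, h2, h3, h4, h5⟩ h8
        have : 0 ≤ Lw (2 * ql n) := by
          unfold Lw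
          rw [one_div, Real.log_inv]
          have : 1 ≤ √(2 * ql n) := Real.one_le_sqrt.2 (by linarith)
          have := Real.log_nonneg (show 1 ≤ 4 * √(2 * ql n) by linarith)
          have := Real.log_nonneg (show 1 ≤ 2 * ql n by linarith)
          linarith
        positivity
      · filter_upwards [q_ev, ql_top.eventually_ge_atTop 8] with n ⟨h1, h2, h3, h4, h5⟩ h8
        have := Lw_le (w := 2 * ql n) (by linarith)
        have e1 : Real.exp (-1 * ql n) = (qL n)⁻¹ := by
          rw [neg_one_mul, Real.exp_neg, exp_ql h2]
        rw [e1, div_eq_mul_inv]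
        calc Lw (2 * ql n) * (qL n)⁻¹ ≤ 6 * (2 * ql n) * (qL n)⁻¹ := by gcongr
          _ = _ := by ring
    have := (a.const_mul 2).mul k
    rw [mul_zero] at this
    refine this.congr' ?_
    filter_upwards [q_ev] with n h
    have : qL n ≠ 0 := by linarith [h.2.1]
    field_simp
  · have := a.mul qTL
    rw [mul_one] at this
    refine this.congr' ?_
    filter_upwards [q_ev] with n h
    have : qL n ≠ 0 := by linarith [h.2.1]
    field_simp

lemma pow_low {y : ℝ} (h : y < 1) (m : ℕ) : Real.exp (-(m * y / (1 - y))) ≤ (1 - y) ^ m := by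
  have p : 0 < 1 - y := by linarith
  have := Real.add_one_le_exp (y / (1 - y))
  have e : y / (1 - y) + 1 = (1 - y)⁻¹ := by field_simp; ring
  rw [e] at this
  have k : Real.exp (-(y / (1 - y))) ≤ 1 - y := by
    rw [Real.exp_neg]
    exact inv_le_of_inv_le₀ p this
  calc Real.exp (-(m * y / (1 - y))) = Real.exp (-(y / (1 - y))) ^ m := by
        rw [← Real.exp_nat_mul]; congr 1; ring
    _ ≤ _ := by gcongr

lemma pow_hi {y : ℝ} (h : y ≤ 1) (m : ℕ) : (1 - y) ^ m ≤ Real.exp (-(m * y)) := by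
  have := Real.add_one_le_exp (-y)
  calc (1 - y) ^ m ≤ Real.exp (-y) ^ m := by
        refine pow_le_pow_left₀ (by linarith) (by linarith) m
    _ = _ := by rw [← Real.exp_nat_mul]; congr 1; ring

lemma c_lim {x : ℝ} {e : ℕ → ℝ} (a b : ℝ)
    (he : Tendsto (fun n => e n * (2 * qL n * ql n)) atTop (𝓝 x)) :
    Tendsto (fun n => ((n ^ 3 : ℕ):ℝ) * (2 * (2 * ql n * e n) * qD n * a / b)) atTop
      (𝓝 (2 * x * a / b)) ∧
    Tendsto (fun n => 2 * (2 * ql n * e n) * qD n * a / b) atTop (𝓝 0) := by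
  have h : Tendsto (fun n => ((n ^ 3 : ℕ):ℝ) * (2 * (2 * ql n * e n) * qD n * a / b)) atTop
      (𝓝 (2 * x * a / b)) := by
    have := (((e_lim he).2.2.2.2.const_mul 2).mul_const a).div_const b
    refine this.congr' ?_
    filter_upwards [eventually_ge_atTop 1] with n h1
    unfold qD
    have : ((n ^ 3 : ℕ) : ℝ) ≠ 0 := by positivity
    field_simp
  refine ⟨h, ?_⟩
  have t : Tendsto (fun n : ℕ => (((n ^ 3 : ℕ):ℝ))⁻¹) atTop (𝓝 0) :=
    (tendsto_natCast_atTop_atTop.comp (tendsto_pow_atTop (by norm_num))).inv_tendsto_atTop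
  have := h.mul t
  rw [mul_zero] at this
  refine this.congr' ?_
  filter_upwards [eventually_ge_atTop 1] with n h1
  have : ((n ^ 3 : ℕ) : ℝ) ≠ 0 := by positivity
  field_simp

lemma mA_low {x η : ℝ} (hx : 0 < x) (h0 : 0 < η) (h1 : η ≤ 1 / 20) {e : ℕ → ℝ}
    (he : Tendsto (fun n => e n * (2 * qL n * ql n)) atTop (𝓝 x)) {a : ℝ}
    (ha : a < Real.exp (-(2 * x * (1 + 6 * η) / (1 - 9 * η))) * (1 - 9 * η)) :
    ∀ᶠ n in atTop, a < mA n (al n (e n) (tj (qs n) (qD n)) (n ^ 3)) := by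
  obtain ⟨l1, l2, l3, l4, l5⟩ := e_lim he
  obtain ⟨c1, c2⟩ := c_lim (1 + 6 * η) (1 - 9 * η) he
  have lim : Tendsto (fun n => Real.exp (-(((n ^ 3 : ℕ):ℝ) *
      (2 * (2 * ql n * e n) * qD n * (1 + 6 * η) / (1 - 9 * η)) /
      (1 - 2 * (2 * ql n * e n) * qD n * (1 + 6 * η) / (1 - 9 * η)))) *
      ((1 - 9 * η) * (1 - 2 * e n)) - 2 * (2 * ql n * e n) * Lw (2 * ql n)) atTop
      (𝓝 (Real.exp (-(2 * x * (1 + 6 * η) / (1 - 9 * η) / (1 - 0))) *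
      ((1 - 9 * η) * (1 - 2 * 0)) - 0)) := by
    refine Tendsto.sub (Tendsto.mul ?_ ?_) l4
    · refine (Real.continuous_exp.tendsto _).comp (Tendsto.neg (c1.div (c2.const_sub 1) (by norm_num)))
    · exact ((l3.const_mul 2).const_sub 1).const_mul _
  rw [mul_zero, sub_zero, sub_zero, mul_one, div_one] at lim
  filter_upwards [q_ev, TH_ev, (ql_top.const_mul_atTop two_pos).eventually (WH_ev h0 h1),
    EH_ev hx h0 he, (tendsto_order.1 nD_lim).2 (η / 4) (by positivity),
    (tendsto_order.1 c2).2 1 one_pos, (tendsto_order.1 lim).1 a ha,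
    (tendsto_order.1 l3).2 (1 / 2) (by norm_num)] with n ⟨g1, g2, g3, g4, g5⟩ T W E d hc hl hs
  have d0 : 0 ≤ qD n := by unfold qD; positivity
  have key := surv_lower T W E d0 (by linarith) hc.le
  refine hl.trans_le (le_trans ?_ key)
  have := pow_low hc (n ^ 3)
  have q : 0 ≤ (1 - 9 * η) * (1 - 2 * e n) := mul_nonneg (by linarith) (by linarith)
  gcongr

lemma mA_high {x η : ℝ} (hx : 0 < x) (h0 : 0 < η) (h1 : η ≤ 1 / 20) {e : ℕ → ℝ}
    (he : Tendsto (fun n => e n * (2 * qL n * ql n)) atTop (𝓝 x)) {a : ℝ}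
    (ha : Real.exp (-(2 * x * (1 - 7 * η) / (1 + 30 * η))) * (1 + 30 * η) < a) :
    ∀ᶠ n in atTop, mA n (al n (e n) (tj (qs n) (qD n)) (n ^ 3)) < a := by
  obtain ⟨l1, l2, l3, l4, l5⟩ := e_lim he
  obtain ⟨c1, c2⟩ := c_lim (1 - 7 * η) (1 + 30 * η) he
  have lim : Tendsto (fun n => Real.exp (-(((n ^ 3 : ℕ):ℝ) *
      (2 * (2 * ql n * e n) * qD n * (1 - 7 * η) / (1 + 30 * η)))) * (1 + 30 * η)
      + ((n ^ 3 : ℕ):ℝ) * (48 * (n * qD n) ^ 2) + 2 * (2 * ql n * e n) * Lw (2 * ql n)) atTop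
      (𝓝 (Real.exp (-(2 * x * (1 - 7 * η) / (1 + 30 * η))) * (1 + 30 * η) + 0 + 0)) := by
    refine Tendsto.add (Tendsto.add (Tendsto.mul_const _ ?_) mD_lim) l4
    exact (Real.continuous_exp.tendsto _).comp (Tendsto.neg c1)
  rw [add_zero, add_zero] at lim
  filter_upwards [q_ev, TH_ev, (ql_top.const_mul_atTop two_pos).eventually (WH_ev h0 h1),
    EH_ev hx h0 he, (tendsto_order.1 nD_lim).2 (η / 4) (by positivity),
    (tendsto_order.1 c2).2 1 one_pos, (tendsto_order.1 lim).2 a ha,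
    (tendsto_order.1 l2).2 1 one_pos] with n ⟨g1, g2, g3, g4, g5⟩ T W E d hc hl hs
  have d0 : 0 ≤ qD n := by unfold qD; positivity
  have key := surv_upper T W E hs.le d0 (by linarith) hc.le
  refine lt_of_le_of_lt (key.trans ?_) hl
  have := pow_hi hc.le (n ^ 3)
  have q : 0 ≤ 1 + 30 * η := by linarith
  gcongr

lemma mA_lim {x : ℝ} (hx : 0 < x) {e : ℕ → ℝ}
    (he : Tendsto (fun n => e n * (2 * qL n * ql n)) atTop (𝓝 x)) :
    Tendsto (fun n => mA n (al n (e n) (tj (qs n) (qD n)) (n ^ 3))) atTop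
      (𝓝 (Real.exp (-2 * x))) := by
  have ev : ∀ᶠ η : ℝ in 𝓝[>] 0, 0 < η ∧ η ≤ 1 / 20 := by
    have := Ioc_mem_nhdsGT (show (0:ℝ) < 1 / 20 by norm_num)
    filter_upwards [this] with η h using ⟨h.1, h.2⟩
  refine tendsto_order.2 ⟨fun a ha => ?_, fun a ha => ?_⟩
  · have c : ContinuousAt (fun η : ℝ =>
        Real.exp (-(2 * x * (1 + 6 * η) / (1 - 9 * η))) * (1 - 9 * η)) 0 := by
      have : (1:ℝ) - 9 * 0 ≠ 0 := by norm_num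
      fun_prop (disch := assumption)
    have c' := (tendsto_order.1 c.tendsto).1 a (by simpa [neg_mul] using ha)
    obtain ⟨η, ⟨h0, h1⟩, h2⟩ := (ev.and (c'.filter_mono nhdsWithin_le_nhds)).exists
    exact mA_low hx h0 h1 he h2
  · have c : ContinuousAt (fun η : ℝ =>
        Real.exp (-(2 * x * (1 - 7 * η) / (1 + 30 * η))) * (1 + 30 * η)) 0 := by
      have : (1:ℝ) + 30 * 0 ≠ 0 := by norm_num
      fun_prop (disch := assumption)
    have c' := (tendsto_order.1 c.tendsto).2 a (by simpa [neg_mul] using ha)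
    obtain ⟨η, ⟨h0, h1⟩, h2⟩ := (ev.and (c'.filter_mono nhdsWithin_le_nhds)).exists
    exact mA_high hx h0 h1 he h2

lemma nt_end {n : ℕ} (h : 1 ≤ n) :
    n * tj (qs n) (qD n) 0 ≤ Real.exp (ql n / 4) ∧
    n * (1 - tj (qs n) (qD n) (n ^ 3)) ≤ Real.exp (ql n / 4) := by
  have e : (1 - tj (qs n) (qD n) (n ^ 3)) = tj (qs n) (qD n) 0 := by
    unfold tj
    rw [qs_end h, ← tt_neg]; congr 1; unfold qs; push_cast; ring
  rw [e, and_self]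
  unfold tj tt
  have hn : (n:ℝ) = Real.exp (qL n) := (exp_qL h).symm
  rw [hn, mul_one_div, div_le_iff₀ (by positivity)]
  have : Real.exp (qL n) = Real.exp (ql n / 4) * Real.exp (-2 * (qs n + ((0:ℕ):ℝ) * qD n)) := by
    rw [← Real.exp_add]; congr 1; unfold qs qT; push_cast; ring
  rw [this]
  gcongr
  linarith

theorem berk_jones_Mn_null_limit (x : ℝ) (hx : 0 < x) :
    Filter.Tendsto (fun n : ℕ =>
        ((nullMeasure n) {u | Mn u < x / (2 * Real.log n * Real.log (Real.log n))}).toReal)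
      Filter.atTop (nhds (1 - Real.exp (-2 * x))) := by
  set e : ℕ → ℝ := fun n => x / (2 * qL n * ql n) with hedef
  have he : Tendsto (fun n => e n * (2 * qL n * ql n)) atTop (𝓝 x) := by
    refine tendsto_const_nhds.congr' ?_
    filter_upwards [q_ev] with n ⟨h1, h2, h3, h4, h5⟩
    have : 2 * qL n * ql n ≠ 0 := by positivity
    simp only [e]; field_simp
  have he2 : Tendsto (fun n => (Real.exp (2 * qD n) ^ n * e n) * (2 * qL n * ql n)) atTop (𝓝 x) := by
    have c : Tendsto (fun n : ℕ => Real.exp (2 * qD n) ^ n) atTop (𝓝 (Real.exp (2 * 0))) := by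
      have := (Real.continuous_exp.tendsto _).comp (nD_lim.const_mul 2)
      refine this.congr fun n => ?_
      simp only [Function.comp_apply]
      rw [← Real.exp_nat_mul]; congr 1; ring
    rw [mul_zero, Real.exp_zero] at c
    have := c.mul he
    rw [one_mul] at this
    exact this.congr fun n => by ring
  obtain ⟨l1, l2, l3, l4, l5⟩ := e_lim he
  have A1 := (mA_lim hx he).const_sub 1
  have A2 := (mA_lim hx he2).const_sub 1
  -- the count threshold
  set K : ℕ → ℕ := fun n => ⌈Real.exp (ql n / 2)⌉₊ with hK
  have r1 : Tendsto (fun n => Real.exp (-(1 / 4) * ql n)) atTop (𝓝 0) := by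
    have := (pe_lim 0 (show (0:ℝ) < 1 / 4 by norm_num)).comp ql_top
    simpa [Function.comp_def] using this
  have r2 : Tendsto (fun n => 8 * x * Real.exp (-(1 / 2) * ql n)) atTop (𝓝 0) := by
    have := ((pe_lim 0 (show (0:ℝ) < 1 / 2 by norm_num)).comp ql_top).const_mul (8 * x)
    simpa [Function.comp_def] using this
  have U := ((A2.add r1).add r1).add r2
  rw [add_zero, add_zero, add_zero] at U
  refine tendsto_of_tendsto_of_tendsto_of_le_of_le' A1 U ?_ ?_
  · filter_upwards [q_ev, (tendsto_order.1 l3).2 1 one_pos] with n ⟨h1, h2, h3, h4, h5⟩ e1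
    have d0 : 0 ≤ qD n := by unfold qD; positivity
    exact Mn_lower h1 e1.le (tj_TT _ d0)
  · filter_upwards [q_ev, (tendsto_order.1 l3).2 1 one_pos] with n ⟨h1, h2, h3, h4, h5⟩ e1
    have d0 : 0 ≤ qD n := by unfold qD; positivity
    have e0 : 0 ≤ e n := by simp only [e]; positivity
    have Kp : 0 < K n := Nat.ceil_pos.2 (Real.exp_pos _)
    refine (Mn_upper (s0 := qs n) h1 d0 e0 e1.le (n ^ 3) Kp).trans ?_
    obtain ⟨t1, t2⟩ := nt_end h1
    have k1 : Real.exp (ql n / 2) ≤ K n := Nat.le_ceil _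
    have k2 : (K n : ℝ) ≤ 2 * Real.exp (ql n / 2) := by
      have a := (Nat.ceil_lt_add_one (Real.exp_pos (ql n / 2)).le).le
      have b : 1 ≤ Real.exp (ql n / 2) := Real.one_le_exp (by linarith)
      simp only [K]; linarith
    have q : Real.exp (ql n / 4) / K n ≤ Real.exp (-(1 / 4) * ql n) := by
      rw [div_le_iff₀ (by exact_mod_cast Kp)]
      calc Real.exp (ql n / 4) = Real.exp (-(1 / 4) * ql n) * Real.exp (ql n / 2) := by
            rw [← Real.exp_add]; congr 1; ring
        _ ≤ _ := by gcongr
    have q1 : n * tj (qs n) (qD n) 0 / K n ≤ Real.exp (-(1 / 4) * ql n) :=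
      le_trans (by gcongr) q
    have q2 : n * (1 - tj (qs n) (qD n) (n ^ 3)) / K n ≤ Real.exp (-(1 / 4) * ql n) :=
      le_trans (by gcongr) q
    have q3 : 4 * K n * e n ≤ 8 * x * Real.exp (-(1 / 2) * ql n) := by
      have ee : e n ≤ x * Real.exp (- ql n) := by
        rw [Real.exp_neg, exp_ql h2, ← div_eq_mul_inv]
        simp only [e]
        gcongr
        nlinarith
      calc 4 * K n * e n ≤ 4 * (2 * Real.exp (ql n / 2)) * (x * Real.exp (- ql n)) := by gcongr
        _ = 8 * x * (Real.exp (ql n / 2) * Real.exp (- ql n)) := by ring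
        _ = _ := by rw [← Real.exp_add]; congr 2; ring
    linarith
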